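/- arXiv:1502.04429 — 3 statements merged into one kernel-verified Lean document; each statement's English description precedes it below -/
import Mathlib

section
/- Let c be a positive integer and let S and T be ordered trees. There exists an ordered tree U such that for every coloring with c colors of the set of all rigid surjections from U to S there is a rigid surjection g₀ : U → T such that the set { f ∘ g₀ : f is a rigid surjection from T to S } is monochromatic. -/
/-- `w` is an immediate successor of `v` with respect to the order `le`. -/
def TreeImmSucc {α : Type} (le : α → α → Prop) (v w : α) : Prop :=
  le v w ∧ v ≠ w ∧ ∀ u, le v u → le u w → u = v ∨ u = w

/-- An *ordered tree*: a finite nonempty partial order `(α, le)` with a least element (the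
root) in which the set of predecessors of each element is linearly ordered, together with a
linear order `sOrd v` on the set of immediate successors of each vertex `v`. -/
structure OTree where
  α : Type
  fin : Finite α
  le : α → α → Prop
  le_refl : ∀ v, le v v
  le_antisymm : ∀ v w, le v w → le w v → v = w
  le_trans : ∀ u v w, le u v → le v w → le u w
  root : α
  root_le : ∀ v, le root v
  pred_linear : ∀ v a b, le a v → le b v → le a b ∨ le b a
  sOrd : α → α → α → Prop
  sOrd_dom : ∀ v a b, sOrd v a b → TreeImmSucc le v a ∧ TreeImmSucc le v b
  sOrd_refl : ∀ v a, TreeImmSucc le v a → sOrd v a a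
  sOrd_antisymm : ∀ v a b, sOrd v a b → sOrd v b a → a = b
  sOrd_trans : ∀ v a b c, sOrd v a b → sOrd v b c → sOrd v a c
  sOrd_total : ∀ v a b, TreeImmSucc le v a → TreeImmSucc le v b → sOrd v a b ∨ sOrd v b a

namespace OTree

/-- `m` is the meet (largest common predecessor) of `v` and `w`. -/
def IsMeet (T : OTree) (v w m : T.α) : Prop :=
  T.le m v ∧ T.le m w ∧ ∀ u, T.le u v → T.le u w → T.le u m

/-- The lexicographic linear order on an ordered tree: `v ≤ w` iff `v` is a predecessor of
`w`, or neither is a predecessor of the other and the predecessor of `v` among the immediate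
successors of `v ∧ w` precedes that of `w` in the given order on immediate successors. -/
def lexLE (T : OTree) (v w : T.α) : Prop :=
  T.le v w ∨ (¬ T.le v w ∧ ¬ T.le w v ∧
    ∃ m a b, T.IsMeet v w m ∧ TreeImmSucc T.le m a ∧ T.le a v ∧
      TreeImmSucc T.le m b ∧ T.le b w ∧ T.sOrd m a b)

/-- A *morphism* of ordered trees: preserves meets, is monotone for the lexicographic orders,
and maps root to root. -/
def IsMorphism (S T : OTree) (e : S.α → T.α) : Prop :=
  (∀ v w m, S.IsMeet v w m → T.IsMeet (e v) (e w) (e m)) ∧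
  (∀ v w, S.lexLE v w → T.lexLE (e v) (e w)) ∧
  e S.root = T.root

/-- `f : T → S` is a *rigid surjection* if there is a morphism `e : S → T` with
`e (f w) ⊑ w` for all `w ∈ T` and `f (e v) = v` for all `v ∈ S`. -/
def IsRigidSurjection (T S : OTree) (f : T.α → S.α) : Prop :=
  ∃ e : S.α → T.α, IsMorphism S T e ∧ (∀ w : T.α, T.le (e (f w)) w) ∧ (∀ v : S.α, f (e v) = v)

end OTree

namespace DRT

/-- Ordered forests, in first-child / next-sibling encoding. -/
inductive F : Type
  | nil : F
  | cons (c r : F) : F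

/-- Vertices of a forest. -/
inductive V : F → Type
  | root {c r : F} : V (F.cons c r)
  | dn {c r : F} (v : V c) : V (F.cons c r)
  | rt {c r : F} (v : V r) : V (F.cons c r)

open F V

instance : IsEmpty (V F.nil) := ⟨fun v => nomatch v⟩

instance finV (X : F) : Finite (V X) := by
  induction X with
  | nil => infer_instance
  | cons c r h1 h2 =>
    let f : Option (V c) ⊕ V r → V (F.cons c r) := fun x =>
      match x with
      | .inl none => root
      | .inl (some v) => dn v
      | .inr v => rt v
    refine Finite.of_surjective f ?_
    intro v
    cases v with
    | root => exact ⟨.inl none, rfl⟩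
    | dn v => exact ⟨.inl (some v), rfl⟩
    | rt v => exact ⟨.inr v, rfl⟩

/-- ancestor order -/
def le : {X : F} → V X → V X → Prop
  | .cons _ _, .root, .root => True
  | .cons _ _, .root, .dn _ => True
  | .cons _ _, .root, .rt _ => False
  | .cons _ _, .dn _, .root => False
  | .cons _ _, .dn a, .dn b => le a b
  | .cons _ _, .dn _, .rt _ => False
  | .cons _ _, .rt _, .root => False
  | .cons _ _, .rt _, .dn _ => False
  | .cons _ _, .rt a, .rt b => le a b

/-- strictly to the left (incomparable) -/
def lt : {X : F} → V X → V X → Prop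
  | .cons _ _, .root, .root => False
  | .cons _ _, .root, .dn _ => False
  | .cons _ _, .root, .rt _ => True
  | .cons _ _, .dn _, .root => False
  | .cons _ _, .dn a, .dn b => lt a b
  | .cons _ _, .dn _, .rt _ => True
  | .cons _ _, .rt _, .root => False
  | .cons _ _, .rt _, .dn _ => False
  | .cons _ _, .rt a, .rt b => lt a b

section simps
variable {c r : F} (a b : V c) (a' b' : V r)
@[simp] theorem le_rr : le (root : V (cons c r)) root := by simp [le]
@[simp] theorem le_rd : le (root : V (cons c r)) (dn a) := by simp [le]
@[simp] theorem le_rt : ¬ le (root : V (cons c r)) (rt a') := by simp [le]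
@[simp] theorem le_dr : ¬ le (dn a : V (cons c r)) root := by simp [le]
@[simp] theorem le_dd : le (dn a : V (cons c r)) (dn b) ↔ le a b := by simp [le]
@[simp] theorem le_dt : ¬ le (dn a : V (cons c r)) (rt b') := by simp [le]
@[simp] theorem le_tr : ¬ le (rt a' : V (cons c r)) root := by simp [le]
@[simp] theorem le_td : ¬ le (rt a' : V (cons c r)) (dn b) := by simp [le]
@[simp] theorem le_tt : le (rt a' : V (cons c r)) (rt b') ↔ le a' b' := by simp [le]
@[simp] theorem lt_rr : ¬ lt (root : V (cons c r)) root := by simp [lt]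
@[simp] theorem lt_rd : ¬ lt (root : V (cons c r)) (dn a) := by simp [lt]
@[simp] theorem lt_rt : lt (root : V (cons c r)) (rt a') := by simp [lt]
@[simp] theorem lt_dr : ¬ lt (dn a : V (cons c r)) root := by simp [lt]
@[simp] theorem lt_dd : lt (dn a : V (cons c r)) (dn b) ↔ lt a b := by simp [lt]
@[simp] theorem lt_dt : lt (dn a : V (cons c r)) (rt b') := by simp [lt]
@[simp] theorem lt_tr : ¬ lt (rt a' : V (cons c r)) root := by simp [lt]
@[simp] theorem lt_td : ¬ lt (rt a' : V (cons c r)) (dn b) := by simp [lt]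
@[simp] theorem lt_tt : lt (rt a' : V (cons c r)) (rt b') ↔ lt a' b' := by simp [lt]
end simps

@[simp] theorem le_refl {X : F} (v : V X) : le v v := by
  induction v <;> simp_all

theorem le_trans {X : F} {u v w : V X} : le u v → le v w → le u w := by
  induction u with
  | root => cases v <;> cases w <;> simp
  | dn u ih => cases v <;> cases w <;> simp; exact ih
  | rt u ih => cases v <;> cases w <;> simp; exact ih

theorem le_antisymm {X : F} {u v : V X} : le u v → le v u → u = v := by
  induction u with
  | root => cases v <;> simp
  | dn u ih => cases v <;> simp; exact ih
  | rt u ih => cases v <;> simp; exact ih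

theorem le_linear {X : F} {u v w : V X} : le u w → le v w → le u v ∨ le v u := by
  induction u with
  | root => cases v <;> cases w <;> simp
  | dn u ih => cases v <;> cases w <;> simp; exact ih
  | rt u ih => cases v <;> cases w <;> simp; exact ih

theorem lt_trans {X : F} {u v w : V X} : lt u v → lt v w → lt u w := by
  induction u with
  | root => cases v <;> cases w <;> simp
  | dn u ih => cases v <;> cases w <;> simp; exact ih
  | rt u ih => cases v <;> cases w <;> simp; exact ih

theorem lt_asymm {X : F} {u v : V X} : lt u v → ¬ lt v u := by
  induction u with
  | root => cases v <;> simp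
  | dn u ih => cases v <;> simp; exact ih
  | rt u ih => cases v <;> simp; exact ih

theorem lt_total {X : F} (u v : V X) : le u v ∨ le v u ∨ lt u v ∨ lt v u := by
  induction u with
  | root => cases v <;> simp
  | dn u ih => cases v <;> simp; exact ih _
  | rt u ih => cases v <;> simp; exact ih _

theorem lt_not_le {X : F} {u v : V X} : lt u v → ¬ le u v ∧ ¬ le v u := by
  induction u with
  | root => cases v <;> simp
  | dn u ih => cases v <;> simp; exact fun h => ih h
  | rt u ih => cases v <;> simp; exact fun h => ih h

theorem lt_mono {X : F} {u v u' v' : V X} : lt u v → le u u' → le v v' → lt u' v' := by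
  induction u with
  | root => cases v <;> cases u' <;> cases v' <;> simp
  | dn u ih => cases v <;> cases u' <;> cases v' <;> simp; exact ih
  | rt u ih => cases v <;> cases u' <;> cases v' <;> simp; exact ih

/-- Morphisms of forests. -/
structure Mor {T U : F} (e : V T → V U) : Prop where
  le_iff : ∀ v w, le (e v) (e w) ↔ le v w
  lt : ∀ v w, lt v w → lt (e v) (e w)
  meet : ∀ v w u, le u (e v) → le u (e w) → ∃ m, le m v ∧ le m w ∧ le u (e m)

theorem Mor.inj {T U : F} {e : V T → V U} (h : Mor e) : Function.Injective e := by
  intro v w hvw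
  exact le_antisymm ((h.le_iff _ _).1 (by rw [hvw]; simp)) ((h.le_iff _ _).1 (by rw [hvw]; simp))

theorem mor_id {T : F} : Mor (id : V T → V T) :=
  ⟨fun _ _ => Iff.rfl, fun _ _ h => h, fun _ _ u h1 h2 => ⟨u, h1, h2, le_refl u⟩⟩

theorem Mor.comp {T U W : F} {e : V T → V U} {e' : V U → V W} (h' : Mor e') (h : Mor e) :
    Mor (e' ∘ e) := by
  refine ⟨fun v w => (h'.le_iff _ _).trans (h.le_iff _ _), fun v w x => h'.lt _ _ (h.lt _ _ x), ?_⟩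
  intro v w u h1 h2
  obtain ⟨m, a, b, d⟩ := h'.meet _ _ _ h1 h2
  obtain ⟨m', a', b', d'⟩ := h.meet _ _ _ a b
  exact ⟨m', a', b', le_trans d ((h'.le_iff _ _).2 d')⟩

theorem mor_nil {U : F} (e : V F.nil → V U) : Mor e :=
  ⟨fun v => (nomatch v), fun v => (nomatch v), fun v => (nomatch v)⟩

/-- `consMap` -/
def consMap {c d : F} (e : V d → V c) : V (cons d nil) → V (cons c nil)
  | .root => root
  | .dn v => dn (e v)
  | .rt v => nomatch v

@[simp] theorem consMap_root {c d : F} (e : V d → V c) : consMap e root = root := rfl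
@[simp] theorem consMap_dn {c d : F} (e : V d → V c) (v) : consMap e (dn v) = dn (e v) := rfl

theorem mor_cons {c d : F} {e : V d → V c} (h : Mor e) : Mor (consMap e) := by
  refine ⟨?_, ?_, ?_⟩
  · rintro (_ | v | ⟨⟨⟩⟩) (_ | w | ⟨⟨⟩⟩) <;> simp [h.le_iff]
  · rintro (_ | v | ⟨⟨⟩⟩) (_ | w | ⟨⟨⟩⟩) <;> simp
    exact h.lt _ _
  · rintro (_ | v | ⟨⟨⟩⟩) (_ | w | ⟨⟨⟩⟩) u h1 h2
    · exact ⟨root, by simp, by simp, h1⟩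
    · exact ⟨root, by simp, by simp, h1⟩
    · exact ⟨root, by simp, by simp, h2⟩
    · rcases u with _ | u | ⟨⟨⟩⟩
      · exact ⟨root, by simp, by simp, by simp⟩
      · obtain ⟨m, a, b, d⟩ := h.meet v w u (by simpa using h1) (by simpa using h2)
        exact ⟨dn m, by simpa, by simpa, by simpa⟩

theorem mor_dn {c d r : F} {e : V (cons d nil) → V c} (h : Mor e) :
    Mor (fun v => (dn (e v) : V (cons c r))) := by
  refine ⟨?_, ?_, ?_⟩
  · intro v w; simp [h.le_iff]
  · intro v w; simpa using h.lt _ _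
  · intro v w u h1 h2
    rcases u with _ | u | u
    · refine ⟨root, ?_, ?_, by simp⟩
      · rcases v with _ | v | ⟨⟨⟩⟩ <;> simp
      · rcases w with _ | v | ⟨⟨⟩⟩ <;> simp
    · obtain ⟨m, a, b, d⟩ := h.meet v w u (by simpa using h1) (by simpa using h2)
      exact ⟨m, a, b, by simpa⟩
    · simp at h1

/-- concatenation of forests -/
def app : F → F → F
  | .nil, Y => Y
  | .cons c r, Y => cons c (app r Y)

/-- left injection -/
def il : {X Y : F} → V X → V (app X Y)
  | .cons _ _, _, .root => root
  | .cons _ _, _, .dn v => dn v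
  | .cons _ _, _, .rt v => rt (il v)

/-- right injection -/
def ir : {X Y : F} → V Y → V (app X Y)
  | .nil, _, v => v
  | .cons _ _, _, v => rt (ir v)

/-- eliminator -/
def ael {α : Type*} : {X Y : F} → (V X → α) → (V Y → α) → V (app X Y) → α
  | .nil, _, _, g, v => g v
  | .cons _ _, _, f, _, .root => f root
  | .cons _ _, _, f, _, .dn v => f (dn v)
  | .cons _ _, _, f, g, .rt v => ael (fun w => f (rt w)) g v

@[simp] theorem il_root {c r Y : F} : (il (root : V (cons c r)) : V (app (cons c r) Y)) = (root : V (cons c (app r Y))) := rfl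
@[simp] theorem il_dn {c r Y : F} (v : V c) : (il (dn v : V (cons c r)) : V (app (cons c r) Y)) = (dn v : V (cons c (app r Y))) := rfl
@[simp] theorem il_rt {c r Y : F} (v : V r) : (il (rt v : V (cons c r)) : V (app (cons c r) Y)) = (rt (il v) : V (cons c (app r Y))) := rfl
@[simp] theorem ir_nil {Y : F} (v : V Y) : (ir v : V (app F.nil Y)) = v := rfl
@[simp] theorem ir_cons {c r Y : F} (v : V Y) : (ir v : V (app (cons c r) Y)) = (rt (ir v) : V (cons c (app r Y))) := rfl

@[simp] theorem ael_il {α : Type*} {X Y : F} (f : V X → α) (g : V Y → α) (v : V X) :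
    ael f g (il v) = f v := by
  induction v with
  | root => rfl
  | dn v => rfl
  | rt v ih => exact ih _

@[simp] theorem ael_ir {α : Type*} {X Y : F} (f : V X → α) (g : V Y → α) (v : V Y) :
    ael f g (ir v) = g v := by
  induction X with
  | nil => rfl
  | cons c r _ ih => exact ih _

theorem app_cases {X Y : F} (u : V (app X Y)) : (∃ v, u = il v) ∨ ∃ v, u = ir v := by
  induction X with
  | nil => exact Or.inr ⟨u, rfl⟩
  | cons c r _ ih =>
    cases u with
    | root => exact Or.inl ⟨root, rfl⟩
    | dn v => exact Or.inl ⟨dn v, rfl⟩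
    | rt v =>
      rcases ih v with ⟨w, hw⟩ | ⟨w, hw⟩
      · exact Or.inl ⟨rt w, by rw [hw]; rfl⟩
      · exact Or.inr ⟨w, by rw [hw]; rfl⟩

section
variable {X Y : F} (v w : V X) (v' w' : V Y)
@[simp] theorem le_ll : le (il v : V (app X Y)) (il w) ↔ le v w := by
  induction v with
  | root => cases w <;> simp [app]
  | dn v => cases w <;> simp [app]
  | rt v ih => cases w <;> simp [app]; exact ih _
@[simp] theorem lt_ll : lt (il v : V (app X Y)) (il w) ↔ lt v w := by
  induction v with
  | root => cases w <;> simp [app]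
  | dn v => cases w <;> simp [app]
  | rt v ih => cases w <;> simp [app]; exact ih _
@[simp] theorem le_lr : ¬ le (il v : V (app X Y)) (ir v') := by
  induction v with
  | root => simp [app]
  | dn v => simp [app]
  | rt v ih => simpa [app] using ih
@[simp] theorem le_rl : ¬ le (ir v' : V (app X Y)) (il v) := by
  induction v with
  | root => simp [app]
  | dn v => simp [app]
  | rt v ih => simpa [app] using ih
@[simp] theorem lt_lr : lt (il v : V (app X Y)) (ir v') := by
  induction v with
  | root => simp [app]
  | dn v => simp [app]
  | rt v ih => simpa [app] using ih
@[simp] theorem lt_rl : ¬ lt (ir v' : V (app X Y)) (il v) := by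
  induction v with
  | root => simp [app]
  | dn v => simp [app]
  | rt v ih => simpa [app] using ih
@[simp] theorem le_r2 : le (ir v' : V (app X Y)) (ir w') ↔ le v' w' := by
  induction X with
  | nil => rfl
  | cons c r _ ih => simpa [app]
@[simp] theorem lt_r2 : lt (ir v' : V (app X Y)) (ir w') ↔ lt v' w' := by
  induction X with
  | nil => rfl
  | cons c r _ ih => simpa [app]
end

theorem mor_il {X Y : F} : Mor (il : V X → V (app X Y)) := by
  refine ⟨fun v w => by simp, fun v w => by simp, fun v w u h1 h2 => ?_⟩
  rcases app_cases u with ⟨u, rfl⟩ | ⟨u, rfl⟩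
  · exact ⟨u, by simpa using h1, by simpa using h2, by simp⟩
  · simp at h1

theorem mor_ir {X Y : F} : Mor (ir : V Y → V (app X Y)) := by
  refine ⟨fun v w => by simp, fun v w => by simp, fun v w u h1 h2 => ?_⟩
  rcases app_cases u with ⟨u, rfl⟩ | ⟨u, rfl⟩
  · simp at h1
  · exact ⟨u, by simpa using h1, by simpa using h2, by simp⟩

/-- map on concatenations -/
def amap {X Y T S : F} (e : V T → V X) (e' : V S → V Y) : V (app T S) → V (app X Y) :=
  ael (fun v => il (e v)) (fun v => ir (e' v))

@[simp] theorem amap_il {X Y T S : F} (e : V T → V X) (e' : V S → V Y) (v) :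
    amap e e' (il v) = il (e v) := by simp [amap]
@[simp] theorem amap_ir {X Y T S : F} (e : V T → V X) (e' : V S → V Y) (v) :
    amap e e' (ir v) = ir (e' v) := by simp [amap]

theorem mor_amap {X Y T S : F} {e : V T → V X} {e' : V S → V Y} (h : Mor e) (h' : Mor e') :
    Mor (amap e e') := by
  refine ⟨?_, ?_, ?_⟩
  · intro v w
    rcases app_cases v with ⟨v, rfl⟩ | ⟨v, rfl⟩ <;> rcases app_cases w with ⟨w, rfl⟩ | ⟨w, rfl⟩ <;>
      simp [h.le_iff, h'.le_iff]
  · intro v w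
    rcases app_cases v with ⟨v, rfl⟩ | ⟨v, rfl⟩ <;> rcases app_cases w with ⟨w, rfl⟩ | ⟨w, rfl⟩ <;>
      simp
    · exact h.lt _ _
    · exact h'.lt _ _
  · intro v w u
    rcases app_cases v with ⟨v, rfl⟩ | ⟨v, rfl⟩ <;> rcases app_cases w with ⟨w, rfl⟩ | ⟨w, rfl⟩ <;>
      rcases app_cases u with ⟨u, rfl⟩ | ⟨u, rfl⟩ <;> simp
    · intro h1 h2
      obtain ⟨m, a, b, d⟩ := h.meet v w u h1 h2
      exact ⟨il m, by simpa, by simpa, by simpa⟩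
    · intro h1 h2
      obtain ⟨m, a, b, d⟩ := h'.meet v w u h1 h2
      exact ⟨ir m, by simpa, by simpa, by simpa⟩

/-- Generalized rigid surjections: `f` takes values in letters `A` or labels `σ v`. -/
structure RS {L : Type} (A : Set L) (U S : F) (σ : V S → L) (f : V U → L) (e : V S → V U) :
    Prop where
  mor : Mor e
  sec : ∀ v, f (e v) = σ v
  low : ∀ w, f w ∈ A ∨ ∃ v, f w = σ v ∧ le (e v) w

section RS
variable {L M : Type} {A : Set L} {U S T : F}

theorem RS.comp {B : Set M} {τ : V T → L} {g : V U → L} {e1 : V T → V U} {σ : V S → M}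
    {φ : L → M} {f : V T → M} {e2 : V S → V T}
    (h1 : RS A U T τ g e1) (h2 : RS B T S σ f e2) (hf : ∀ t, φ (τ t) = f t)
    (hA : ∀ a ∈ A, φ a ∈ B) :
    RS B U S σ (fun w => φ (g w)) (fun v => e1 (e2 v)) := by
  refine ⟨h1.mor.comp h2.mor, fun v => ?_, fun w => ?_⟩
  · show φ (g (e1 (e2 v))) = _
    rw [h1.sec, hf, h2.sec]
  · rcases h1.low w with h | ⟨v, hv, hw⟩
    · exact Or.inl (hA _ h)
    · show φ (g w) ∈ B ∨ ∃ x, φ (g w) = _ ∧ _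
      rw [hv, hf]
      rcases h2.low v with h | ⟨x, hx, hy⟩
      · exact Or.inl h
      · exact Or.inr ⟨x, hx, le_trans ((h1.mor.le_iff _ _).2 hy) hw⟩

theorem RS.map {B : Set M} {τ : V T → L} {g : V U → L} {e : V T → V U}
    (h : RS A U T τ g e) (φ : L → M) (hA : ∀ a ∈ A, φ a ∈ B) :
    RS B U T (fun v => φ (τ v)) (fun w => φ (g w)) e := by
  refine ⟨h.mor, fun v => by rw [h.sec], fun w => ?_⟩
  rcases h.low w with h | ⟨v, hv, hw⟩
  · exact Or.inl (hA _ h)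
  · exact Or.inr ⟨v, by rw [hv], hw⟩

theorem RS.mono {B : Set L} {τ : V T → L} {g : V U → L} {e : V T → V U}
    (h : RS A U T τ g e) (hA : A ⊆ B) : RS B U T τ g e :=
  ⟨h.mor, h.sec, fun w => (h.low w).imp (fun x => hA x) fun x => x⟩

theorem rs_refl (τ : V T → L) : RS A T T τ τ id :=
  ⟨mor_id, fun _ => rfl, fun w => Or.inr ⟨w, rfl, by simp⟩⟩

theorem rs_nil {τ : V F.nil → L} {g : V U → L} (h : ∀ w, g w ∈ A) (e) : RS A U F.nil τ g e :=
  ⟨mor_nil e, fun v => (nomatch v), fun w => Or.inl (h w)⟩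

theorem RS.letters {τ : V F.nil → L} {g : V U → L} {e} (h : RS A U F.nil τ g e) : ∀ w, g w ∈ A := by
  intro w
  rcases h.low w with h | ⟨⟨⟩, _⟩
  exact h

theorem rs_cons {c d : F} {τ : V (cons d nil) → L} {g : V (cons c nil) → L} {e : V d → V c}
    (h : RS (insert (τ root) A) c d (fun v => τ (dn v)) (fun v => g (dn v)) e)
    (hr : g root = τ root) : RS A (cons c nil) (cons d nil) τ g (consMap e) := by
  refine ⟨mor_cons h.mor, ?_, ?_⟩
  · rintro (_ | v | ⟨⟨⟩⟩)
    · exact hr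
    · exact h.sec v
  · rintro (_ | w | ⟨⟨⟩⟩)
    · exact Or.inr ⟨root, hr, by simp⟩
    · rcases h.low w with (h | h) | ⟨v, hv, hw⟩
      · exact Or.inr ⟨root, h, by simp⟩
      · exact Or.inl h
      · exact Or.inr ⟨dn v, hv, by simpa⟩

theorem rs_dn {c d r : F} {τ : V (cons d nil) → L} {g : V (cons c r) → L} {e : V (cons d nil) → V c}
    (h : RS A c (cons d nil) τ (fun v => g (dn v)) e) (hr : g root ∈ A) (hr' : ∀ v, g (rt v) ∈ A) :
    RS A (cons c r) (cons d nil) τ g (fun v => dn (e v)) := by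
  refine ⟨mor_dn h.mor, h.sec, ?_⟩
  rintro (_ | w | w)
  · exact Or.inl hr
  · rcases h.low w with h | ⟨v, hv, hw⟩
    · exact Or.inl h
    · exact Or.inr ⟨v, hv, by simpa⟩
  · exact Or.inl (hr' w)

theorem rs_app {X Y T S : F} {τ : V T → L} {σ : V S → L} {g : V X → L} {k : V Y → L} {e e'}
    (h : RS A X T τ g e) (h' : RS A Y S σ k e') :
    RS A (app X Y) (app T S) (ael τ σ) (ael g k) (amap e e') := by
  refine ⟨mor_amap h.mor h'.mor, ?_, ?_⟩
  · intro v
    rcases app_cases v with ⟨v, rfl⟩ | ⟨v, rfl⟩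
    · simp [h.sec]
    · simp [h'.sec]
  · intro w
    rcases app_cases w with ⟨w, rfl⟩ | ⟨w, rfl⟩
    · rcases h.low w with h | ⟨v, hv, hw⟩
      · exact Or.inl (by simpa)
      · exact Or.inr ⟨il v, by simpa, by simpa⟩
    · rcases h'.low w with h | ⟨v, hv, hw⟩
      · exact Or.inl (by simpa)
      · exact Or.inr ⟨ir v, by simpa, by simpa⟩

theorem rs_il {X Y T : F} {τ : V T → L} {g : V X → L} {k : V Y → L} {e}
    (h : RS A X T τ g e) (h' : ∀ w, k w ∈ A) :
    RS A (app X Y) T τ (ael g k) (fun v => il (e v)) := by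
  refine ⟨mor_il.comp h.mor, by simp [h.sec], ?_⟩
  intro w
  rcases app_cases w with ⟨w, rfl⟩ | ⟨w, rfl⟩
  · rcases h.low w with h | ⟨v, hv, hw⟩
    · exact Or.inl (by simpa)
    · exact Or.inr ⟨v, by simpa, by simpa⟩
  · exact Or.inl (by simpa using h' w)

theorem rs_ir {X Y T : F} {τ : V T → L} {g : V X → L} {k : V Y → L} {e}
    (h' : ∀ w, g w ∈ A) (h : RS A Y T τ k e) :
    RS A (app X Y) T τ (ael g k) (fun v => ir (e v)) := by
  refine ⟨mor_ir.comp h.mor, by simp [h.sec], ?_⟩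
  intro w
  rcases app_cases w with ⟨w, rfl⟩ | ⟨w, rfl⟩
  · exact Or.inl (by simpa using h' w)
  · rcases h.low w with h | ⟨v, hv, hw⟩
    · exact Or.inl (by simpa)
    · exact Or.inr ⟨v, by simpa, by simpa⟩

theorem rs_of_mor {T U : F} {τ : V T → L} {e : V T → V U} (h : Mor e) {a : L} (ha : a ∈ A) :
    ∃ g, RS A U T τ g e := by
  classical
  refine ⟨fun w => if hw : ∃ v, e v = w then τ hw.choose else a, h, ?_, ?_⟩
  · intro v
    have hw : ∃ v', e v' = e v := ⟨v, rfl⟩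
    simp only [hw, dite_true]
    rw [h.inj hw.choose_spec]
  · intro w
    by_cases hw : ∃ v, e v = w
    · refine Or.inr ⟨hw.choose, by simp [hw], ?_⟩
      rw [hw.choose_spec]; simp
    · exact Or.inl (by simpa [hw] using ha)

end RS

section Ram
variable {L : Type} {A : Set L} {U U' S T : F}

/-- plugging `f` into `g` -/
def pl (f : V T → L) (g : V U → V T ⊕ L) : V U → L := fun w => Sum.elim f id (g w)

/-- composing -/
def cm (g1 : V U → V T ⊕ L) (g2 : V U' → V U ⊕ L) : V U' → V T ⊕ L :=
  fun w => Sum.elim g1 Sum.inr (g2 w)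

theorem pl_cm (f : V T → L) (g1 : V U → V T ⊕ L) (g2 : V U' → V U ⊕ L) :
    pl f (cm g1 g2) = pl (pl f g1) g2 := by
  funext w
  simp only [pl, cm]
  rcases g2 w with a | a <;> rfl

/-- generic rigid surjections from `U` to `T` with letters `A`. -/
def QS (A : Set L) (U T : F) (g : V U → V T ⊕ L) (e : V T → V U) : Prop :=
  RS (Sum.inr '' A) U T Sum.inl g e

theorem QS.pl {g : V U → V T ⊕ L} {e1} (h : QS A U T g e1) {σ : V S → L} {f e2}
    (h2 : RS A T S σ f e2) : RS A U S σ (pl f g) (fun v => e1 (e2 v)) := by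
  refine RS.comp (φ := Sum.elim f id) h h2 (fun t => rfl) ?_
  rintro _ ⟨a, ha, rfl⟩
  exact ha

theorem QS.cm {g1 : V U → V T ⊕ L} {g2 : V U' → V U ⊕ L} {e1 e2} (h1 : QS A U T g1 e1)
    (h2 : QS A U' U g2 e2) : QS A U' T (cm g1 g2) (fun v => e2 (e1 v)) := by
  refine RS.comp (φ := Sum.elim g1 Sum.inr) h2 h1 (fun t => rfl) ?_
  rintro _ ⟨a, ha, rfl⟩
  exact ⟨a, ha, rfl⟩

theorem qs_nil (g : V F.nil → V F.nil ⊕ L) (e : V F.nil → V F.nil) : QS A F.nil F.nil g e :=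
  rs_nil (U := F.nil) (fun v => isEmptyElim v) e

/-- For every finite colouring there is `g` such that the colour of `f ∘ g` depends only on the
parameter `i` of `f`. -/
def Ram (L : Type) (A : Set L) (T : F) (I : Type) (C : (V T → L) → I → Prop) : Prop :=
  ∀ (K : Type) [Finite K], ∃ U : F, ∀ χ : (V U → L) → K, ∃ g e, QS A U T g e ∧
    ∀ f f' i, C f i → C f' i → χ (pl f g) = χ (pl f' g)

theorem Ram.weaken {I J : Type} {C : (V T → L) → I → Prop} {D : (V T → L) → J → Prop}
    (h : Ram L A T I C) (hD : ∀ f f' j, D f j → D f' j → ∃ i, C f i ∧ C f' i) : Ram L A T J D := by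
  intro K _
  obtain ⟨U, hU⟩ := h K
  refine ⟨U, fun χ => ?_⟩
  obtain ⟨g, e, hg, hc⟩ := hU χ
  refine ⟨g, e, hg, fun f f' j hf hf' => ?_⟩
  obtain ⟨i, h1, h2⟩ := hD f f' j hf hf'
  exact hc f f' i h1 h2

/-- class of generalized rigid surjections -/
def cls (A : Set L) (T S : F) (σ : V S → L) (f : V T → L) (_ : Unit) : Prop := ∃ e, RS A T S σ f e

/-- combine two classes -/
def Cor {I : Type} (C : (V T → L) → I → Prop) (D : (V T → L) → Unit → Prop) :
    (V T → L) → Option I → Prop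
  | f, some i => C f i
  | f, none => D f ()

theorem Ram.comb {I : Type} {C : (V T → L) → I → Prop} (h : Ram L A T I C) (σ : V S → L)
    (hP : ∀ T', Ram L A T' Unit (cls A T' S σ)) :
    Ram L A T (Option I) (Cor C (cls A T S σ)) := by
  intro K _
  obtain ⟨U1, hU1⟩ := h K
  obtain ⟨U2, hU2⟩ := hP U1 K
  refine ⟨U2, fun χ => ?_⟩
  obtain ⟨g2, e2, hg2, hc2⟩ := hU2 χ
  obtain ⟨g1, e1, hg1, hc1⟩ := hU1 (fun h => χ (pl h g2))
  refine ⟨cm g1 g2, _, hg1.cm hg2, ?_⟩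
  rintro f f' (_ | i) hf hf'
  · rw [pl_cm, pl_cm]
    obtain ⟨e, he⟩ := hf
    obtain ⟨e', he'⟩ := hf'
    exact hc2 _ _ () ⟨_, hg1.pl he⟩ ⟨_, hg1.pl he'⟩
  · rw [pl_cm, pl_cm]
    exact hc1 _ _ i hf hf'

theorem Ram.prod [Finite L] {T1 T2 : F} {I J : Type} {C : (V T1 → L) → I → Prop}
    {D : (V T2 → L) → J → Prop} (h1 : Ram L A T1 I C) (h2 : Ram L A T2 J D) :
    Ram L A (app T1 T2) (I × J) (fun f i => C (fun v => f (il v)) i.1 ∧ D (fun v => f (ir v)) i.2) := by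
  intro K _
  obtain ⟨U2, hU2⟩ := h2 ((V T1 → L) → K)
  obtain ⟨U1, hU1⟩ := h1 ((V U2 → L) → K)
  refine ⟨app U1 U2, fun χ => ?_⟩
  obtain ⟨g1, e1, hg1, hc1⟩ := hU1 (fun h k => χ (ael h k))
  obtain ⟨g2, e2, hg2, hc2⟩ := hU2 (fun k h => χ (ael (pl h g1) k))
  have key : ∀ f : V (app T1 T2) → L,
      pl f (ael (fun w => Sum.map il id (g1 w)) (fun w => Sum.map ir id (g2 w))) =
      ael (pl (fun v => f (il v)) g1) (pl (fun v => f (ir v)) g2) := by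
    intro f
    funext w
    rcases app_cases w with ⟨w, rfl⟩ | ⟨w, rfl⟩
    · simp only [pl, ael_il]
      rcases g1 w <;> rfl
    · simp only [pl, ael_ir]
      rcases g2 w <;> rfl
  refine ⟨ael (fun w => Sum.map il id (g1 w)) (fun w => Sum.map ir id (g2 w)), amap e1 e2, ?_, ?_⟩
  · have a1 := RS.map (B := (Sum.inr '' A : Set (V (app T1 T2) ⊕ L))) hg1 (Sum.map il id)
      (by rintro _ ⟨a, ha, rfl⟩; exact ⟨a, ha, rfl⟩)
    have a2 := RS.map (B := (Sum.inr '' A : Set (V (app T1 T2) ⊕ L))) hg2 (Sum.map ir id)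
      (by rintro _ ⟨a, ha, rfl⟩; exact ⟨a, ha, rfl⟩)
    have a3 := rs_app a1 a2
    unfold QS
    convert a3 using 1
    funext v
    rcases app_cases v with ⟨v, rfl⟩ | ⟨v, rfl⟩ <;> simp
  · rintro f f' ⟨i, j⟩ ⟨hf1, hf2⟩ ⟨hf1', hf2'⟩
    rw [key, key]
    have b1 := congrFun (hc1 _ _ i hf1 hf1') (pl (fun v => f (ir v)) g2)
    have b2 := congrFun (hc2 _ _ j hf2 hf2') (fun v => f' (il v))
    exact b1.trans b2

/-- extended alphabet -/
def ext (A : Set L) : Set (Option L) := insert none (some '' A)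

/-- functions on a tree -/
def glue {α : Type} {X : F} (l : α) (h : V X → α) : V (cons X nil) → α
  | .root => l
  | .dn v => h v
  | .rt v => nomatch v

theorem Ram.cons [Finite L] {c : F} {I : Type} {C : (V c → Option L) → I → Prop}
    (h : Ram (Option L) (ext A) c I C) :
    Ram L A (cons c nil) (L × I) (fun f i => f root = i.1 ∧
      ∃ h, C h i.2 ∧ ∀ v, f (dn v) = (h v).getD i.1) := by
  intro K _
  obtain ⟨X, hX⟩ := h (L → K)
  refine ⟨F.cons X nil, fun χ => ?_⟩
  obtain ⟨g, e, hg, hc⟩ := hX (fun h l => χ (glue l (fun w => (h w).getD l)))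
  let φ : V c ⊕ Option L → V (F.cons c nil) ⊕ L := fun x =>
    match x with
    | .inl v => .inl (dn v)
    | .inr none => .inl root
    | .inr (some l) => .inr l
  have key : ∀ (f : V (F.cons c nil) → L) (h : V c → Option L),
      (∀ v, f (dn v) = (h v).getD (f root)) →
      pl f (glue (Sum.inl root) (fun w => φ (g w))) =
        glue (f root) (fun w => (pl h g w).getD (f root)) := by
    intro f h hh
    funext w
    rcases w with _ | w | ⟨⟨⟩⟩
    · rfl
    · simp only [pl, glue]
      rcases g w with v | _ | l
      · exact hh v
      · rfl
      · rfl
  refine ⟨glue (Sum.inl root) (fun w => φ (g w)), consMap e, ?_, ?_⟩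
  · refine rs_cons ?_ rfl
    exact RS.map (L := V c ⊕ Option L) hg φ (by
      rintro _ ⟨a, (rfl | ⟨a, ha, rfl⟩), rfl⟩
      · exact Or.inl rfl
      · exact Or.inr ⟨a, ha, rfl⟩)
  · rintro f f' ⟨l, i⟩ ⟨hr, h, hC, hh⟩ ⟨hr', h', hC', hh'⟩
    dsimp only at hr hr' hh hh' hC hC'
    subst hr
    rw [key f h hh, key f' h' (by rw [hr']; exact hh'), hr']
    exact congrFun (hc h h' i hC hC') (f root)

end Ram

/-- The Ramsey statement for `S`. -/
def P (S : F) : Prop := ∀ (L : Type) [Finite L] (A : Set L), A.Nonempty → ∀ (σ : V S → L) (T : F),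
  Ram L A T Unit (cls A T S σ)

/-! ### Hales-Jewett step -/

/-- chain with `c` attached everywhere -/
def tow : ℕ → F → F
  | 0, _ => nil
  | n+1, c => cons (app c (tow n c)) nil

/-- chain word -/
def cw {L : Type} {c : F} : (n : ℕ) → (V (tow n c) → L) → List L
  | 0, _ => []
  | n+1, f => f root :: cw n (fun v => f (dn (ir v)))

theorem cw_map {L M : Type} {c : F} (φ : L → M) (n : ℕ) (f : V (tow n c) → L) :
    cw n (fun v => φ (f v)) = (cw n f).map φ := by
  induction n with
  | zero => rfl
  | succ n ih => simp [cw]; exact ih _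

theorem cw_mem {L : Type} {A : Set L} {c : F} (n : ℕ) (f : V (tow n c) → L) (h : ∀ v, f v ∈ A) :
    ∀ a ∈ cw n f, a ∈ A := by
  induction n with
  | zero => simp [cw]
  | succ n ih =>
    simp [cw]
    exact ⟨h _, ih _ (fun v => h _)⟩

theorem cw_len {L : Type} {c : F} (n : ℕ) (f : V (tow n c) → L)  :
    (cw n f).length = n := by
  induction n with
  | zero => simp [cw]
  | succ n ih => simp [cw, ih]

theorem towRam {c : F} (hc : ∀ (L : Type) [Finite L] (A : Set L), A.Nonempty →
    Ram L A c Unit (fun f _ => ∀ v, f v ∈ A)) (n : ℕ) :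
    ∀ (L : Type) [Finite L] (A : Set L), A.Nonempty →
    Ram L A (tow n c) (List L) (fun f w => (∀ v, f v ∈ A) ∧ cw n f = w) := by
  induction n with
  | zero =>
    intro L _ A hA K _
    refine ⟨nil, fun χ => ⟨fun v => (nomatch v), fun v => (nomatch v), qs_nil _ _, ?_⟩⟩
    intro f f' _ _ _
    congr 1
    funext v
    exact nomatch v
  | succ n ih =>
    intro L _ A hA
    have hA' : (ext A).Nonempty := ⟨none, Or.inl rfl⟩
    have h := Ram.cons (Ram.prod (hc (Option L) (ext A) hA') (ih (Option L) (ext A) hA'))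
    refine Ram.weaken h ?_
    rintro f f' (_ | ⟨l, w⟩) ⟨h1, h2⟩ ⟨h1', h2'⟩
    · simp [cw] at h2
    · simp only [cw, List.cons.injEq] at h2 h2'
      refine ⟨(l, ((), w.map some)), ⟨h2.1, fun v => some (f (dn v)), ⟨?_, ?_, ?_⟩, fun v => rfl⟩,
        ⟨h2'.1, fun v => some (f' (dn v)), ⟨?_, ?_, ?_⟩, fun v => rfl⟩⟩
      · exact fun v => Or.inr ⟨_, h1 _, rfl⟩
      · exact fun v => Or.inr ⟨_, h1 _, rfl⟩
      · rw [← h2.2]; exact cw_map some n (fun v => f (dn (ir v)))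
      · exact fun v => Or.inr ⟨_, h1' _, rfl⟩
      · exact fun v => Or.inr ⟨_, h1' _, rfl⟩
      · rw [← h2'.2]; exact cw_map some n (fun v => f' (dn (ir v)))

theorem tow_fill {M : Type} {B : Set M} {c : F} {b : M} (hb : b ∈ B) (w : List M)
    (hw : ∀ a ∈ w, a ∈ B) : ∃ k : V (tow w.length c) → M, (∀ v, k v ∈ B) ∧ cw _ k = w := by
  induction w with
  | nil => exact ⟨fun _ => b, fun _ => hb, rfl⟩
  | cons a w ih =>
    obtain ⟨k, hk, hk'⟩ := ih (fun x hx => hw x (List.mem_cons_of_mem _ hx))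
    refine ⟨glue a (ael (fun _ => b) k), ?_, ?_⟩
    · rintro (_ | v | ⟨⟨⟩⟩)
      · exact hw a (by simp)
      · rcases app_cases v with ⟨v, rfl⟩ | ⟨v, rfl⟩
        · simpa [glue] using hb
        · simpa [glue] using hk v
    · show a :: cw _ (fun v => ael (fun _ => b) k (ir v)) = _
      simp [hk']

theorem tow_line {M : Type} {B : Set M} {c : F} {b : M} (hb : b ∈ B) (τ : V (cons c nil) → M)
    (w : List M) (hw : ∀ a ∈ w, a ∈ B ∨ a = τ root) (hr : τ root ∈ w) :
    ∃ g e, RS B (tow w.length c) (cons c nil) τ g e ∧ cw _ g = w := by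
  induction w with
  | nil => simp at hr
  | cons a w ih =>
    by_cases ha : a = τ root
    · obtain ⟨k, hk, hk'⟩ := tow_fill (B := insert (τ root) B) (c := c) (Or.inr hb) w
        (fun x hx => (hw x (List.mem_cons_of_mem _ hx)).symm)
      refine ⟨glue a (ael (fun v => τ (dn v)) k), _, rs_cons (e := fun v => il v) ?_ ha, ?_⟩
      · exact rs_il (rs_refl _) hk
      · show a :: cw _ (fun v => ael (fun v => τ (dn v)) k (ir v)) = _
        simp [hk']
    · obtain ⟨g, e, hg, hg'⟩ := ih (fun x hx => hw x (List.mem_cons_of_mem _ hx))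
        (by rcases List.mem_cons.1 hr with h | h
            · exact absurd h.symm ha
            · exact h)
      refine ⟨glue a (ael (fun _ => b) g), _, rs_dn (e := fun v => ir (e v)) ?_ ?_ ?_, ?_⟩
      · exact rs_ir (fun _ => hb) hg
      · exact (hw a (by simp)).resolve_right ha
      · exact fun v => nomatch v
      · show a :: cw _ (fun v => ael (fun _ => b) g (ir v)) = _
        simp [hg']

/-- Hales-Jewett with lists -/
theorem hj (L : Type) [Finite L] (A : Set L) (K : Type) [Finite K] : ∃ n : ℕ,
    ∀ C : List L → K, ∃ w : List (Option L), w.length = n ∧ none ∈ w ∧ (∀ a, some a ∈ w → a ∈ A) ∧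
      ∀ a ∈ A, ∀ b ∈ A, C (w.map (fun x => x.getD a)) = C (w.map (fun x => x.getD b)) := by
  obtain ⟨ι, _, h⟩ := Combinatorics.Line.exists_mono_in_high_dimension A K
  refine ⟨Fintype.card ι, fun C => ?_⟩
  let eq := Fintype.equivFin ι
  obtain ⟨l, k, hl⟩ := h (fun x => C (List.ofFn (fun i => (x (eq.symm i) : L))))
  refine ⟨List.ofFn (fun i => (l.idxFun (eq.symm i)).map Subtype.val), by simp, ?_, ?_, ?_⟩
  · obtain ⟨i, hi⟩ := l.proper
    rw [List.mem_ofFn]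
    exact ⟨eq i, by simp [hi]⟩
  · intro a ha
    rw [List.mem_ofFn] at ha
    obtain ⟨i, hi⟩ := ha
    simp only [Option.map_eq_some_iff] at hi
    obtain ⟨b, _, rfl⟩ := hi
    exact b.2
  · have aux : ∀ a (ha : a ∈ A), C ((List.ofFn (fun i => (l.idxFun (eq.symm i)).map Subtype.val)).map
        (fun x => x.getD a)) = k := by
      intro a ha
      rw [← hl ⟨a, ha⟩]
      congr 1
      rw [List.map_ofFn]
      congr 1
      funext i
      simp only [Function.comp, Combinatorics.Line.coe_apply]
      rcases l.idxFun (eq.symm i) <;> rfl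
    intro a ha b hb
    rw [aux a ha, aux b hb]

theorem letRam (T : F) : ∀ (L : Type) [Finite L] (A : Set L), A.Nonempty →
    Ram L A T Unit (fun f _ => ∀ v, f v ∈ A) := by
  induction T with
  | nil =>
    intro L _ A hA K _
    refine ⟨nil, fun χ => ⟨fun v => (nomatch v), fun v => (nomatch v), qs_nil _ _, ?_⟩⟩
    intro f f' _ _ _
    congr 1
    funext v
    exact nomatch v
  | cons c r hc hr =>
    intro L _ A hA
    suffices h : Ram L A (cons c nil) Unit (fun f _ => ∀ v, f v ∈ A) by
      refine Ram.weaken (Ram.prod h (hr L A hA)) ?_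
      rintro f f' _ h h'
      exact ⟨((), ()), ⟨fun v => h _, fun v => h _⟩, ⟨fun v => h' _, fun v => h' _⟩⟩
    intro K _
    obtain ⟨n, hn⟩ := hj L A K
    obtain ⟨U, hU⟩ := towRam hc n L A hA K
    refine ⟨U, fun χ => ?_⟩
    obtain ⟨g1, e1, hg1, hc1⟩ := hU χ
    obtain ⟨a0, ha0⟩ := hA
    classical
    obtain ⟨w, hwn, hnw, hwA, hw⟩ := hn (fun l => χ (pl (if h : ∃ k : V (tow n c) → L,
      (∀ v, k v ∈ A) ∧ cw n k = l then h.choose else fun _ => a0) g1))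
    subst hwn
    obtain ⟨g2, e2, hg2, hcw⟩ := tow_line (B := (Sum.inr '' A : Set (V (cons c nil) ⊕ L)))
      (b := Sum.inr a0) ⟨a0, ha0, rfl⟩ Sum.inl (w.map (fun x => x.elim (Sum.inl root) Sum.inr))
      (by
        intro a ha
        obtain ⟨x, hx, rfl⟩ := List.mem_map.1 ha
        rcases x with _ | x
        · exact Or.inr rfl
        · exact Or.inl ⟨x, hwA x hx, rfl⟩)
      (List.mem_map.2 ⟨none, hnw, rfl⟩)
    have hlen : (w.map (fun x => x.elim (Sum.inl root : V (cons c nil) ⊕ L) Sum.inr)).length = w.length := by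
      simp
    have : ∃ g2 e2, QS A (tow w.length c) (cons c nil) g2 e2 ∧
        cw _ g2 = (w.map (fun x => x.elim (Sum.inl root : V (cons c nil) ⊕ L) Sum.inr)) := by
      rw [← hlen]
      exact ⟨g2, e2, hg2, hcw⟩
    obtain ⟨g2, e2, hg2, hcw⟩ := this
    refine ⟨cm g2 g1, _, hg2.cm hg1, ?_⟩
    intro f f' _ hf hf'
    have aux : ∀ f : V (cons c nil) → L, (∀ v, f v ∈ A) → (∀ v, pl f g2 v ∈ A) ∧
        cw _ (pl f g2) = w.map (fun x => x.getD (f root)) := by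
      intro f hf
      constructor
      · have := hg2.pl (rs_nil (U := cons c nil) (τ := fun v => (nomatch v)) hf (fun v => (nomatch v)))
        exact this.letters
      · have := cw_map (Sum.elim f id) _ g2
        unfold pl
        rw [this, hcw, List.map_map]
        congr 1
        funext x
        rcases x <;> rfl
    have aux2 : ∀ f : V (cons c nil) → L, (∀ v, f v ∈ A) → χ (pl (pl f g2) g1) =
      χ (pl (if h : ∃ k : V (tow w.length c) → L,
      (∀ v, k v ∈ A) ∧ cw _ k = w.map (fun x => x.getD (f root)) then h.choose else fun _ => a0) g1) := by
      intro f hf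
      have hex : ∃ k : V (tow w.length c) → L,
        (∀ v, k v ∈ A) ∧ cw _ k = w.map (fun x => x.getD (f root)) := ⟨_, aux f hf⟩
      rw [dif_pos hex]
      exact hc1 _ _ _ (aux f hf) hex.choose_spec
    rw [pl_cm, pl_cm, aux2 f hf, aux2 f' hf']
    exact hw _ (hf _) _ (hf' _)

theorem P_nil : P F.nil := by
  intro L _ A hA σ T
  refine Ram.weaken (letRam T L A hA) ?_
  rintro f f' _ ⟨e, he⟩ ⟨e', he'⟩
  exact ⟨(), he.letters, he'.letters⟩


/-! ### Path words -/

/-- word of the strict predecessors -/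
def pw {L : Type} : {X : F} → (V X → L) → V X → List L
  | .cons _ _, _, .root => []
  | .cons _ _, f, .dn v => f root :: pw (fun w => f (dn w)) v
  | .cons _ _, f, .rt v => pw (fun w => f (rt w)) v

section pw
variable {L M : Type}
@[simp] theorem pw_root {c r : F} (f : V (cons c r) → L) : pw f root = [] := by simp [pw]
@[simp] theorem pw_dn {c r : F} (f : V (cons c r) → L) (v) :
    pw f (dn v) = f root :: pw (fun w => f (dn w)) v := by simp [pw]
@[simp] theorem pw_rt {c r : F} (f : V (cons c r) → L) (v) :
    pw f (rt v) = pw (fun w => f (rt w)) v := by simp [pw]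

theorem pw_map (φ : L → M) {X : F} (f : V X → L) (v : V X) :
    pw (fun w => φ (f w)) v = (pw f v).map φ := by
  induction v with
  | root => simp
  | dn v ih => simp [ih (fun w => f (dn w))]
  | rt v ih => simp [ih (fun w => f (rt w))]

theorem pw_congr {X : F} (f f' : V X → L) (v : V X) (h : ∀ u, le u v → u ≠ v → f u = f' u) :
    pw f v = pw f' v := by
  induction v with
  | root => simp
  | dn v ih =>
    simp only [pw_dn]
    rw [h root (by simp) (by simp), ih (fun w => f (dn w)) (fun w => f' (dn w))]
    intro u hu hn
    exact h (dn u) (by simpa) (by simpa)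
  | rt v ih =>
    simp only [pw_rt]
    exact ih (fun w => f (rt w)) (fun w => f' (rt w)) (fun u hu hn => h (rt u) (by simpa) (by simpa))

theorem pw_il {X Y : F} (f : V (app X Y) → L) (v : V X) : pw f (il v) = pw (fun w => f (il w)) v := by
  induction v with
  | root => exact (pw_root f).trans (pw_root _).symm
  | dn v => exact (pw_dn f v).trans (pw_dn _ v).symm
  | rt v ih => exact (pw_rt f (il v)).trans ((ih _).trans (pw_rt (fun w => f (il w)) v).symm)

theorem pw_ir {X Y : F} (f : V (app X Y) → L) (v : V Y) : pw f (ir v) = pw (fun w => f (ir w)) v := by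
  induction X with
  | nil => rfl
  | cons c r _ ih => exact (pw_rt f (ir v)).trans (ih _)
end pw

/-! ### Decompositions -/

section dec
variable {L : Type} {A B : Set L}

theorem RS.restr {U S U' S' : F} {σ : V S → L} {f : V U → L} {e : V S → V U} (h : RS A U S σ f e)
    (hAB : A ⊆ B) (i : V U' → V U) (j : V S' → V S) (e1 : V S' → V U')
    (hi : ∀ x y, le (i x) (i y) ↔ le x y) (hi' : ∀ x y, lt (i x) (i y) → lt x y)
    (hj : ∀ x y, le (j x) (j y) ↔ le x y) (hj' : ∀ x y, lt x y → lt (j x) (j y))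
    (he : ∀ v, i (e1 v) = e (j v))
    (hl : ∀ v w, le (e v) (i w) → (∃ v', v = j v') ∨ (σ v ∈ B ∧ ∀ u, ¬ le (i u) (e v))) :
    RS B U' S' (fun v => σ (j v)) (fun w => f (i w)) e1 := by
  refine ⟨⟨?_, ?_, ?_⟩, ?_, ?_⟩
  · intro v w
    rw [← hi, he, he, h.mor.le_iff, hj]
  · intro v w hvw
    apply hi'
    rw [he, he]
    exact h.mor.lt _ _ (hj' _ _ hvw)
  · intro v w u h1 h2
    rw [← hi, he] at h1 h2
    obtain ⟨m, a, b, d⟩ := h.mor.meet _ _ _ h1 h2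
    rcases hl m (e1 v) (by rw [he, h.mor.le_iff]; exact a) with ⟨m', rfl⟩ | ⟨_, h'⟩
    · exact ⟨m', (hj _ _).1 a, (hj _ _).1 b, by rw [← hi, he]; exact d⟩
    · exact absurd d (h' u)
  · intro v
    show f (i (e1 v)) = _
    rw [he, h.sec]
  · intro w
    rcases h.low (i w) with h1 | ⟨v, hv, hw⟩
    · exact Or.inl (hAB h1)
    · rcases hl v w hw with ⟨v', rfl⟩ | ⟨h', _⟩
      · refine Or.inr ⟨v', hv, ?_⟩
        rw [← hi, he]; exact hw
      · exact Or.inl (by rw [hv]; exact h')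

theorem RS.split {c r d q : F} {σ : V (cons d q) → L} {f : V (cons c r) → L} {e}
    (h : RS A (cons c r) (cons d q) σ f e) :
    (e root = root ∧ f root = σ root ∧ ∃ e1 e2, RS (insert (σ root) A) c d (fun v => σ (dn v))
      (fun v => f (dn v)) e1 ∧ RS A r q (fun v => σ (rt v)) (fun v => f (rt v)) e2) ∨
    (∃ u, e root = dn u ∧ f root ∈ A ∧ ∃ e1 e2, RS A c (cons d nil)
      (fun v => σ (il (X := cons d nil) (Y := q) v)) (fun v => f (dn v)) e1 ∧ e1 root = u ∧
      RS A r q (fun v => σ (rt v)) (fun v => f (rt v)) e2) ∨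
    (∃ u, e root = rt u ∧ f root ∈ A ∧ (∀ v, f (dn v) ∈ A) ∧
      ∃ e1, RS A r (cons d q) σ (fun v => f (rt v)) e1 ∧ e1 root = u) := by
  have hdn : ∀ v, le (e root) (e (dn v)) ∧ e root ≠ e (dn v) := fun v =>
    ⟨(h.mor.le_iff _ _).2 (by simp), fun hh => by simpa using h.mor.inj hh⟩
  have hrt : ∀ v, lt (e root) (e (rt v)) := fun v => h.mor.lt _ _ (by simp)
  have hmeet : ∀ u v, le u (e root) → ¬ le u (e (rt v)) := by
    intro u v h1 h2
    obtain ⟨m, a, b, _⟩ := h.mor.meet _ _ _ h1 h2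
    rcases m with _ | m | m <;> simp at a b
  have hrs : (∀ v, ∃ w, e (rt v) = rt w) → (∀ w, e root ≠ rt w) → (∀ v w, e (dn v) ≠ rt w) →
      ∃ e2, RS A r q (fun v => σ (rt v)) (fun v => f (rt v)) e2 := by
    intro h1 h2 h3
    choose e2 he2 using h1
    refine ⟨e2, h.restr (subset_rfl) rt rt e2 (by simp) (by simp) (by simp) (by simp)
      (fun v => (he2 v).symm) ?_⟩
    intro v w hvw
    rcases v with _ | v | v
    · exfalso
      rcases hh : e root with _ | x | x <;> simp [hh] at hvw
      exact h2 _ hh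
    · exfalso
      rcases hh : e (dn v) with _ | x | x <;> simp [hh] at hvw
      exact h3 _ _ hh
    · exact Or.inl ⟨v, rfl⟩
  rcases hr : e root with _ | u | u
  · left
    have h1 : ∀ v, ∃ w, e (dn v) = dn w := by
      intro v
      have := hdn v
      rcases hh : e (dn v) with _ | x | x <;> simp [hr, hh] at this
      exact ⟨x, rfl⟩
    have h2 : ∀ v, ∃ w, e (rt v) = rt w := by
      intro v
      have := hmeet root v (by simp [hr])
      rcases hh : e (rt v) with _ | x | x <;> simp [hh] at this
      exact ⟨x, rfl⟩
    obtain ⟨e2, he2⟩ := hrs h2 (by simp [hr]) (fun v w hw => by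
      obtain ⟨x, hx⟩ := h1 v
      simp [hx] at hw)
    choose e1 he1 using h1
    refine ⟨rfl, by rw [← hr, h.sec], e1, e2, h.restr (Set.subset_insert _ _) dn dn e1 (by simp)
      (by simp) (by simp) (by simp) (fun v => (he1 v).symm) ?_, he2⟩
    intro v w hvw
    rcases v with _ | v | v
    · exact Or.inr ⟨Or.inl rfl, by simp [hr]⟩
    · exact Or.inl ⟨v, rfl⟩
    · obtain ⟨x, hx⟩ := h2 v
      simp [hx] at hvw
  · right; left
    have h1 : ∀ v : V (cons d nil), ∃ w, e (il (X := cons d nil) (Y := q) v) = dn w := by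
      rintro (_ | v | ⟨⟨⟩⟩)
      · exact ⟨u, hr⟩
      · have := hdn v
        show ∃ w, e (dn v) = dn w
        rcases hh : e (dn v) with _ | x | x <;> simp [hr, hh] at this
        exact ⟨x, rfl⟩
    have h2 : ∀ v, ∃ w, e (rt v) = rt w := by
      intro v
      have := hmeet root v (by simp [hr])
      rcases hh : e (rt v) with _ | x | x <;> simp [hh] at this
      exact ⟨x, rfl⟩
    obtain ⟨e2, he2⟩ := hrs h2 (by simp [hr]) (fun v w hw => by
      obtain ⟨x, hx⟩ := h1 (dn v)
      have : e (dn v) = dn x := hx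
      simp [this] at hw)
    choose e1 he1 using h1
    refine ⟨u, rfl, ?_, e1, e2, h.restr subset_rfl dn (il (X := cons d nil) (Y := q)) e1 (by simp)
      (by simp) (fun x y => le_ll x y) (fun x y => (lt_ll x y).2) (fun v => (he1 v).symm) ?_, ?_, he2⟩
    · rcases h.low root with h' | ⟨v, _, hv⟩
      · exact h'
      · exfalso
        rcases v with _ | v | v
        · simp [hr] at hv
        · have : e (dn v) = dn _ := he1 (dn v)
          simp [this] at hv
        · obtain ⟨x, hx⟩ := h2 v
          simp [hx] at hv
    · intro v w hvw
      rcases v with _ | v | v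
      · exact Or.inl ⟨root, rfl⟩
      · exact Or.inl ⟨dn v, rfl⟩
      · obtain ⟨x, hx⟩ := h2 v
        simp [hx] at hvw
    · have : e root = dn (e1 root) := he1 root
      rw [hr] at this
      simpa using this.symm
  · right; right
    have h1 : ∀ v, ∃ w, e v = rt w := by
      rintro (_ | v | v)
      · exact ⟨u, hr⟩
      · have := hdn v
        rcases hh : e (dn v) with _ | x | x <;> simp [hr, hh] at this
        exact ⟨x, rfl⟩
      · have := hrt v
        rcases hh : e (rt v) with _ | x | x <;> simp [hr, hh] at this
        exact ⟨x, rfl⟩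
    choose e1 he1 using h1
    refine ⟨u, rfl, ?_, ?_, e1, h.restr subset_rfl rt (fun v => v) e1 (by simp) (by simp) (by simp)
      (by simp) (fun v => (he1 v).symm) (fun v w _ => Or.inl ⟨v, rfl⟩), ?_⟩
    · rcases h.low root with h' | ⟨v, _, hv⟩
      · exact h'
      · simp [he1] at hv
    · intro w
      rcases h.low (dn w) with h' | ⟨v, _, hv⟩
      · exact h'
      · simp [he1] at hv
    · have := he1 root
      rw [hr] at this
      simpa using this.symm

theorem RS.opt {c d : F} {σ : V d → L} {f : V c → L} {e} {s : L}
    (h : RS (insert s A) c d σ f e) :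
    ∃ g : V c → Option L, RS (ext A) c d (fun v => some (σ v)) g e ∧ ∀ v, f v = (g v).getD s := by
  classical
  refine ⟨fun w => if f w ∈ A ∨ ∃ v, f w = σ v ∧ le (e v) w then some (f w) else none,
    ⟨h.mor, ?_, ?_⟩, ?_⟩
  · intro v
    have : f (e v) ∈ A ∨ ∃ v', f (e v) = σ v' ∧ le (e v') (e v) := Or.inr ⟨v, h.sec v, by simp⟩
    rw [if_pos this, h.sec]
  · intro w
    split_ifs with h1
    · rcases h1 with h1 | ⟨v, hv, hw⟩
      · exact Or.inl (Or.inr ⟨_, h1, rfl⟩)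
      · exact Or.inr ⟨v, by rw [hv], hw⟩
    · exact Or.inl (Or.inl rfl)
  · intro w
    dsimp only
    split_ifs with h1
    · rfl
    · push Not at h1
      rcases h.low w with (h2 | h2) | ⟨v, hv, hw⟩
      · exact h2
      · exact absurd h2 h1.1
      · exact absurd hw (h1.2 v hv)

end dec

/-- rigid surjections with prescribed position of the first root and prescribed path word -/
def cls1 {L : Type} (A : Set L) (T : F) {d q : F} (σ : V (cons d q) → L) (f : V T → L)
    (i : V T × List L) : Prop := ∃ e, RS A T (cons d q) σ f e ∧ e root = i.1 ∧ pw f i.1 = i.2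

theorem first_root (d : F) (hd : P d) (T : F) : ∀ (q : F), P q → ∀ (L : Type) [Finite L] (A : Set L),
    A.Nonempty → ∀ σ : V (cons d q) → L, Ram L A T (V T × List L) (cls1 A T σ) := by
  induction T with
  | nil =>
    intro q _ L _ A hA σ K _
    refine ⟨nil, fun χ => ⟨fun v => (nomatch v), fun v => (nomatch v), qs_nil _ _, ?_⟩⟩
    rintro f f' ⟨⟨⟩, _⟩
  | cons c r hc hr =>
    intro q hq L _ A hA σ
    have hA' : (ext A).Nonempty := ⟨none, Or.inl rfl⟩
    have h1 := hc nil P_nil (Option L) (ext A) hA'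
      (fun v => some (σ (il (X := cons d nil) (Y := q) v)))
    have h2 := h1.comb (fun v => some (σ (dn v))) (hd (Option L) (ext A) hA' _)
    have h3 := h2.cons.comb (S := nil) (fun v => (nomatch v)) (P_nil L A hA _)
    have h4 := (hr q hq L A hA σ).comb (fun v => σ (rt v)) (hq L A hA _)
    have h5 := h3.prod h4
    refine Ram.weaken (T := cons c r) h5 ?_
    have key : ∀ j, ∃ i : Option (L × Option (V c × List (Option L))) × Option (V r × List L),
        ∀ f, cls1 A (cons c r) σ f j → Cor (fun f i => f root = i.1 ∧ ∃ h, 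
          Cor (cls1 (ext A) c (fun v => some (σ (il (X := cons d nil) (Y := q) v))))
            (cls (ext A) c d (fun v => some (σ (dn v)))) h i.2 ∧ ∀ v, f (dn v) = (h v).getD i.1)
            (cls A (cons c nil) nil (fun v => (nomatch v))) (fun v => f (il (X := cons c nil) (Y := r) v)) i.1 ∧
          Cor (cls1 A r σ) (cls A r q (fun v => σ (rt v))) (fun v => f (rt v)) i.2 := by
      rintro ⟨u, w⟩
      rcases u with _ | u | u
      · refine ⟨(some (σ root, none), none), ?_⟩
        rintro f ⟨e, he, he1, he2⟩
        rcases he.split with ⟨a1, a2, e1, e2, a3, a4⟩ | ⟨u, a1, _⟩ | ⟨u, a1, _⟩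
        · obtain ⟨g, hg, hg'⟩ := a3.opt
          exact ⟨⟨a2, g, ⟨e1, hg⟩, hg'⟩, ⟨e2, a4⟩⟩
        · simp [a1] at he1
        · simp [a1] at he1
      · rcases w with _ | ⟨l, w⟩
        · refine ⟨(none, none), ?_⟩
          rintro f ⟨e, he, he1, he2⟩
          simp at he2
        · refine ⟨(some (l, some (u, w.map some)), none), ?_⟩
          rintro f ⟨e, he, he1, he2⟩
          simp only [pw_dn, List.cons.injEq] at he2
          rcases he.split with ⟨a1, _⟩ | ⟨u, a1, a2, e1, e2, a3, a4, a5⟩ | ⟨u, a1, _⟩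
          · simp [a1] at he1
          · simp only [a1, dn.injEq] at he1
            subst he1
            refine ⟨⟨he2.1, fun v => some (f (dn v)), ⟨e1, ?_, a4, ?_⟩, fun v => rfl⟩, ⟨e2, a5⟩⟩
            · exact a3.map some (fun a ha => Or.inr ⟨a, ha, rfl⟩)
            · dsimp only
              rw [pw_map some (fun v => f (dn v)), he2.2]
          · simp [a1] at he1
      · refine ⟨(none, some (u, w)), ?_⟩
        rintro f ⟨e, he, he1, he2⟩
        simp only [pw_rt] at he2
        rcases he.split with ⟨a1, _⟩ | ⟨u, a1, _⟩ | ⟨u, a1, a2, a3, e1, a4, a5⟩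
        · simp [a1] at he1
        · simp [a1] at he1
        · simp only [a1, rt.injEq] at he1
          subst he1
          refine ⟨⟨fun v => (nomatch v), rs_nil (U := cons c nil) ?_ _⟩, ⟨e1, a4, a5, he2⟩⟩
          rintro (_ | v | ⟨⟨⟩⟩)
          · exact a2
          · exact a3 v
    intro f f' j hf hf'
    obtain ⟨i, hi⟩ := key j
    exact ⟨i, hi f hf, hi f' hf'⟩


/-! ### Vertex Ramsey -/

/-- attach a copy of `Y` below every vertex of `X` -/
def graft : F → F → F
  | .nil, _ => nil
  | .cons c r, Y => cons (app (graft c Y) Y) (graft r Y)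

/-- substitution -/
def sub : F → F → F
  | .nil, _ => nil
  | .cons c r, X => app (graft X (sub c X)) (sub r X)

/-- base vertices -/
def base : {X Y : F} → V X → V (graft X Y)
  | .cons _ _, _, .root => root
  | .cons _ _, _, .dn v => dn (il (base v))
  | .cons _ _, _, .rt v => rt (base v)

/-- attached vertices -/
def att : {X Y : F} → V X → V Y → V (graft X Y)
  | .cons _ _, _, .root, y => dn (ir y)
  | .cons _ _, _, .dn v, y => dn (il (att v y))
  | .cons _ _, _, .rt v, y => rt (att v y)

theorem mor_cr {c r c' r' : F} {e1 : V c → V c'} {e2 : V r → V r'} (h1 : Mor e1) (h2 : Mor e2)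
    (e : V (cons c r) → V (cons c' r')) (a : e root = root) (b : ∀ v, e (dn v) = dn (e1 v))
    (d : ∀ v, e (rt v) = rt (e2 v)) : Mor e := by
  have h : Mor (amap (consMap e1) e2) := mor_amap (mor_cons h1) h2
  have : e = (amap (consMap e1) e2) := by
    funext v
    rcases v with _ | v | v
    · rw [a]; rfl
    · rw [b]; rfl
    · rw [d]
      exact (amap_ir (consMap e1) e2 v).symm
  rw [this]; exact h

theorem mor_base {X Y : F} : Mor (base : V X → V (graft X Y)) := by
  induction X with
  | nil => exact mor_nil _
  | cons c r h1 h2 =>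
    exact mor_cr (c' := app (graft c Y) Y) (e1 := fun v => il (base v)) (mor_il.comp h1) h2 _ rfl
      (fun v => rfl) (fun v => rfl)

theorem mor_att {X Y c : F} (x : V X) {e : V (cons c nil) → V Y} (h : Mor e) :
    Mor (fun v => (att x (e v) : V (graft X Y))) := by
  induction x with
  | root => exact mor_dn (mor_ir.comp h)
  | dn x ih => exact mor_dn (mor_il.comp ih)
  | rt x ih => exact Mor.comp (mor_ir (X := cons (app (graft _ Y) Y) nil)) ih

theorem Mor.of_eq {T U : F} {e e' : V T → V U} (h : Mor e) (hh : ∀ v, e' v = e v) : Mor e' := by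
  have : e' = e := funext hh
  rw [this]; exact h

theorem mor_hang {X Y c : F} (x : V X) {e : V c → V Y} (h : Mor e) :
    Mor (glue (base x : V (graft X Y)) (fun v => att x (e v))) := by
  induction x with
  | @root c' r' =>
    have := (mor_il (Y := graft r' Y)).comp (mor_cons ((mor_ir (X := graft c' Y)).comp h))
    refine Mor.of_eq (U := graft (cons c' r') Y) this ?_
    rintro (_ | v | ⟨⟨⟩⟩) <;> rfl
  | @dn c' r' x ih =>
    have := mor_dn (r := graft r' Y) ((mor_il (Y := Y)).comp ih)
    refine Mor.of_eq (U := graft (cons c' r') Y) this ?_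
    rintro (_ | v | ⟨⟨⟩⟩) <;> rfl
  | @rt c' r' x ih =>
    have := Mor.comp (mor_ir (X := cons (app (graft c' Y) Y) nil)) ih
    refine Mor.of_eq (U := graft (cons c' r') Y) this ?_
    rintro (_ | v | ⟨⟨⟩⟩) <;> rfl

theorem sub_alt (u T : F) (ψ : V (sub T (cons u nil)) → Prop) :
    (∃ e : V (cons u nil) → V (sub T (cons u nil)), Mor e ∧ ∀ v, ¬ ψ (e v)) ∨
    (∃ e : V T → V (sub T (cons u nil)), Mor e ∧ ∀ v, ψ (e v)) := by
  induction T with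
  | nil => exact Or.inr ⟨fun v => (nomatch v), mor_nil _, fun v => (nomatch v)⟩
  | cons c r h1 h2 =>
    rcases h2 (fun v => ψ (ir v)) with ⟨e, he, hv⟩ | ⟨er, her, hvr⟩
    · exact Or.inl ⟨fun v => ir (e v), mor_ir.comp he, hv⟩
    · by_cases hb : ∃ x : V (cons u nil), ψ (il (base x))
      · obtain ⟨x, hx⟩ := hb
        rcases h1 (fun v => ψ (il (att x v))) with ⟨e, he, hv⟩ | ⟨e, he, hv⟩
        · exact Or.inl ⟨fun v => il (att x (e v)), mor_il.comp (mor_att x he), hv⟩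
        · refine Or.inr ⟨amap (T := cons c nil) (glue (base x) (fun v => att x (e v))) er,
            mor_amap (mor_hang x he) her, ?_⟩
          intro v
          rcases app_cases (X := cons c nil) (Y := r) v with ⟨v, rfl⟩ | ⟨v, rfl⟩
          · rw [amap_il]
            rcases v with _ | v | ⟨⟨⟩⟩
            · exact hx
            · exact hv v
          · rw [amap_ir]; exact hvr v
      · push Not at hb
        exact Or.inl ⟨fun v => il (base v), mor_il.comp mor_base, hb⟩

theorem vert_tree (K : Type) (s : Finset K) : ∀ c : F, ∃ u, ∀ ψ : V (cons u nil) → K,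
    (∀ v, ψ v ∈ s) → ∃ e : V (cons c nil) → V (cons u nil), Mor e ∧ ∃ k, ∀ t, ψ (e t) = k := by
  classical
  induction s using Finset.induction_on with
  | empty => exact fun c => ⟨nil, fun ψ h => absurd (h root) (by simp)⟩
  | insert k s _ ih =>
    intro c
    obtain ⟨u, hu⟩ := ih c
    refine ⟨_, fun (ψ : V (sub (cons c nil) (cons u nil)) → K) h => ?_⟩
    rcases sub_alt u (cons c nil) (fun v => ψ v = k) with ⟨e, he, hv⟩ | ⟨e, he, hv⟩
    · obtain ⟨e', he', k', hk'⟩ := hu (fun v => ψ (e v)) (fun v => by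
        have := h (e v)
        simpa [hv v] using this)
      exact ⟨fun v => e (e' v), he.comp he', k', hk'⟩
    · exact ⟨e, he, k, hv⟩

/-- abstract pigeonhole -/
theorem pigeon {R : Type} [Fintype R] [Nonempty R] {Ψ : ℕ → Type}
    (H : ∀ M, Ψ M → ℕ → R → Prop) (tl : ∀ M, Ψ (M+1) → Ψ M)
    (h0 : ∀ M ψ k, H M ψ 0 k)
    (hstep : ∀ M (ψ : Ψ (M+1)), ∃ k, ∀ m, H M (tl M ψ) m k → H (M+1) ψ (m+1) k)
    (hskip : ∀ M (ψ : Ψ (M+1)) m k, H M (tl M ψ) m k → H (M+1) ψ m k) :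
    ∀ M (κ : R → ℕ) (ψ : Ψ M), ∑ k, κ k ≤ M → ∃ k, H M ψ (κ k) k := by
  classical
  intro M
  induction M with
  | zero =>
    intro κ ψ h
    have : ∀ k, κ k = 0 := by simpa using h
    refine ⟨Classical.arbitrary R, ?_⟩
    rw [this]; exact h0 _ _ _
  | succ M ih =>
    intro κ ψ h
    obtain ⟨ρ, hρ⟩ := hstep M ψ
    by_cases hz : κ ρ = 0
    · exact ⟨ρ, by rw [hz]; exact h0 _ _ _⟩
    · obtain ⟨m, hm⟩ := Nat.exists_eq_succ_of_ne_zero hz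
      have h1 := Finset.add_sum_erase Finset.univ κ (Finset.mem_univ ρ)
      have h2 := Finset.add_sum_erase Finset.univ (Function.update κ ρ m) (Finset.mem_univ ρ)
      have h3 : ∑ x ∈ Finset.univ.erase ρ, Function.update κ ρ m x = ∑ x ∈ Finset.univ.erase ρ, κ x := by
        apply Finset.sum_congr rfl
        intro x hx
        rw [Function.update_of_ne (Finset.ne_of_mem_erase hx)]
      rw [h3, Function.update_self] at h2
      obtain ⟨k, hk⟩ := ih (Function.update κ ρ m) (tl M ψ) (by omega)
      by_cases hkr : k = ρ
      · subst hkr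
        refine ⟨k, ?_⟩
        rw [hm]
        apply hρ
        simpa using hk
      · rw [Function.update_of_ne hkr] at hk
        exact ⟨k, hskip _ _ _ _ hk⟩

/-- repeated concatenation -/
def rep : ℕ → F → F
  | 0, _ => nil
  | k+1, Y => app Y (rep k Y)

/-- number of roots -/
def nr : F → ℕ
  | .nil => 0
  | .cons _ r => nr r + 1

/-- each component of `T` embeds into `Y` -/
def CompEmb : F → F → Prop
  | .nil, _ => True
  | .cons c r, Y => (∃ e : V (cons c nil) → V Y, Mor e) ∧ CompEmb r Y

theorem CompEmb.mono {Y Y' : F} (h : ∀ c, (∃ e : V (cons c nil) → V Y, Mor e) →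
    ∃ e : V (cons c nil) → V Y', Mor e) (T : F) : CompEmb T Y → CompEmb T Y' := by
  induction T with
  | nil => exact fun _ => trivial
  | cons c r _ ih => exact fun ⟨a, b⟩ => ⟨h c a, ih b⟩

theorem compEmb_self (T : F) : CompEmb T T := by
  induction T with
  | nil => trivial
  | cons c r _ ih =>
    refine ⟨⟨il (X := cons c nil) (Y := r), mor_il⟩, CompEmb.mono ?_ r ih⟩
    rintro c' ⟨e, he⟩
    exact ⟨_, (mor_ir (X := cons c nil) (Y := r)).comp he⟩

theorem compEmb_cons (T : F) : CompEmb T (cons T nil) :=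
  CompEmb.mono (fun _ ⟨_, he⟩ => ⟨_, mor_dn he⟩) T (compEmb_self T)

theorem CompEmb.rep {T Y : F} (h : CompEmb T Y) : ∃ e : V T → V (rep (nr T) Y), Mor e := by
  induction T with
  | nil => exact ⟨fun v => (nomatch v), mor_nil _⟩
  | cons c r _ ih =>
    obtain ⟨⟨e, he⟩, h2⟩ := h
    obtain ⟨e', he'⟩ := ih h2
    exact ⟨_, mor_amap he he'⟩

theorem vert (K : Type) [Finite K] (T : F) : ∃ U, ∀ ψ : V U → K,
    ∃ e : V T → V U, Mor e ∧ ∀ t t', ψ (e t) = ψ (e t') := by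
  classical
  have := Fintype.ofFinite K
  by_cases hK : Nonempty K
  · obtain ⟨u, hu⟩ := vert_tree K Finset.univ T
    obtain ⟨e1, he1⟩ := (compEmb_cons T).rep
    have := pigeon (R := K) (Ψ := fun M => V (rep M (cons u nil)) → K)
      (fun M ψ m k => ∃ e : V (rep m (cons T nil)) → V (rep M (cons u nil)), Mor e ∧ ∀ t, ψ (e t) = k)
      (fun M ψ v => ψ (ir v)) (fun M ψ k => ⟨fun v => (nomatch v), mor_nil _, fun v => (nomatch v)⟩)
      (fun M ψ => by
        obtain ⟨e, he, k, hk⟩ := hu (fun v => ψ (il v)) (by simp)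
        refine ⟨k, ?_⟩
        rintro m ⟨e', he', hk'⟩
        refine ⟨amap e e', mor_amap he he', ?_⟩
        intro t
        rcases app_cases (X := cons T nil) t with ⟨v, rfl⟩ | ⟨v, rfl⟩
        · rw [amap_il]; exact hk v
        · rw [amap_ir]; exact hk' v)
      (fun M ψ m k ⟨e, he, hk⟩ => ⟨fun v => ir (e v), mor_ir.comp he, hk⟩)
      (∑ k : K, nr T) (fun _ => nr T)
    refine ⟨rep (∑ k : K, nr T) (cons u nil), fun ψ => ?_⟩
    obtain ⟨k, e, he, hk⟩ := this ψ _root_.le_rfl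
    exact ⟨fun v => e (e1 v), he.comp he1, fun t t' => by rw [hk, hk]⟩
  · refine ⟨cons nil nil, fun ψ => absurd ⟨ψ root⟩ hK⟩


/-! ### Making the colour independent of the path word -/

/-- regular towers -/
def tw (k : ℕ) : ℕ → F → F
  | 0, c => c
  | n+1, c => cons (rep k (tw k n c)) nil

/-- relation on repeated forests -/
def LfRep {Y c : F} (R : V Y → V c → Prop) : (m : ℕ) → V (rep m Y) → V c → Prop
  | 0, _, _ => False
  | m+1, v, t => (∃ y : V Y, v = il y ∧ R y t) ∨ ∃ y, v = ir (X := Y) y ∧ LfRep R m y t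

/-- `v` is a copy of `t` at the bottom of the tower -/
def Lf (k : ℕ) {c : F} : (n : ℕ) → V (tw k n c) → V c → Prop
  | 0, v, t => v = t
  | n+1, v, t => ∃ y, v = dn y ∧ LfRep (Lf k n) k y t

section line
variable {M : Type} {B : Set M} {b : M}

theorem tw_fill1 (hb : b ∈ B) (k : ℕ) {c d : F} (σ : V c → M) (i : V (cons d nil) → V c) (hi : Mor i)
    (w : List M) (hw : ∀ a ∈ w, a ∈ B) :
    ∃ g e, RS B (tw (k+1) w.length c) (cons d nil) (fun v => σ (i v)) g e ∧
      ∀ v, Lf (k+1) w.length (e v) (i v) ∧ w <+: pw g (e v) := by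
  induction w with
  | nil =>
    obtain ⟨g, hg⟩ := rs_of_mor (τ := fun v => σ (i v)) hi hb
    exact ⟨g, i, hg, fun v => ⟨rfl, ⟨_, List.nil_append _⟩⟩⟩
  | cons a w ih =>
    obtain ⟨g, e, h, h'⟩ := ih (fun x hx => hw x (List.mem_cons_of_mem _ hx))
    refine ⟨glue a (ael g (fun _ => b)), _, rs_dn (e := fun v => il (e v)) ?_ ?_ ?_, ?_⟩
    · exact rs_il h (fun _ => hb)
    · exact hw a (by simp)
    · exact fun v => nomatch v
    · intro v
      refine ⟨⟨_, rfl, Or.inl ⟨_, rfl, (h' v).1⟩⟩, ?_⟩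
      have : pw (glue a (ael g (fun _ : V (rep k (tw (k+1) w.length c)) => b))) (dn (il (e v))) =
          a :: pw g (e v) := by
        rw [pw_dn]
        congr 1
        refine (pw_il _ _).trans ?_
        congr 1
        funext x
        simp [glue]
      exact this ▸ List.cons_prefix_cons.2 ⟨rfl, (h' v).2⟩

theorem tw_fill (hb : b ∈ B) (k : ℕ) {c : F} (σ : V c → M) (w : List M) (hw : ∀ a ∈ w, a ∈ B)
    (T : F) : ∀ (i : V T → V c), Mor i →
    ∃ g e, RS B (rep (nr T) (tw (k+1) w.length c)) T (fun v => σ (i v)) g e ∧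
      ∀ v, LfRep (Lf (k+1) w.length) (nr T) (e v) (i v) ∧ w <+: pw g (e v) := by
  induction T with
  | nil =>
    intro i hi
    exact ⟨fun v => (nomatch v), fun v => (nomatch v),
      rs_nil (U := F.nil) (fun v => (nomatch v)) _, fun v => (nomatch v)⟩
  | cons d r _ ih =>
    intro i hi
    obtain ⟨g1, e1, h1, h1'⟩ := tw_fill1 hb k σ (fun v => i (il (X := cons d nil) (Y := r) v))
      (hi.comp mor_il) w hw
    obtain ⟨g2, e2, h2, h2'⟩ := ih (fun v => i (ir (X := cons d nil) (Y := r) v)) (hi.comp mor_ir)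
    refine ⟨ael g1 g2, amap (T := cons d nil) (S := r) e1 e2, ?_, ?_⟩
    · have := rs_app h1 h2
      have h3 : (fun v => σ (i v)) = (ael (fun v => σ (i (il (X := cons d nil) (Y := r) v)))
          (fun v => σ (i (ir (X := cons d nil) (Y := r) v)))) := by
        funext v
        rcases app_cases (X := cons d nil) (Y := r) v with ⟨v, rfl⟩ | ⟨v, rfl⟩
        · rw [ael_il]
        · rw [ael_ir]
      rw [h3]
      exact this
    · intro v
      rcases app_cases (X := cons d nil) (Y := r) v with ⟨v, rfl⟩ | ⟨v, rfl⟩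
      · rw [amap_il]
        refine ⟨Or.inl ⟨_, rfl, (h1' v).1⟩, ?_⟩
        have : pw (ael g1 g2) (il (e1 v)) = pw g1 (e1 v) := by
          rw [pw_il]; simp
        exact this ▸ (h1' v).2
      · rw [amap_ir]
        refine ⟨Or.inr ⟨_, rfl, (h2' v).1⟩, ?_⟩
        have : pw (ael g1 g2) (ir (e2 v)) = pw g2 (e2 v) := by
          rw [pw_ir]; simp
        exact this ▸ (h2' v).2

theorem tw_line (hb : b ∈ B) {c : F} (τ : V (cons c nil) → M) (w : List M)
    (hw : ∀ a ∈ w, a ∈ B ∨ a = τ root) (hr : τ root ∈ w) :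
    ∃ g e, RS B (tw (nr c + 1) w.length c) (cons c nil) τ g e ∧
      ∀ t, Lf (nr c + 1) w.length (e (dn t)) t ∧ w <+: pw g (e (dn t)) := by
  induction w with
  | nil => simp at hr
  | cons a w ih =>
    by_cases ha : a = τ root
    · obtain ⟨g, e, h, h'⟩ := tw_fill (B := insert (τ root) B) (Or.inr hb) (nr c)
        (fun v => τ (dn v)) w (fun x hx => (hw x (List.mem_cons_of_mem _ hx)).symm) c (fun v => v) mor_id
      refine ⟨glue a (ael (fun _ => b) g), _, rs_cons (e := fun v => ir (e v)) ?_ ha, ?_⟩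
      · exact rs_ir (fun _ => Or.inr hb) h
      · intro t
        refine ⟨⟨_, rfl, Or.inr ⟨_, rfl, (h' t).1⟩⟩, ?_⟩
        have : pw (glue a (ael (fun _ : V (tw (nr c + 1) w.length c) => b) g)) (dn (ir (e t))) =
            a :: pw g (e t) := by
          rw [pw_dn]
          congr 1
          refine (pw_ir _ _).trans ?_
          congr 1
          funext x
          simp [glue]
        exact this ▸ List.cons_prefix_cons.2 ⟨rfl, (h' t).2⟩
    · obtain ⟨g, e, h, h'⟩ := ih (fun x hx => hw x (List.mem_cons_of_mem _ hx))
        (by rcases List.mem_cons.1 hr with h | h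
            · exact absurd h.symm ha
            · exact h)
      refine ⟨glue a (ael g (fun _ => b)), _, rs_dn (e := fun v => il (e v)) ?_ ?_ ?_, ?_⟩
      · exact rs_il h (fun _ => hb)
      · exact (hw a (by simp)).resolve_right ha
      · exact fun v => nomatch v
      · intro t
        refine ⟨⟨_, rfl, Or.inl ⟨_, rfl, (h' t).1⟩⟩, ?_⟩
        have : pw (glue a (ael g (fun _ : V (rep (nr c) (tw (nr c + 1) w.length c)) => b)))
            (dn (il (e (dn t)))) = a :: pw g (e (dn t)) := by
          rw [pw_dn]
          congr 1
          refine (pw_il _ _).trans ?_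
          congr 1
          funext x
          simp [glue]
        exact this ▸ List.cons_prefix_cons.2 ⟨rfl, (h' t).2⟩
end line

section app
variable {L : Type} {A : Set L} {U1 U2 T1 T2 : F}

/-- concatenation of generic surjections -/
def gapp (g1 : V U1 → V T1 ⊕ L) (g2 : V U2 → V T2 ⊕ L) : V (app U1 U2) → V (app T1 T2) ⊕ L :=
  ael (fun w => Sum.map il id (g1 w)) (fun w => Sum.map ir id (g2 w))

theorem QS.gapp {g1 : V U1 → V T1 ⊕ L} {g2 : V U2 → V T2 ⊕ L} {e1 e2} (hg1 : QS A U1 T1 g1 e1)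
    (hg2 : QS A U2 T2 g2 e2) : QS A (app U1 U2) (app T1 T2) (gapp g1 g2) (amap e1 e2) := by
  have a1 := RS.map (B := (Sum.inr '' A : Set (V (app T1 T2) ⊕ L))) hg1 (Sum.map il id)
    (by rintro _ ⟨a, ha, rfl⟩; exact ⟨a, ha, rfl⟩)
  have a2 := RS.map (B := (Sum.inr '' A : Set (V (app T1 T2) ⊕ L))) hg2 (Sum.map ir id)
    (by rintro _ ⟨a, ha, rfl⟩; exact ⟨a, ha, rfl⟩)
  have a3 := rs_app a1 a2
  unfold QS DRT.gapp
  convert a3 using 1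
  funext v
  rcases app_cases v with ⟨v, rfl⟩ | ⟨v, rfl⟩ <;> simp

theorem pl_gapp_il (g1 : V U1 → V T1 ⊕ L) (g2 : V U2 → V T2 ⊕ L) (f : V (app T1 T2) → L) (w) :
    pl f (gapp g1 g2) (il w) = pl (fun v => f (il v)) g1 w := by
  simp only [pl, gapp, ael_il]
  rcases g1 w <;> rfl

theorem pl_gapp_ir (g1 : V U1 → V T1 ⊕ L) (g2 : V U2 → V T2 ⊕ L) (f : V (app T1 T2) → L) (w) :
    pl f (gapp g1 g2) (ir w) = pl (fun v => f (ir v)) g2 w := by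
  simp only [pl, gapp, ael_ir]
  rcases g2 w <;> rfl

theorem pw_gapp_il (g1 : V U1 → V T1 ⊕ L) (g2 : V U2 → V T2 ⊕ L) (f : V (app T1 T2) → L) (w) :
    pw (pl f (gapp g1 g2)) (il w) = pw (pl (fun v => f (il v)) g1) w := by
  rw [pw_il]; simp only [pl_gapp_il]

theorem pw_gapp_ir (g1 : V U1 → V T1 ⊕ L) (g2 : V U2 → V T2 ⊕ L) (f : V (app T1 T2) → L) (w) :
    pw (pl f (gapp g1 g2)) (ir w) = pw (pl (fun v => f (ir v)) g2) w := by
  rw [pw_ir]; simp only [pl_gapp_ir]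

theorem QS.letters {g1 : V U1 → V T1 ⊕ L} {e1} (h : QS A U1 T1 g1 e1) {f : V T1 → L}
    (hf : ∀ v, f v ∈ A) : ∀ w, DRT.pl f g1 w ∈ A := by
  have := h.pl (rs_nil (U := T1) (τ := fun v => (nomatch v)) hf (fun v => (nomatch v)))
  exact this.letters

end app

section indep
variable {L : Type} (A : Set L)

/-- uniformity along `R` -/
def Unif {c : F} (j : ℕ) {K : Type} (W T : F) (R : V T → V c → Prop) (ψ : V W → List L → K)
    (ρ : V c → List.Vector L j → K) : Prop :=
  ∃ g e, QS A W T g e ∧ ∀ f : V T → L, (∀ v, f v ∈ A) → ∀ v t, R v t →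
    ∀ x : List.Vector L j, x.1 <+: pw f v → ψ (e v) (pw (pl f g) (e v)) = ρ t x

theorem unif_step {c : F} {a0 : L} (ha0 : a0 ∈ A) [Finite L] (k : ℕ)
    (hc : ∀ (K : Type) [Finite K], ∃ U, ∀ Φ : V U → List L → K, ∃ g e, QS A U c g e ∧
      ∀ f f' : V c → L, (∀ v, f v ∈ A) → (∀ v, f' v ∈ A) → ∀ t,
        Φ (e t) (pw (pl f g) (e t)) = Φ (e t) (pw (pl f' g) (e t))) (j : ℕ) :
    ∀ (K : Type) [Finite K] [Nonempty K], ∃ W, ∀ Φ : V W → List L → K,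
      ∃ ρ, Unif A j W (tw k j c) (Lf k j) Φ ρ := by
  induction j with
  | zero =>
    intro K _ _
    obtain ⟨U, hU⟩ := hc K
    refine ⟨U, fun Φ => ?_⟩
    obtain ⟨g, e, hg, h⟩ := hU Φ
    refine ⟨fun t _ => Φ (e t) (pw (pl (fun _ => a0) g) (e t)), g, e, hg, ?_⟩
    rintro f hf v t rfl x hx
    exact h f _ hf (fun _ => ha0) v
  | succ j ih =>
    intro K _ _
    obtain ⟨W, hW⟩ := ih (L → K)
    have : Fintype L := Fintype.ofFinite L
    have : Finite (V c → List.Vector L j → L → K) := inferInstance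
    have : Fintype (V c → List.Vector L j → L → K) := Fintype.ofFinite _
    have pg := pigeon (R := V c → List.Vector L j → L → K) (Ψ := fun M => V (rep M W) → List L → (L → K))
      (fun M ψ m ρ => Unif A j (rep M W) (rep m (tw k j c)) (LfRep (Lf k j) m) ψ ρ)
      (fun M ψ v => ψ (ir v))
      (fun M ψ ρ => ⟨fun _ => Sum.inr a0, fun v => (nomatch v),
        by
          show RS (Sum.inr '' A) (rep M W) F.nil _ _ _
          exact rs_nil (fun _ => Set.mem_image_of_mem _ ha0) _, fun f hf v => (nomatch v)⟩)
      (fun M ψ => by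
        obtain ⟨ρ, g, e, hg, h⟩ := hW (fun v => ψ (il v))
        refine ⟨ρ, ?_⟩
        rintro m ⟨g', e', hg', h'⟩
        refine ⟨gapp g g', amap e e', hg.gapp hg', ?_⟩
        rintro f hf v t (⟨y, rfl, hR⟩ | ⟨y, rfl, hR⟩) x hx
        · rw [amap_il]
          refine (congrArg _ (pw_gapp_il g g' f (e y))).trans ?_
          exact h _ (fun v => hf _) y t hR x (by
            have := pw_il (X := tw k j c) (Y := rep m (tw k j c)) f y
            exact this ▸ hx)
        · rw [amap_ir]
          refine (congrArg _ (pw_gapp_ir g g' f (e' y))).trans ?_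
          exact h' _ (fun v => hf _) y t hR x (by
            have := pw_ir (X := tw k j c) (Y := rep m (tw k j c)) f y
            exact this ▸ hx))
      (fun M ψ m ρ ⟨g, e, hg, h⟩ => by
        refine ⟨ael (fun _ => Sum.inr a0) g, fun v => ir (e v),
          rs_ir (fun _ => ⟨a0, ha0, rfl⟩) hg, ?_⟩
        intro f hf v t hR x hx
        have : pw (pl f (ael (fun _ : V W => Sum.inr a0) g)) (ir (e v)) = pw (pl f g) (e v) := by
          rw [pw_ir]
          congr 1
          funext w
          simp [pl]
        exact (congrArg _ this).trans (h f hf v t hR x hx))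
      (∑ _k : (V c → List.Vector L j → L → K), k) (fun _ => k)
    refine ⟨cons (rep (∑ _k : (V c → List.Vector L j → L → K), k) W) nil, fun Φ => ?_⟩
    obtain ⟨ρ, g, e, hg, h⟩ := pg (fun v l' l => Φ (dn v) (l :: l')) _root_.le_rfl
    refine ⟨fun t x => ρ t x.tail x.head, glue (Sum.inl root) (fun w => Sum.map dn id (g w)),
      consMap e, ?_, ?_⟩
    · refine rs_cons ?_ rfl
      refine (RS.map (B := Sum.inr '' A) hg (Sum.map dn id) ?_).mono (Set.subset_insert _ _)
      rintro _ ⟨a, ha, rfl⟩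
      exact ⟨a, ha, rfl⟩
    · rintro f hf v t ⟨y, rfl, hR⟩ ⟨x, hxl⟩ hx
      rcases x with _ | ⟨l, x⟩
      · simp at hxl
      · have hx' : (l :: x) <+: f root :: pw (fun w => f (dn w)) y := by
          have := pw_dn f y
          rw [← this]; exact hx
        rw [List.cons_prefix_cons] at hx'
        have e1 := congrFun (h (fun w => f (dn w)) (fun v => hf _) y t hR
          ⟨x, by simpa using hxl⟩ hx'.2) l
        have e2 : pw (pl f (glue (Sum.inl root) (fun w => Sum.map dn id (g w)))) (dn (e y)) =
            l :: pw (pl (fun w => f (dn w)) g) (e y) := by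
          rw [pw_dn, hx'.1]
          congr 1
          congr 1
          funext w
          simp only [pl, glue]
          rcases g w <;> rfl
        show Φ (dn (e y)) _ = _
        exact (congrArg _ e2).trans e1

theorem indep_root {U T : F} {g : V U → V T ⊕ L} {e} (h : QS A U T g e) (t : V T)
    (ht : ∀ v, le v t → v = t) (f f' : V T → L) : pw (pl f g) (e t) = pw (pl f' g) (e t) := by
  apply pw_congr
  intro u hu hn
  rcases h.low u with ⟨a, ha, hh⟩ | ⟨v, hv, hw⟩
  · simp only [pl, ← hh]; rfl
  · exfalso
    have h1 := ht v ((h.mor.le_iff _ _).1 (le_trans hw hu))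
    subst h1
    exact hn (le_antisymm hu hw)

theorem indep [Finite L] (hA : A.Nonempty) (T : F) : ∀ (K : Type) [Finite K], ∃ U,
    ∀ Φ : V U → List L → K, ∃ g e, QS A U T g e ∧
      ∀ f f' : V T → L, (∀ v, f v ∈ A) → (∀ v, f' v ∈ A) → ∀ t,
        Φ (e t) (pw (pl f g) (e t)) = Φ (e t) (pw (pl f' g) (e t)) := by
  obtain ⟨a0, ha0⟩ := hA
  induction T with
  | nil =>
    intro K _
    exact ⟨nil, fun Φ => ⟨fun v => (nomatch v), fun v => (nomatch v), qs_nil _ _,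
      fun _ _ _ _ t => (nomatch t)⟩⟩
  | cons c r hc hr =>
    intro K _
    have hC : ∃ U, ∀ Φ : V U → List L → K, ∃ g e, QS A U (cons c nil) g e ∧
      ∀ f f' : V (cons c nil) → L, (∀ v, f v ∈ A) → (∀ v, f' v ∈ A) → ∀ t,
        Φ (e t) (pw (pl f g) (e t)) = Φ (e t) (pw (pl f' g) (e t)) := by
      by_cases hK : Nonempty K
      swap
      · exact ⟨cons nil nil, fun Φ => absurd ⟨Φ root []⟩ hK⟩
      obtain ⟨n, hn⟩ := hj L A (V c → K)
      obtain ⟨W, hW⟩ := unif_step A ha0 (nr c + 1) hc n K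
      refine ⟨W, fun Φ => ?_⟩
      obtain ⟨ρ, g1, e1, hg1, h1⟩ := hW Φ
      classical
      obtain ⟨w, hwn, hnw, hwA, hw⟩ := hn (fun l t => if h : l.length = n then ρ t ⟨l, h⟩ else
        Classical.arbitrary K)
      subst hwn
      have : ∃ g2 e2, QS A (tw (nr c + 1) w.length c) (cons c nil) g2 e2 ∧
          ∀ t, Lf (nr c + 1) w.length (e2 (dn t)) t ∧
          (w.map (fun x => x.elim (Sum.inl root : V (cons c nil) ⊕ L) Sum.inr)) <+: pw g2 (e2 (dn t)) := by
        have := tw_line (B := (Sum.inr '' A : Set (V (cons c nil) ⊕ L)))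
          (b := Sum.inr a0) ⟨a0, ha0, rfl⟩ Sum.inl (w.map (fun x => x.elim (Sum.inl root) Sum.inr))
          (by
            intro a ha
            obtain ⟨x, hx, rfl⟩ := List.mem_map.1 ha
            rcases x with _ | x
            · exact Or.inr rfl
            · exact Or.inl ⟨x, hwA x hx, rfl⟩)
          (List.mem_map.2 ⟨none, hnw, rfl⟩)
        rw [List.length_map] at this
        exact this
      obtain ⟨g2, e2, hg2, h2⟩ := this
      have hg := hg2.cm hg1
      refine ⟨_, _, hg, ?_⟩
      intro f f' hf hf' t
      rcases t with _ | t | ⟨⟨⟩⟩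
      · rw [indep_root A hg root _ f f']
        rintro (_ | v | ⟨⟨⟩⟩) hv
        · rfl
        · simp at hv
      · have key : ∀ f : V (cons c nil) → L, (∀ v, f v ∈ A) →
            Φ (e1 (e2 (dn t))) (pw (pl f (cm g2 g1)) (e1 (e2 (dn t)))) =
              ρ t ⟨w.map (fun x => x.getD (f root)), by simp⟩ := by
          intro f hf
          rw [pl_cm]
          apply h1 _ (hg2.letters hf) _ _ (h2 t).1
          have := (h2 t).2.map (Sum.elim f id)
          rw [List.map_map, ← pw_map] at this
          have h3 : (Sum.elim f id ∘ fun x : Option L => x.elim (Sum.inl root : V (cons c nil) ⊕ L) Sum.inr)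
              = fun x => x.getD (f root) := by
            funext x
            rcases x <;> rfl
          rw [h3] at this
          exact this
        rw [key f hf, key f' hf']
        have := congrFun (hw (f root) (hf _) (f' root) (hf' _)) t
        simpa using this
    obtain ⟨U1, hU1⟩ := hC
    obtain ⟨U2, hU2⟩ := hr K
    refine ⟨app U1 U2, fun Φ => ?_⟩
    obtain ⟨g1, e1, hg1, h1⟩ := hU1 (fun v => Φ (il v))
    obtain ⟨g2, e2, hg2, h2⟩ := hU2 (fun v => Φ (ir v))
    refine ⟨gapp (T1 := cons c nil) g1 g2, amap (T := cons c nil) e1 e2, hg1.gapp hg2, ?_⟩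
    intro f f' hf hf' t
    rcases app_cases (X := cons c nil) (Y := r) t with ⟨t, rfl⟩ | ⟨t, rfl⟩
    · rw [amap_il]
      have := h1 (fun v => f (il (X := cons c nil) (Y := r) v))
        (fun v => f' (il (X := cons c nil) (Y := r) v)) (fun v => hf _) (fun v => hf' _) t
      rw [← pw_gapp_il g1 g2 f, ← pw_gapp_il g1 g2 f'] at this
      exact this
    · rw [amap_ir]
      have := h2 (fun v => f (ir (X := cons c nil) (Y := r) v))
        (fun v => f' (ir (X := cons c nil) (Y := r) v)) (fun v => hf _) (fun v => hf' _) t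
      rw [← pw_gapp_ir g1 g2 f, ← pw_gapp_ir g1 g2 f'] at this
      exact this

end indep


theorem P_cons (d q : F) (hd : P d) (hq : P q) : P (cons d q) := by
  classical
  intro L _ A hA σ T K _
  obtain ⟨T3, hT3⟩ := vert K T
  obtain ⟨T2, hT2⟩ := indep A hA T3 K
  obtain ⟨U, hU⟩ := first_root d hd T2 q hq L A hA σ K
  obtain ⟨a0, ha0⟩ := hA
  refine ⟨U, fun χ => ?_⟩
  obtain ⟨g1, e1, hg1, hc1⟩ := hU χ
  let Φ : V T2 → List L → K := fun u w =>
    if h : ∃ f, cls1 A T2 σ f (u, w) then χ (pl h.choose g1) else χ (fun _ => a0)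
  have hΦ : ∀ f u w, cls1 A T2 σ f (u, w) → χ (pl f g1) = Φ u w := by
    intro f u w hf
    have hex : ∃ f, cls1 A T2 σ f (u, w) := ⟨f, hf⟩
    simp only [Φ, dif_pos hex]
    exact hc1 _ _ _ hf hex.choose_spec
  obtain ⟨g2, e2, hg2, h2⟩ := hT2 Φ
  obtain ⟨e3, he3, h3⟩ := hT3 (fun t => Φ (e2 t) (pw (pl (fun _ => a0) g2) (e2 t)))
  obtain ⟨g3, hg3⟩ := rs_of_mor (A := (Sum.inr '' A : Set (V T ⊕ L))) (τ := Sum.inl) he3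
    (Set.mem_image_of_mem _ ha0)
  have hg3 : QS A T3 T g3 e3 := hg3
  refine ⟨cm g3 (cm g2 g1), _, hg3.cm (hg2.cm hg1), ?_⟩
  have key : ∀ f e, RS A T (cons d q) σ f e → χ (pl f (cm g3 (cm g2 g1))) =
      Φ (e2 (e3 (e root))) (pw (pl (fun _ => a0) g2) (e2 (e3 (e root)))) := by
    intro f e he
    have a3 := hg3.pl he
    have a2 := hg2.pl a3
    rw [pl_cm, pl_cm, hΦ (pl (pl f g3) g2) (e2 (e3 (e root))) (pw (pl (pl f g3) g2) (e2 (e3 (e root)))) ⟨_, a2, rfl, rfl⟩]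
    have hb : pw (pl (pl f g3) g2) (e2 (e3 (e root))) =
        pw (pl (fun t => if pl f g3 t ∈ A then pl f g3 t else a0) g2) (e2 (e3 (e root))) := by
      apply pw_congr
      intro x hx hn
      rcases hg2.low x with ⟨a, ha, hh⟩ | ⟨v, hv, hw⟩
      · rw [pl, pl, ← hh]; rfl
      · rw [pl, pl, hv]
        simp only [Sum.elim_inl]
        rw [if_pos]
        rcases a3.low v with h | ⟨s, hs, hs'⟩
        · exact h
        · exfalso
          have l1 : le v (e3 (e root)) := (hg2.mor.le_iff _ _).1 (le_trans hw hx)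
          have l2 : le s root := (a3.mor.le_iff _ _).1 (le_trans hs' l1)
          rcases s with _ | s | s
          · have : v = e3 (e root) := le_antisymm l1 hs'
            subst this
            exact hn (le_antisymm hx hw)
          · simp at l2
          · simp at l2
    rw [hb]
    apply h2
    · intro v
      split_ifs with h
      · exact h
      · exact ha0
    · exact fun _ => ha0
  rintro f f' _ ⟨e, he⟩ ⟨e', he'⟩
  rw [key f e he, key f' e' he']
  exact h3 _ _

theorem P_all (S : F) : P S := by
  induction S with
  | nil => exact P_nil
  | cons d q hd hq => exact P_cons d q hd hq


/-! ### Transfer to ordered trees -/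

section transfer

/-- strictly left -/
def Left (T : OTree) (v w : T.α) : Prop := ¬ T.le v w ∧ ¬ T.le w v ∧
    ∃ m a b, T.IsMeet v w m ∧ TreeImmSucc T.le m a ∧ T.le a v ∧
      TreeImmSucc T.le m b ∧ T.le b w ∧ T.sOrd m a b

theorem lex_iff (T : OTree) (v w : T.α) : T.lexLE v w ↔ T.le v w ∨ Left T v w := Iff.rfl

theorem wf_dn (T : OTree) : WellFounded (fun a b : T.α => T.le a b ∧ a ≠ b) := by
  have := T.fin
  have h1 : IsTrans T.α (fun a b : T.α => T.le a b ∧ a ≠ b) := ⟨by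
    rintro a b c ⟨h1, h2⟩ ⟨h3, h4⟩
    refine ⟨T.le_trans _ _ _ h1 h3, ?_⟩
    rintro rfl
    exact h2 (T.le_antisymm _ _ h1 h3)⟩
  have h2 : Std.Irrefl (fun a b : T.α => T.le a b ∧ a ≠ b) := ⟨fun a h => h.2 rfl⟩
  exact Finite.wellFounded_of_trans_of_irrefl _

theorem wf_up (T : OTree) : WellFounded (fun a b : T.α => T.le b a ∧ a ≠ b) := by
  have := T.fin
  have h1 : IsTrans T.α (fun a b : T.α => T.le b a ∧ a ≠ b) := ⟨by
    rintro a b c ⟨h1, h2⟩ ⟨h3, h4⟩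
    refine ⟨T.le_trans _ _ _ h3 h1, ?_⟩
    rintro rfl
    exact h2 (T.le_antisymm _ _ h3 h1)⟩
  have h2 : Std.Irrefl (fun a b : T.α => T.le b a ∧ a ≠ b) := ⟨fun a h => h.2 rfl⟩
  exact Finite.wellFounded_of_trans_of_irrefl _

theorem meet_ex (T : OTree) (v w : T.α) : ∃ m, T.IsMeet v w m := by
  obtain ⟨m, hm, hmin⟩ := (wf_up T).has_min {u | T.le u v ∧ T.le u w} ⟨T.root, T.root_le _, T.root_le _⟩
  refine ⟨m, hm.1, hm.2, fun u h1 h2 => ?_⟩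
  rcases T.pred_linear v u m h1 hm.1 with h | h
  · exact h
  · by_cases hu : u = m
    · subst hu; exact T.le_refl _
    · exact absurd ⟨h, hu⟩ (hmin u ⟨h1, h2⟩)

theorem imm_ex (T : OTree) (v w : T.α) (h : T.le v w) (hn : v ≠ w) :
    ∃ a, TreeImmSucc T.le v a ∧ T.le a w := by
  obtain ⟨m, hm, hmin⟩ := (wf_dn T).has_min {u | T.le v u ∧ v ≠ u ∧ T.le u w} ⟨w, h, hn, T.le_refl _⟩
  refine ⟨m, ⟨hm.1, hm.2.1, fun u h1 h2 => ?_⟩, hm.2.2⟩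
  by_contra hu
  push Not at hu
  exact hmin u ⟨h1, hu.1.symm, T.le_trans _ _ _ h2 hm.2.2⟩ ⟨h2, hu.2⟩

theorem imm_le (T : OTree) {v a b : T.α} (ha : TreeImmSucc T.le v a) (hb : TreeImmSucc T.le v b)
    (h : T.le a b) : a = b := by
  rcases hb.2.2 a ha.1 h with h | h
  · exact absurd h.symm ha.2.1
  · exact h

theorem imm_below (T : OTree) {v a b x : T.α} (ha : TreeImmSucc T.le v a) (hb : TreeImmSucc T.le v b)
    (h1 : T.le a x) (h2 : T.le b x) : a = b := by
  rcases T.pred_linear x a b h1 h2 with h | h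
  · exact imm_le T ha hb h
  · exact (imm_le T hb ha h).symm

theorem meet_of_imm (T : OTree) {v a b x y : T.α} (ha : TreeImmSucc T.le v a)
    (hb : TreeImmSucc T.le v b) (hab : a ≠ b) (h1 : T.le a x) (h2 : T.le b y) :
    ¬ T.le x y ∧ ¬ T.le y x ∧ T.IsMeet x y v := by
  refine ⟨fun h => hab (imm_below T ha hb (T.le_trans _ _ _ h1 h) h2),
    fun h => hab (imm_below T ha hb h1 (T.le_trans _ _ _ h2 h)),
    T.le_trans _ _ _ ha.1 h1, T.le_trans _ _ _ hb.1 h2, fun u hu1 hu2 => ?_⟩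
  have hau : ¬ T.le a u := fun h => hab (imm_below T ha hb (T.le_trans _ _ _ h hu2) h2)
  have hua : T.le u a := (T.pred_linear x u a hu1 h1).resolve_right hau
  rcases T.pred_linear a u v hua ha.1 with h | h
  · exact h
  · rcases ha.2.2 u h hua with h' | h'
    · subst h'; exact T.le_refl _
    · subst h'; exact absurd (T.le_refl _) hau

theorem left_asymm (T : OTree) {v w : T.α} (h : Left T v w) : ¬ Left T w v := by
  rintro ⟨_, _, m', a', b', hm', ha', hav', hb', hbw', hs'⟩
  obtain ⟨h1, h2, m, a, b, hm, ha, hav, hb, hbw, hs⟩ := h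
  have : m = m' := T.le_antisymm _ _ (hm'.2.2 _ hm.2.1 hm.1) (hm.2.2 _ hm'.2.1 hm'.1)
  subst this
  have e1 := imm_below T ha hb' hav hbw'
  have e2 := imm_below T hb ha' hbw hav'
  subst e1; subst e2
  have := T.sOrd_antisymm _ _ _ hs hs'
  subst this
  exact ha.2.1 (T.le_antisymm _ _ ha.1 (hm.2.2 _ hav hbw))

theorem incomp (T : OTree) {v w : T.α} (h1 : ¬ T.le v w) (h2 : ¬ T.le w v) :
    ∃ m a b, T.IsMeet v w m ∧ TreeImmSucc T.le m a ∧ T.le a v ∧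
      TreeImmSucc T.le m b ∧ T.le b w ∧ a ≠ b := by
  obtain ⟨m, hm⟩ := meet_ex T v w
  obtain ⟨a, ha, hav⟩ := imm_ex T m v hm.1 (by rintro rfl; exact h1 hm.2.1)
  obtain ⟨b, hb, hbw⟩ := imm_ex T m w hm.2.1 (by rintro rfl; exact h2 hm.1)
  refine ⟨m, a, b, hm, ha, hav, hb, hbw, ?_⟩
  rintro rfl
  exact ha.2.1 (T.le_antisymm _ _ ha.1 (hm.2.2 _ hav hbw))

/-- representation of an ordered tree by a forest -/
structure Repr (T : OTree) (c : F) (φ : V (cons c nil) → T.α) : Prop where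
  bij : Function.Bijective φ
  le_iff : ∀ v w, T.le (φ v) (φ w) ↔ le v w
  lt_left : ∀ v w, lt v w → Left T (φ v) (φ w)

theorem root_le {c : F} (v : V (cons c nil)) : le root v := by
  rcases v with _ | v | ⟨⟨⟩⟩ <;> simp

theorem Repr.root {T : OTree} {c : F} {φ} (h : Repr T c φ) : φ root = T.root := by
  obtain ⟨v, hv⟩ := h.bij.2 T.root
  refine T.le_antisymm _ _ ?_ (T.root_le _)
  rw [← hv, h.le_iff]
  exact root_le v

theorem Repr.left_iff {T : OTree} {c : F} {φ} (h : Repr T c φ) (v w) :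
    Left T (φ v) (φ w) ↔ lt v w := by
  refine ⟨fun hl => ?_, h.lt_left v w⟩
  rcases lt_total v w with h1 | h1 | h1 | h1
  · exact absurd ((h.le_iff _ _).2 h1) hl.1
  · exact absurd ((h.le_iff _ _).2 h1) hl.2.1
  · exact h1
  · exact absurd hl (left_asymm T (h.lt_left _ _ h1))

/-- the ordered tree of a forest -/
def ofF (c : F) : OTree where
  α := V (cons c nil)
  fin := inferInstance
  le := le
  le_refl := le_refl
  le_antisymm := fun _ _ => le_antisymm
  le_trans := fun _ _ _ => le_trans
  root := root
  root_le := root_le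
  pred_linear := fun _ _ _ => le_linear
  sOrd := fun v a b => TreeImmSucc le v a ∧ TreeImmSucc le v b ∧ (a = b ∨ lt a b)
  sOrd_dom := fun _ _ _ h => ⟨h.1, h.2.1⟩
  sOrd_refl := fun _ _ h => ⟨h, h, Or.inl rfl⟩
  sOrd_antisymm := by
    rintro v a b ⟨_, _, h⟩ ⟨_, _, h'⟩
    rcases h with h | h
    · exact h
    · rcases h' with h' | h'
      · exact h'.symm
      · exact absurd h' (lt_asymm h)
  sOrd_trans := by
    rintro v a b c ⟨h1, _, h⟩ ⟨_, h2, h'⟩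
    refine ⟨h1, h2, ?_⟩
    rcases h with rfl | h
    · exact h'
    · rcases h' with rfl | h'
      · exact Or.inr h
      · exact Or.inr (lt_trans h h')
  sOrd_total := by
    intro v a b ha hb
    rcases lt_total a b with h | h | h | h
    · rcases hb.2.2 a ha.1 h with h | h
      · exact absurd h.symm ha.2.1
      · exact Or.inl ⟨ha, hb, Or.inl h⟩
    · rcases ha.2.2 b hb.1 h with h | h
      · exact absurd h.symm hb.2.1
      · exact Or.inr ⟨hb, ha, Or.inl h⟩
    · exact Or.inl ⟨ha, hb, Or.inr h⟩
    · exact Or.inr ⟨hb, ha, Or.inr h⟩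

theorem repr_ofF (c : F) : Repr (ofF c) c (fun v => v) := by
  refine ⟨Function.bijective_id, fun v w => Iff.rfl, fun v w h => ?_⟩
  have h1 : ¬ (ofF c).le v w := (lt_not_le h).1
  have h2 : ¬ (ofF c).le w v := (lt_not_le h).2
  obtain ⟨m, a, b, hm, ha, hav, hb, hbw, hab⟩ := incomp _ h1 h2
  refine ⟨h1, h2, m, a, b, hm, ha, hav, hb, hbw, ?_⟩
  rcases (ofF c).sOrd_total m a b ha hb with h' | ⟨_, _, h' | h'⟩
  · exact h'
  · exact absurd h'.symm hab
  · exact absurd (lt_mono h' hbw hav) (lt_asymm h)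

theorem min_ex (T : OTree) (v : T.α) (s : Finset T.α) (hs : s.Nonempty)
    (h : ∀ a ∈ s, TreeImmSucc T.le v a) : ∃ a ∈ s, ∀ b ∈ s, T.sOrd v a b := by
  induction hs using Finset.Nonempty.cons_induction with
  | singleton a =>
    exact ⟨a, by simp, fun b hb => by
      have : b = a := by simpa using hb
      subst this
      exact T.sOrd_refl _ _ (h _ (by simp))⟩
  | cons a s ha hs ih =>
    obtain ⟨m, hm, hmin⟩ := ih (fun b hb => h b (by simp [hb]))
    have hma := h a (by simp)
    have hmm := h m (by simp [hm])
    rcases T.sOrd_total v a m hma hmm with h' | h'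
    · refine ⟨a, by simp, fun b hb => ?_⟩
      rcases Finset.mem_cons.1 hb with rfl | hb
      · exact T.sOrd_refl _ _ hma
      · exact T.sOrd_trans _ _ _ _ h' (hmin b hb)
    · refine ⟨m, by simp [hm], fun b hb => ?_⟩
      rcases Finset.mem_cons.1 hb with rfl | hb
      · exact h'
      · exact hmin b hb

theorem repr_forest (T : OTree) (v : T.α) (ih : ∀ a, TreeImmSucc T.le v a →
    ∃ c, ∃ φ : V (cons c nil) → T.α, (∀ w, T.le a w ↔ ∃ x, φ x = w) ∧
      (∀ x y, T.le (φ x) (φ y) ↔ le x y) ∧ ∀ x y, lt x y → Left T (φ x) (φ y)) (s : Finset T.α) :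
    (∀ a ∈ s, TreeImmSucc T.le v a) →
    ∃ c, ∃ φ : V c → T.α, (∀ w, (∃ a ∈ s, T.le a w) ↔ ∃ x, φ x = w) ∧
      (∀ x y, T.le (φ x) (φ y) ↔ le x y) ∧ ∀ x y, lt x y → Left T (φ x) (φ y) := by
  classical
  induction s using Finset.strongInduction with
  | H s IH =>
    intro hs
    rcases s.eq_empty_or_nonempty with rfl | hne
    · exact ⟨nil, fun v => (nomatch v), by simp, fun v => (nomatch v), fun v => (nomatch v)⟩
    · obtain ⟨a, ha, hmin⟩ := min_ex T v s hne hs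
      obtain ⟨c, φ, h1, h2, h3⟩ := ih a (hs a ha)
      obtain ⟨r, θ, k1, k2, k3⟩ := IH (s.erase a) (Finset.erase_ssubset ha)
        (fun b hb => hs b (Finset.mem_of_mem_erase hb))
      have cross : ∀ x y, Left T (φ x) (θ y) := by
        intro x y
        obtain ⟨b, hb, hby⟩ := (k1 (θ y)).2 ⟨y, rfl⟩
        have hax := (h1 (φ x)).2 ⟨x, rfl⟩
        have hbs := Finset.mem_of_mem_erase hb
        obtain ⟨m1, m2, m3⟩ := meet_of_imm T (hs a ha) (hs b hbs) (Finset.ne_of_mem_erase hb).symm hax hby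
        exact ⟨m1, m2, v, a, b, m3, hs a ha, hax, hs b hbs, hby, hmin b hbs⟩
      refine ⟨app (cons c nil) r, ael φ θ, ?_, ?_, ?_⟩
      · intro w
        constructor
        · rintro ⟨b, hb, hbw⟩
          by_cases hba : b = a
          · subst hba
            obtain ⟨x, hx⟩ := (h1 w).1 hbw
            exact ⟨il x, by rw [ael_il, hx]⟩
          · obtain ⟨x, hx⟩ := (k1 w).1 ⟨b, Finset.mem_erase.2 ⟨hba, hb⟩, hbw⟩
            exact ⟨ir x, by rw [ael_ir, hx]⟩
        · rintro ⟨x, rfl⟩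
          rcases app_cases x with ⟨x, rfl⟩ | ⟨x, rfl⟩
          · rw [ael_il]
            exact ⟨a, ha, (h1 _).2 ⟨x, rfl⟩⟩
          · rw [ael_ir]
            obtain ⟨b, hb, h⟩ := (k1 _).2 ⟨x, rfl⟩
            exact ⟨b, Finset.mem_of_mem_erase hb, h⟩
      · intro x y
        rcases app_cases x with ⟨x, rfl⟩ | ⟨x, rfl⟩ <;> rcases app_cases y with ⟨y, rfl⟩ | ⟨y, rfl⟩
        · rw [ael_il, ael_il, le_ll, h2]
        · rw [ael_il, ael_ir]
          exact iff_of_false (cross x y).1 (le_lr _ _)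
        · rw [ael_il, ael_ir]
          exact iff_of_false (cross y x).2.1 (le_rl _ _)
        · rw [ael_ir, ael_ir, le_r2, k2]
      · intro x y
        rcases app_cases x with ⟨x, rfl⟩ | ⟨x, rfl⟩ <;> rcases app_cases y with ⟨y, rfl⟩ | ⟨y, rfl⟩
        · rw [ael_il, ael_il, lt_ll]; exact h3 x y
        · rw [ael_il, ael_ir]
          exact fun _ => cross x y
        · exact fun h => absurd h (lt_rl _ _)
        · rw [ael_ir, ael_ir, lt_r2]; exact k3 x y

theorem repr_tree (T : OTree) (v : T.α) :
    ∃ c, ∃ φ : V (cons c nil) → T.α, (∀ w, T.le v w ↔ ∃ x, φ x = w) ∧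
      (∀ x y, T.le (φ x) (φ y) ↔ le x y) ∧ ∀ x y, lt x y → Left T (φ x) (φ y) := by
  classical
  have := T.fin
  have : Fintype T.α := Fintype.ofFinite _
  induction v using (wf_up T).induction with
  | _ v ih =>
    obtain ⟨c, φ, h1, h2, h3⟩ := repr_forest T v (fun a ha => ih a ⟨ha.1, ha.2.1.symm⟩)
      (Finset.univ.filter (fun a => TreeImmSucc T.le v a)) (by simp)
    have hv : ∀ x, T.le v (φ x) ∧ ¬ T.le (φ x) v := by
      intro x
      obtain ⟨a, ha, hax⟩ := (h1 _).2 ⟨x, rfl⟩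
      have ha' : TreeImmSucc T.le v a := by simpa using ha
      exact ⟨T.le_trans _ _ _ ha'.1 hax, fun h =>
        ha'.2.1 (T.le_antisymm _ _ ha'.1 (T.le_trans _ _ _ hax h))⟩
    refine ⟨c, glue v φ, ?_, ?_, ?_⟩
    · intro w
      constructor
      · intro h
        by_cases hw : v = w
        · exact ⟨root, hw⟩
        · obtain ⟨a, ha, haw⟩ := imm_ex T v w h hw
          obtain ⟨x, hx⟩ := (h1 w).1 ⟨a, by simpa using ha, haw⟩
          exact ⟨dn x, hx⟩
      · rintro ⟨x, rfl⟩
        rcases x with _ | x | ⟨⟨⟩⟩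
        · exact T.le_refl _
        · exact (hv x).1
    · rintro (_ | x | ⟨⟨⟩⟩) (_ | y | ⟨⟨⟩⟩)
      · exact iff_of_true (T.le_refl _) (by simp)
      · exact iff_of_true (hv y).1 (by simp)
      · exact iff_of_false (hv x).2 (by simp)
      · rw [le_dd]; exact h2 x y
    · rintro (_ | x | ⟨⟨⟩⟩) (_ | y | ⟨⟨⟩⟩)
      · simp
      · simp
      · simp
      · rw [lt_dd]; exact h3 x y

theorem repr_ex (T : OTree) : ∃ c φ, Repr T c φ := by
  obtain ⟨c, φ, h1, h2, h3⟩ := repr_tree T T.root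
  refine ⟨c, φ, ⟨⟨?_, ?_⟩, h2, h3⟩⟩
  · intro x y hxy
    exact le_antisymm ((h2 _ _).1 (by rw [hxy]; exact T.le_refl _))
      ((h2 _ _).1 (by rw [hxy]; exact T.le_refl _))
  · exact fun w => (h1 w).1 (T.root_le w)

theorem rigid_iff {T S : OTree} {c d : F} {φ ψ} (hT : Repr T c φ) (hS : Repr S d ψ)
    (f : T.α → S.α) (f' : V (cons c nil) → V (cons d nil)) (hf : ∀ v, f (φ v) = ψ (f' v)) :
    OTree.IsRigidSurjection T S f ↔
      ∃ e, RS ∅ (cons c nil) (cons d nil) (fun v => v) f' e ∧ e root = root := by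
  constructor
  · rintro ⟨e, ⟨hm, hl, hr⟩, h1, h2⟩
    choose e' he' using fun v => hT.bij.2 (e (ψ v))
    have inj : Function.Injective e := Function.LeftInverse.injective h2
    have lei : ∀ v w, T.le (e v) (e w) ↔ S.le v w := by
      intro v w
      constructor
      · intro h
        obtain ⟨m, hm'⟩ := meet_ex S v w
        have h3 := hm _ _ _ hm'
        have h4 := inj (T.le_antisymm _ _ h3.1 (h3.2.2 _ (T.le_refl _) h))
        rw [← h4]; exact hm'.2.1
      · intro h
        exact (hm v w v ⟨S.le_refl _, h, fun u hu _ => hu⟩).2.1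
    refine ⟨e', ⟨⟨?_, ?_, ?_⟩, ?_, ?_⟩, ?_⟩
    · intro v w
      rw [← hT.le_iff, he', he', lei, hS.le_iff]
    · intro v w h
      rw [← hT.left_iff, he', he']
      have hl' := (hS.left_iff _ _).2 h
      rcases hl _ _ (Or.inr hl') with h' | h'
      · exact absurd ((lei _ _).1 h') hl'.1
      · exact h'
    · intro v w u hu1 hu2
      rw [← hT.le_iff, he'] at hu1 hu2
      obtain ⟨m, hm'⟩ := meet_ex S (ψ v) (ψ w)
      obtain ⟨m', rfl⟩ := hS.bij.2 m
      refine ⟨m', (hS.le_iff _ _).1 hm'.1, (hS.le_iff _ _).1 hm'.2.1, ?_⟩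
      rw [← hT.le_iff, he']
      exact (hm _ _ _ hm').2.2 _ hu1 hu2
    · intro v
      apply hS.bij.1
      rw [← hf, he', h2]
    · intro w
      refine Or.inr ⟨f' w, rfl, ?_⟩
      rw [← hT.le_iff, he', ← hf]
      exact h1 _
    · apply hT.bij.1
      rw [he', hS.root, hr, hT.root]
  · rintro ⟨e', he, hr⟩
    choose ι hι using hS.bij.2
    have hι' : ∀ v, ι (ψ v) = v := fun v => hS.bij.1 (hι _)
    refine ⟨fun v => φ (e' (ι v)), ⟨?_, ?_, ?_⟩, ?_, ?_⟩
    · intro v w m hm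
      obtain ⟨v, rfl⟩ := hS.bij.2 v
      obtain ⟨w, rfl⟩ := hS.bij.2 w
      obtain ⟨m, rfl⟩ := hS.bij.2 m
      simp only [hι']
      refine ⟨?_, ?_, ?_⟩
      · rw [hT.le_iff, he.mor.le_iff, ← hS.le_iff]; exact hm.1
      · rw [hT.le_iff, he.mor.le_iff, ← hS.le_iff]; exact hm.2.1
      · intro u h1 h2
        obtain ⟨u, rfl⟩ := hT.bij.2 u
        rw [hT.le_iff] at h1 h2 ⊢
        obtain ⟨m', a, b, h⟩ := he.mor.meet _ _ _ h1 h2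
        refine le_trans h ?_
        rw [he.mor.le_iff, ← hS.le_iff]
        exact hm.2.2 _ ((hS.le_iff _ _).2 a) ((hS.le_iff _ _).2 b)
    · intro v w h
      obtain ⟨v, rfl⟩ := hS.bij.2 v
      obtain ⟨w, rfl⟩ := hS.bij.2 w
      simp only [hι']
      rcases h with h | h
      · left
        rw [hT.le_iff, he.mor.le_iff, ← hS.le_iff]; exact h
      · right
        have h : Left S (ψ v) (ψ w) := h
        rw [hS.left_iff] at h
        exact hT.lt_left _ _ (he.mor.lt _ _ h)
    · show φ (e' (ι S.root)) = _
      rw [← hS.root, hι', hr, hT.root]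
    · intro w
      obtain ⟨w, rfl⟩ := hT.bij.2 w
      simp only [hf, hι']
      rw [hT.le_iff]
      rcases he.low w with h | ⟨v, hv, h⟩
      · exact absurd h (by simp)
      · rw [hv]; exact h
    · intro v
      obtain ⟨v, rfl⟩ := hS.bij.2 v
      simp only [hf, hι', he.sec]

theorem main (c : ℕ) (hc : 0 < c) (S T : OTree) :
    ∃ U : OTree, ∀ χ : (U.α → S.α) → Fin c,
      ∃ g₀ : U.α → T.α, OTree.IsRigidSurjection U T g₀ ∧
        ∃ color : Fin c, ∀ f : T.α → S.α, OTree.IsRigidSurjection T S f → χ (f ∘ g₀) = color := by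
  obtain ⟨s, ψ, hS⟩ := repr_ex S
  obtain ⟨t, φ, hT⟩ := repr_ex T
  obtain ⟨U, hU⟩ := P_all s (V (cons s nil)) {root} ⟨root, rfl⟩ dn t (Fin c)
  refine ⟨ofF U, fun χ => ?_⟩
  obtain ⟨g, e, hg, hcol⟩ := hU (fun h => χ (fun u => ψ (glue root h u)))
  have hg1 : RS (insert root ∅) U t (fun v => (dn v : V (cons t nil)))
      (fun w => Sum.elim dn (fun _ => root) (g w)) e := by
    refine RS.map hg (Sum.elim dn (fun _ => root)) ?_
    rintro _ ⟨a, _, rfl⟩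
    exact Or.inl rfl
  have hg2 := rs_cons (τ := fun v => v) (g := glue root (fun w => Sum.elim dn (fun _ => root) (g w)))
    hg1 rfl
  refine ⟨fun u => φ (glue root (fun w => Sum.elim dn (fun _ => root) (g w)) u), ?_, ?_⟩
  · exact (rigid_iff (repr_ofF U) hT _ _ (fun v => rfl)).2 ⟨_, hg2, rfl⟩
  · have key : ∀ f, OTree.IsRigidSurjection T S f → ∃ h : V t → V (cons s nil),
        cls {root} t s dn h () ∧
        f ∘ (fun u : (ofF U).α => φ (glue root (fun w => Sum.elim dn (fun _ => root) (g w)) u)) =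
          (fun u => ψ (glue root (pl h g) u)) := by
      intro f hf
      choose f' hf' using fun v => hS.bij.2 (f (φ v))
      obtain ⟨e', he', hr⟩ := (rigid_iff hT hS f f' (fun v => (hf' v).symm)).1 hf
      rcases he'.split with ⟨_, b1, e1, _, b2, _⟩ | ⟨u, hu, _⟩ | ⟨u, hu, _⟩
      · refine ⟨fun v => f' (dn v), ⟨e1, b2.mono (by simp)⟩, ?_⟩
        funext u
        show f (φ _) = _
        rw [← hf']
        congr 1
        change V (cons U nil) at u
        rcases u with _ | u | ⟨⟨⟩⟩
        · exact b1
        · simp only [glue, pl]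
          rcases hg.low u with ⟨a, ha, hh⟩ | ⟨v, hv, _⟩
          · have ha : a = root := ha
            subst ha
            rw [← hh]
            exact b1
          · rw [hv]; rfl
      · rw [hr] at hu; simp at hu
      · rw [hr] at hu; simp at hu
    by_cases hex : ∃ f, OTree.IsRigidSurjection T S f
    · obtain ⟨f0, hf0⟩ := hex
      obtain ⟨h0, c0, k0⟩ := key f0 hf0
      refine ⟨χ (fun u => ψ (glue root (pl h0 g) u)), fun f hf => ?_⟩
      obtain ⟨h, c1, k1⟩ := key f hf
      rw [k1]
      exact hcol h h0 () c1 c0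
    · exact ⟨⟨0, hc⟩, fun f hf => absurd ⟨f, hf⟩ hex⟩

end transfer

end DRT

open OTree

/-- **Solecki's dual Ramsey theorem for trees.** For every number of colors `c ≥ 1` and all
ordered trees `S, T` there is an ordered tree `U` such that for every coloring with `c` colors
of the rigid surjections from `U` to `S` there is a rigid surjection `g₀ : U → T` such that
`{f ∘ g₀ : f a rigid surjection from T to S}` is monochromatic. -/
theorem dual_ramsey_for_trees (c : ℕ) (hc : 0 < c) (S T : OTree) :
    ∃ U : OTree, ∀ χ : (U.α → S.α) → Fin c,
      ∃ g₀ : U.α → T.α, IsRigidSurjection U T g₀ ∧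
        ∃ color : Fin c, ∀ f : T.α → S.α, IsRigidSurjection T S f → χ (f ∘ g₀) = color := by
  exact DRT.main c hc S T
end

section
/- Let c be a positive integer and let S and T be ordered trees. There exists an ordered tree U such that for every coloring with c colors of the set of all copies of S in U there is an embedding j : T → U such that all copies of S in U of the form j(C), where C is a copy of S in T, receive the same color. -/
open OTree

/-- A *copy* of `S` in `T` is the image of an injective morphism (an embedding) from `S`
to `T`. -/
def OTree.IsCopy (S T : OTree) (C : Set T.α) : Prop :=
  ∃ e : S.α → T.α, IsMorphism S T e ∧ Function.Injective e ∧ Set.range e = C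

namespace Leeb

/-- Ordered forests, coded as binary trees: `node a b` is the forest whose first tree has
a root with forest of children `a`, and whose remaining trees form the forest `b`. -/
inductive F : Type
  | nil : F
  | node : F → F → F

/-- Vertices of a forest. -/
inductive V : F → Type
  | here {a b : F} : V (F.node a b)
  | up {a b : F} : V a → V (F.node a b)
  | right {a b : F} : V b → V (F.node a b)

/-- Embeddings of forests. -/
inductive Emb : F → F → Type
  | nil {G : F} : Emb F.nil G
  | skip {a b a' b' : F} : Emb (F.node a b) b' → Emb (F.node a b) (F.node a' b')
  | root {a b a' b' : F} : Emb a a' → Emb b b' → Emb (F.node a b) (F.node a' b')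
  | deep {a b a' b' : F} : Emb (F.node a F.nil) a' → Emb b b' →
      Emb (F.node a b) (F.node a' b')

namespace Emb

def comp : {A B C : F} → Emb B C → Emb A B → Emb A C
  | _, _, _, _, nil => nil
  | _, _, _, skip g, skip f => skip (comp g (skip f))
  | _, _, _, skip g, root f1 f2 => skip (comp g (root f1 f2))
  | _, _, _, skip g, deep f1 f2 => skip (comp g (deep f1 f2))
  | _, _, _, root _ g2, skip f => skip (comp g2 f)
  | _, _, _, deep _ g2, skip f => skip (comp g2 f)
  | _, _, _, root g1 g2, root f1 f2 => root (comp g1 f1) (comp g2 f2)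
  | _, _, _, deep g1 g2, root f1 f2 => deep (comp g1 (root f1 nil)) (comp g2 f2)
  | _, _, _, root g1 g2, deep f1 f2 => deep (comp g1 f1) (comp g2 f2)
  | _, _, _, deep g1 g2, deep f1 f2 => deep (comp g1 (deep f1 nil)) (comp g2 f2)

theorem eq_nil {G : F} (e : Emb F.nil G) : e = nil := by cases e; rfl

def id : (A : F) → Emb A A
  | F.nil => nil
  | F.node a b => root (id a) (id b)

def toFun : {A B : F} → Emb A B → V A → V B
  | _, _, skip f, v => V.right (toFun f v)
  | _, _, root _ _, V.here => V.here
  | _, _, root f1 _, V.up v => V.up (toFun f1 v)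
  | _, _, root _ f2, V.right v => V.right (toFun f2 v)
  | _, _, deep f1 _, V.here => V.up (toFun f1 V.here)
  | _, _, deep f1 _, V.up v => V.up (toFun f1 (V.up v))
  | _, _, deep _ f2, V.right v => V.right (toFun f2 v)

theorem comp_assoc {A B C D : F} (h : Emb C D) (g : Emb B C) (f : Emb A B) :
    comp (comp h g) f = comp h (comp g f) := by
  induction h generalizing A B with
  | nil => cases g; cases f; rfl
  | skip h ih => cases g <;> cases f <;> simp [comp, ih]
  | root h1 h2 ih1 ih2 => cases g <;> cases f <;> simp [comp, ih1, ih2]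
  | deep h1 h2 ih1 ih2 => cases g <;> cases f <;> simp [comp, ih2, ih1]

theorem toFun_comp {A B C : F} (g : Emb B C) (f : Emb A B) (v : V A) :
    toFun (comp g f) v = toFun g (toFun f v) := by
  induction g generalizing A with
  | nil => cases f; cases v
  | skip g ih => cases f <;> cases v <;> simp [comp, toFun, ih]
  | root g1 g2 ih1 ih2 => cases f <;> cases v <;> simp [comp, toFun, ih1, ih2]
  | deep g1 g2 ih1 ih2 => cases f <;> cases v <;> simp [comp, toFun, ih1, ih2]

instance finite (A B : F) : Finite (Emb A B) := by
  induction B generalizing A with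
  | nil =>
    cases A with
    | nil =>
      have : Subsingleton (Emb F.nil F.nil) := ⟨fun e e' => by rw [eq_nil e, eq_nil e']⟩
      infer_instance
    | node a b => have : IsEmpty (Emb (F.node a b) F.nil) := ⟨fun e => by cases e⟩; infer_instance
  | node a' b' iha ihb =>
    cases A with
    | nil => 
      have : Subsingleton (Emb F.nil (F.node a' b')) := ⟨fun e e' => by rw [eq_nil e, eq_nil e']⟩
      infer_instance
    | node a b =>
      refine Finite.of_surjective (α := Emb (F.node a b) b' ⊕ ((Emb a a' × Emb b b') ⊕
        (Emb (F.node a F.nil) a' × Emb b b')))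
        (fun x => match x with
          | .inl e => skip e
          | .inr (.inl (e, e')) => root e e'
          | .inr (.inr (e, e')) => deep e e') ?_
      intro e
      cases e with
      | skip e => exact ⟨.inl e, rfl⟩
      | root e e' => exact ⟨.inr (.inl (e, e')), rfl⟩
      | deep e e' => exact ⟨.inr (.inr (e, e')), rfl⟩

/-- Combine an embedding of trees with an embedding of the remaining forests. -/
def graft {a b a' b' : F} : Emb (F.node a F.nil) (F.node a' F.nil) → Emb b b' →
    Emb (F.node a b) (F.node a' b')
  | root e _, f => root e f
  | deep e _, f => deep e f

theorem comp_graft_skip {a b a' b' x y : F} (g : Emb (F.node a F.nil) (F.node a' F.nil))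
    (g2 : Emb b b') (e : Emb (F.node x y) b) :
    comp (graft g g2) (skip e) = skip (comp g2 e) := by
  cases g with
  | skip e => cases e
  | root => simp [graft, comp]
  | deep => simp [graft, comp]

theorem comp_graft_graft {a b a' b' x y : F} (g : Emb (F.node a F.nil) (F.node a' F.nil))
    (g2 : Emb b b') (e : Emb (F.node x F.nil) (F.node a F.nil)) (e2 : Emb y b) :
    comp (graft g g2) (graft e e2) = graft (comp g e) (comp g2 e2) := by
  cases g with
  | skip e => cases e
  | root =>
    cases e with
    | skip e => cases e
    | root => simp [graft, comp]
    | deep => simp [graft, comp]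
  | deep =>
    cases e with
    | skip e => cases e
    | root _ e => cases e; simp [graft, comp]
    | deep _ e => cases e; simp [graft, comp]

theorem skip_or_graft {a b a' b' : F} (e : Emb (F.node a b) (F.node a' b')) :
    (∃ f, e = skip f) ∨ ∃ f f2, e = graft f f2 := by
  cases e with
  | skip f => exact .inl ⟨f, rfl⟩
  | root f f2 => exact .inr ⟨root f nil, f2, rfl⟩
  | deep f f2 => exact .inr ⟨deep f nil, f2, rfl⟩

/-- Index of the first tree hit. -/
def idx : {a b G : F} → Emb (F.node a b) G → ℕ
  | _, _, _, skip e => idx e + 1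
  | _, _, _, root _ _ => 0
  | _, _, _, deep _ _ => 0

theorem idx_graft {a b a' b' : F} (g : Emb (F.node a F.nil) (F.node a' F.nil))
    (g2 : Emb b b') : idx (graft g g2) = 0 := by
  cases g with
  | skip e => cases e
  | root => simp [graft, idx]
  | deep => simp [graft, idx]

theorem exists_upper (G H : F) : ∃ K, Nonempty (Emb G K) ∧ Nonempty (Emb H K) := by
  induction G with
  | nil => exact ⟨H, ⟨nil⟩, ⟨id H⟩⟩
  | node a b _ ih =>
    obtain ⟨K, ⟨e⟩, ⟨f⟩⟩ := ih
    refine ⟨F.node a K, ⟨root (id a) e⟩, ?_⟩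
    cases H with
    | nil => exact ⟨nil⟩
    | node x y => exact ⟨skip f⟩

theorem comp_deep {a b c G : F} (j : Emb (F.node a F.nil) G)
    (e : Emb (F.node c F.nil) (F.node a F.nil)) :
    comp (deep j (nil : Emb F.nil b)) e = deep (comp j e) nil := by
  cases e with
  | skip e => cases e
  | root _ e => cases e; simp [comp]
  | deep _ e => cases e; simp [comp]

theorem toFun_deep {a b G : F} (j : Emb (F.node a F.nil) G) (v : V (F.node a F.nil)) :
    toFun (deep j (nil : Emb F.nil b)) v = V.up (toFun j v) := by
  cases v with
  | here => rfl
  | up => rfl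
  | right v => cases v

end Emb

open Emb

/-- The Ramsey property. -/
def Ram (S : F) : Prop := ∀ (κ : Type) [Finite κ] [Nonempty κ] (T : F), ∃ U, ∀ χ : Emb S U → κ,
  ∃ (j : Emb T U) (k : κ), ∀ e : Emb S T, χ (comp j e) = k

/-- The Ramsey property for trees. -/
def TRam (a : F) : Prop := ∀ (κ : Type) [Finite κ] [Nonempty κ] (t : F), ∃ u,
  ∀ χ : Emb (F.node a F.nil) (F.node u F.nil) → κ,
  ∃ (j : Emb (F.node t F.nil) (F.node u F.nil)) (k : κ), ∀ e, χ (comp j e) = k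

theorem attach (S G : F) : ∃ W, ∃ i : Emb S W, ∀ v : V S, ∃ j : Emb (F.node G F.nil) W,
    toFun j V.here = toFun i v := by
  induction S with
  | nil => exact ⟨F.nil, nil, fun v => by cases v⟩
  | node a b iha ihb =>
    obtain ⟨Wa, ia, ha⟩ := iha
    obtain ⟨Wb, ib, hb⟩ := ihb
    obtain ⟨K, ⟨ea⟩, ⟨eg⟩⟩ := exists_upper Wa G
    refine ⟨F.node K Wb, root (comp ea ia) ib, fun v => ?_⟩
    cases v with
    | here => exact ⟨root eg nil, rfl⟩
    | up v =>
      obtain ⟨j, hj⟩ := ha v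
      exact ⟨deep (comp ea j) nil, by simp [toFun, toFun_comp, hj]⟩
    | right v =>
      obtain ⟨j, hj⟩ := hb v
      exact ⟨skip j, by simp [toFun, hj]⟩

theorem attach' (s G : F) : ∃ W, ∃ i : Emb (F.node s F.nil) (F.node W F.nil),
    ∀ v, ∃ j : Emb (F.node G F.nil) (F.node W F.nil), toFun j V.here = toFun i v := by
  obtain ⟨W, i, h⟩ := attach (F.node s F.nil) G
  refine ⟨W, deep i nil, fun v => ?_⟩
  obtain ⟨j, hj⟩ := h v
  exact ⟨deep j nil, by simp only [toFun_deep, hj]⟩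

/-- lift vertices of a tree -/
def lift {a b : F} : V (F.node a F.nil) → V (F.node a b)
  | V.here => V.here
  | V.up v => V.up v

theorem toFun_graft_here {a b a' b' : F} (g : Emb (F.node a F.nil) (F.node a' F.nil))
    (g2 : Emb b b') : toFun (graft g g2) V.here = lift (toFun g V.here) := by
  cases g with
  | skip e => cases e
  | root => simp [graft, toFun, lift]
  | deep => simp [graft, toFun, lift]

theorem toFun_graft_up {a b a' b' : F} (g : Emb (F.node a F.nil) (F.node a' F.nil))
    (g2 : Emb b b') (v : V a) : toFun (graft g g2) (V.up v) = lift (toFun g (V.up v)) := by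
  cases g with
  | skip e => cases e
  | root => simp [graft, toFun, lift]
  | deep => simp [graft, toFun, lift]

theorem toFun_graft_right {a b a' b' : F} (g : Emb (F.node a F.nil) (F.node a' F.nil))
    (g2 : Emb b b') (v : V b) : toFun (graft g g2) (V.right v) = V.right (toFun g2 v) := by
  cases g with
  | skip e => cases e
  | root => simp [graft, toFun]
  | deep => simp [graft, toFun]

theorem vertex_two (T s : F) : ∃ U, ∀ X : V U → Prop,
    (∃ j : Emb T U, ∀ v, X (toFun j v)) ∨
    (∃ j : Emb (F.node s F.nil) U, ∀ v, ¬ X (toFun j v)) := by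
  induction T with
  | nil => exact ⟨F.nil, fun X => .inl ⟨nil, fun v => by cases v⟩⟩
  | node t1 t2 ih1 ih2 =>
    obtain ⟨U1, h1⟩ := ih1
    obtain ⟨U2, h2⟩ := ih2
    obtain ⟨W, i, hW⟩ := attach' s U1
    refine ⟨F.node W U2, fun X => ?_⟩
    by_cases hi : ∀ v, ¬ X (lift (toFun i v))
    · refine .inr ⟨graft i nil, fun v => ?_⟩
      cases v with
      | here => rw [toFun_graft_here]; exact hi _
      | up v => rw [toFun_graft_up]; exact hi _
      | right v => cases v
    · push Not at hi
      obtain ⟨p, hp⟩ := hi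
      obtain ⟨j, hj⟩ := hW p
      rcases h2 (fun v => X (V.right v)) with ⟨j2, hj2⟩ | ⟨j2, hj2⟩
      · rcases h1 (fun v => X (lift (toFun j (V.up v)))) with ⟨j1, hj1⟩ | ⟨j1, hj1⟩
        · refine .inl ⟨graft (comp j (root j1 nil)) j2, fun v => ?_⟩
          cases v with
          | here => rw [toFun_graft_here, toFun_comp]; simp only [toFun]; rw [hj]; exact hp
          | up v => rw [toFun_graft_up, toFun_comp]; exact hj1 v
          | right v => rw [toFun_graft_right]; exact hj2 v
        · refine .inr ⟨graft (comp j (deep j1 nil)) nil, fun v => ?_⟩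
          cases v with
          | here => rw [toFun_graft_here, toFun_comp]; exact hj1 _
          | up v => rw [toFun_graft_up, toFun_comp]; exact hj1 _
          | right v => cases v
      · exact .inr ⟨skip j2, fun v => hj2 v⟩

theorem vertex_ramsey (κ : Type) [Finite κ] [Nonempty κ] (t : F) : ∃ U, ∀ f : V U → κ,
    ∃ (j : Emb (F.node t F.nil) U) (k : κ), ∀ v, f (toFun j v) = k := by
  classical
  suffices H : ∀ A : Finset κ, ∃ U, ∀ f : V U → κ, (∀ v, f v ∈ A) →
      ∃ (j : Emb (F.node t F.nil) U) (k : κ), ∀ v, f (toFun j v) = k by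
    have := Fintype.ofFinite κ
    obtain ⟨U, h⟩ := H Finset.univ
    exact ⟨U, fun f => h f (fun v => Finset.mem_univ _)⟩
  intro A
  induction A using Finset.induction_on with
  | empty => exact ⟨F.node t F.nil, fun f hf => absurd (hf V.here) (by simp)⟩
  | insert k A _ ih =>
    obtain ⟨S, hS⟩ := ih
    obtain ⟨U, hU⟩ := vertex_two (F.node t F.nil) S
    refine ⟨U, fun f hf => ?_⟩
    rcases hU (fun v => f v = k) with ⟨j, hj⟩ | ⟨j, hj⟩
    · exact ⟨j, k, hj⟩
    · obtain ⟨j', k', h'⟩ := hS (fun v => f (toFun j (V.up v))) (fun v => by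
        have := hf (toFun j (V.up v))
        have h2 := hj (V.up v)
        simpa [h2] using this)
      refine ⟨comp j (deep j' nil), k', fun v => ?_⟩
      rw [toFun_comp, toFun_deep]
      exact h' v

theorem step1a {a : F} (ha : Ram a) (κ : Type) [Finite κ] [Nonempty κ] (T : F) :
    ∃ U, ∀ χ : Emb (F.node a F.nil) U → κ, ∃ (j : Emb T U) (f : V T → κ),
      ∀ e : Emb (F.node a F.nil) T, χ (comp j e) = f (toFun e V.here) := by
  induction T with
  | nil => exact ⟨F.nil, fun χ => ⟨nil, fun _ => Classical.arbitrary κ, fun e => by cases e⟩⟩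
  | node t1 t2 ih1 ih2 =>
    obtain ⟨U1, h1⟩ := ih1
    obtain ⟨U2, h2⟩ := ih2
    obtain ⟨W, hW⟩ := ha κ U1
    refine ⟨F.node W U2, fun χ => ?_⟩
    obtain ⟨j0, k0, h0⟩ := hW (fun e => χ (root e nil))
    obtain ⟨j1, f1, hj1⟩ := h1 (fun e => χ (deep (comp j0 e) nil))
    obtain ⟨j2, f2, hj2⟩ := h2 (fun e => χ (skip e))
    refine ⟨root (comp j0 j1) j2, fun v => match v with
      | V.here => k0
      | V.up v => f1 v
      | V.right v => f2 v, fun e => ?_⟩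
    cases e with
    | skip e => simpa [comp, toFun] using hj2 e
    | root e e' => cases e'; simpa [comp, toFun, comp_assoc] using h0 (comp j1 e)
    | deep e e' => cases e'; simpa [comp, toFun, comp_assoc] using hj1 e

theorem step1 {a : F} (ha : Ram a) : TRam a := by
  intro κ _ _ t
  obtain ⟨R, hR⟩ := vertex_ramsey κ t
  obtain ⟨U, hU⟩ := step1a ha κ R
  refine ⟨U, fun χ => ?_⟩
  obtain ⟨j1, f, h1⟩ := hU (fun e => χ (deep e nil))
  obtain ⟨j2, k, h2⟩ := hR f
  refine ⟨deep (comp j1 j2) nil, k, fun e => ?_⟩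
  rw [comp_deep, comp_assoc, h1, toFun_comp, h2]

theorem step2a {a b : F} (ha : TRam a) (hb : Ram b) (κ : Type) [Finite κ] [Nonempty κ] (T : F) :
    ∃ U, ∀ χ : Emb (F.node a b) U → κ, ∃ (j : Emb T U) (f : ℕ → κ),
      ∀ e : Emb (F.node a b) T, χ (comp j e) = f (idx e) := by
  induction T with
  | nil => exact ⟨F.nil, fun χ => ⟨nil, fun _ => Classical.arbitrary κ, fun e => by cases e⟩⟩
  | node t1 t2 _ ih =>
    obtain ⟨H, h⟩ := ih
    obtain ⟨H2, h2⟩ := hb κ H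
    obtain ⟨u, hu⟩ := ha (Emb b H2 → κ) t1
    refine ⟨F.node u H2, fun χ => ?_⟩
    obtain ⟨j1, c1, hj1⟩ := hu (fun e e2 => χ (graft e e2))
    obtain ⟨j2, k0, hj2⟩ := h2 c1
    obtain ⟨j3, f3, hj3⟩ := h (fun e => χ (skip (comp j2 e)))
    refine ⟨graft j1 (comp j2 j3), fun n => Nat.casesOn n k0 f3, fun e => ?_⟩
    rcases skip_or_graft e with ⟨e, rfl⟩ | ⟨e, e2, rfl⟩
    · rw [comp_graft_skip, comp_assoc]; exact hj3 e
    · rw [comp_graft_graft, comp_assoc, idx_graft]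
      have := congrFun (hj1 e) (comp j2 (comp j3 e2))
      exact this.trans (hj2 _)

def TreesIn (t : F) : F → Prop
  | F.nil => True
  | F.node a b => Nonempty (Emb (F.node a F.nil) (F.node t F.nil)) ∧ TreesIn t b

theorem TreesIn.mono {t t' : F} (i : Emb (F.node t F.nil) (F.node t' F.nil)) (T : F)
    (h : TreesIn t T) : TreesIn t' T := by
  induction T with
  | nil => trivial
  | node a b _ ih => exact ⟨⟨comp i h.1.some⟩, ih h.2⟩

theorem exists_treesIn (T : F) : ∃ t, TreesIn t T := by
  induction T with
  | nil => exact ⟨F.nil, trivial⟩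
  | node a b _ ih =>
    obtain ⟨t, ht⟩ := ih
    obtain ⟨K, ⟨e⟩, ⟨f⟩⟩ := exists_upper (F.node a F.nil) (F.node t F.nil)
    exact ⟨K, ⟨deep e nil⟩, ht.mono (deep f nil)⟩

def rep (t : F) : ℕ → F
  | 0 => F.nil
  | n + 1 => F.node t (rep t n)

def len : F → ℕ
  | F.nil => 0
  | F.node _ b => len b + 1

theorem pick {κ : Type} [DecidableEq κ] (a b t : F) (k : κ) (N : ℕ) (T : F) (hT : TreesIn t T)
    (f : ℕ → κ) (hf : len T ≤ Nat.count (fun i => f i = k) N) :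
    ∃ j : Emb T (rep t N), ∀ e : Emb (F.node a b) T, f (idx (comp j e)) = k := by
  induction N generalizing T f with
  | zero =>
    cases T with
    | nil => exact ⟨nil, fun e => by cases e⟩
    | node x y => simp [len] at hf
  | succ N ih =>
    cases T with
    | nil => exact ⟨nil, fun e => by cases e⟩
    | node x y =>
      rw [Nat.count_succ'] at hf
      obtain ⟨⟨i⟩, hT2⟩ := show _ ∧ _ from hT
      suffices H : ∃ j : Emb (F.node x y) (F.node t (rep t N)), ∀ e : Emb (F.node a b) (F.node x y),
          f (idx (comp j e)) = k from H
      by_cases h0 : f 0 = k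
      · obtain ⟨j, hj⟩ := ih y hT2 (fun i => f (i + 1)) (by simpa [len, h0] using hf)
        refine ⟨graft i j, fun e => ?_⟩
        rcases skip_or_graft e with ⟨e, rfl⟩ | ⟨e, e2, rfl⟩
        · rw [comp_graft_skip]; exact hj e
        · rw [comp_graft_graft, idx_graft, h0]
      · obtain ⟨j, hj⟩ := ih (F.node x y) hT (fun i => f (i + 1)) (by simpa [h0] using hf)
        refine ⟨skip j, fun e => ?_⟩
        have : comp (skip j : Emb (F.node x y) (F.node t (rep t N))) e = skip (comp j e) := by
          cases e <;> simp [comp]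
        rw [this]; exact hj e

theorem step2 {a b : F} (ha : TRam a) (hb : Ram b) : Ram (F.node a b) := by
  classical
  intro κ _ _ T
  have := Fintype.ofFinite κ
  obtain ⟨t, ht⟩ := exists_treesIn T
  obtain ⟨U, hU⟩ := step2a ha hb κ (rep t (Fintype.card κ * len T))
  refine ⟨U, fun χ => ?_⟩
  obtain ⟨j1, f, h1⟩ := hU χ
  obtain ⟨k, _, hk⟩ := Finset.exists_le_card_fiber_of_mul_le_card_of_maps_to
    (s := Finset.range (Fintype.card κ * len T)) (t := (Finset.univ : Finset κ)) (f := f)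
    (n := len T) (by simp) Finset.univ_nonempty (by simp)
  obtain ⟨j2, h2⟩ := pick a b t k _ T ht f (by rwa [Nat.count_eq_card_filter_range])
  exact ⟨comp j1 j2, k, fun e => by rw [comp_assoc, h1, h2]⟩

theorem ram (S : F) : Ram S := by
  induction S with
  | nil => 
    intro κ _ _ T
    exact ⟨T, fun χ => ⟨id T, χ nil, fun e => by rw [eq_nil (comp _ e)]⟩⟩
  | node a b iha ihb => exact step2 (step1 iha) ihb

/-- tree order on vertices -/
def vle : {A : F} → V A → V A → Prop
  | _, V.here, V.here => True
  | _, V.here, V.up _ => True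
  | _, V.here, V.right _ => False
  | _, V.up _, V.here => False
  | _, V.up v, V.up w => vle v w
  | _, V.up _, V.right _ => False
  | _, V.right _, V.here => False
  | _, V.right _, V.up _ => False
  | _, V.right v, V.right w => vle v w

/-- lexicographic order on vertices -/
def vlx : {A : F} → V A → V A → Prop
  | _, V.here, V.here => True
  | _, V.here, V.up _ => True
  | _, V.here, V.right _ => True
  | _, V.up _, V.here => False
  | _, V.up v, V.up w => vlx v w
  | _, V.up _, V.right _ => True
  | _, V.right _, V.here => False
  | _, V.right _, V.up _ => False
  | _, V.right v, V.right w => vlx v w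

/-- abstract ordered forests -/
structure OF {α : Type} (le lx : α → α → Prop) : Prop where
  le_refl : ∀ v, le v v
  le_antisymm : ∀ v w, le v w → le w v → v = w
  le_trans : ∀ u v w, le u v → le v w → le u w
  lx_antisymm : ∀ v w, lx v w → lx w v → v = w
  lx_trans : ∀ u v w, lx u v → lx v w → lx u w
  lx_total : ∀ v w, lx v w ∨ lx w v
  le_lx : ∀ v w, le v w → lx v w
  conv : ∀ x y z, le x z → lx x y → lx y z → le x y

/-- abstract embeddings -/
structure SEmb {α β : Type} (r l : α → α → Prop) (r' l' : β → β → Prop) (e : α → β) :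
    Prop where
  inj : Function.Injective e
  lx : ∀ v w, l v w → l' (e v) (e w)
  le : ∀ v w, r v w ↔ r' (e v) (e w)
  meet : ∀ x v w, r' x (e v) → r' x (e w) → ∃ m, r m v ∧ r m w ∧ r' x (e m)

theorem vOF (A : F) : OF (vle (A := A)) (vlx (A := A)) := by
  induction A with
  | nil => constructor <;> intro v <;> cases v
  | node a b iha ihb =>
    constructor
    · intro v; cases v <;> simp [vle, iha.le_refl, ihb.le_refl]
    · intro v w; cases v <;> cases w <;> simp [vle]
      · exact iha.le_antisymm _ _
      · exact ihb.le_antisymm _ _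
    · intro u v w; cases u <;> cases v <;> cases w <;> simp [vle]
      · exact iha.le_trans _ _ _
      · exact ihb.le_trans _ _ _
    · intro v w; cases v <;> cases w <;> simp [vlx]
      · exact iha.lx_antisymm _ _
      · exact ihb.lx_antisymm _ _
    · intro u v w; cases u <;> cases v <;> cases w <;> simp [vlx]
      · exact iha.lx_trans _ _ _
      · exact ihb.lx_trans _ _ _
    · intro v w; cases v <;> cases w <;> simp [vlx]
      · exact iha.lx_total _ _
      · exact ihb.lx_total _ _
    · intro v w; cases v <;> cases w <;> simp [vlx, vle]
      · exact iha.le_lx _ _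
      · exact ihb.le_lx _ _
    · intro u v w; cases u <;> cases v <;> cases w <;> simp [vlx, vle]
      · exact iha.conv _ _ _
      · exact ihb.conv _ _ _

instance finiteV (A : F) : Finite (V A) := by
  induction A with
  | nil => have : IsEmpty (V F.nil) := ⟨fun v => by cases v⟩; infer_instance
  | node a b iha ihb =>
    refine Finite.of_surjective (α := Unit ⊕ (V a ⊕ V b)) (fun x => match x with
      | .inl _ => V.here
      | .inr (.inl v) => V.up v
      | .inr (.inr v) => V.right v) ?_
    intro v
    cases v with
    | here => exact ⟨.inl (), rfl⟩
    | up v => exact ⟨.inr (.inl v), rfl⟩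
    | right v => exact ⟨.inr (.inr v), rfl⟩

theorem toFun_SEmb {A B : F} (f : Emb A B) : SEmb vle vlx vle vlx (toFun f) := by
  induction f with
  | nil =>
    constructor
    · intro v; cases v
    · intro v; cases v
    · intro v; cases v
    · intro x v; cases v
  | skip f ih =>
    constructor
    · intro v w h
      simp only [toFun, V.right.injEq] at h
      exact ih.inj h
    · intro v w h; simpa [toFun, vlx] using ih.lx v w h
    · intro v w; simpa [toFun, vle] using ih.le v w
    · intro x v w h h'
      simp only [toFun] at h h'
      cases x with
      | here => simp [vle] at h
      | up x => simp [vle] at h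
      | right x =>
        obtain ⟨m, h1, h2, h3⟩ := ih.meet x v w (by simpa [vle] using h) (by simpa [vle] using h')
        exact ⟨m, h1, h2, by simpa [toFun, vle] using h3⟩
  | root f1 f2 ih1 ih2 =>
    constructor
    · intro v w h
      cases v <;> cases w <;> simp [toFun] at h ⊢
      · exact ih1.inj h
      · exact ih2.inj h
    · intro v w; cases v <;> cases w <;> simp [toFun, vlx]
      · exact ih1.lx _ _
      · exact ih2.lx _ _
    · intro v w; cases v <;> cases w <;> simp [toFun, vle]
      · exact ih1.le _ _
      · exact ih2.le _ _
    · intro x v w h h'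
      cases x with
      | here => exact ⟨V.here, by cases v <;> simp [toFun, vle] at h ⊢,
          by cases w <;> simp [toFun, vle] at h' ⊢, by simp [toFun, vle]⟩
      | up x =>
        cases v <;> cases w <;> simp [toFun, vle] at h h'
        obtain ⟨m, h1, h2, h3⟩ := ih1.meet x _ _ h h'
        exact ⟨V.up m, h1, h2, by simpa [toFun, vle] using h3⟩
      | right x =>
        cases v <;> cases w <;> simp [toFun, vle] at h h'
        obtain ⟨m, h1, h2, h3⟩ := ih2.meet x _ _ h h'
        exact ⟨V.right m, h1, h2, by simpa [toFun, vle] using h3⟩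
  | deep f1 f2 ih1 ih2 =>
    constructor
    · intro v w h
      cases v <;> cases w <;> simp [toFun] at h ⊢
      · exact absurd (ih1.inj h) (by simp)
      · exact absurd (ih1.inj h) (by simp)
      · simpa using ih1.inj h
      · exact ih2.inj h
    · intro v w; cases v <;> cases w <;> simp [toFun, vlx]
      · exact ih1.lx _ _ (by simp [vlx])
      · exact ih1.lx _ _ (by simp [vlx])
      · intro h; exact ih1.lx _ _ (by simpa [vlx] using h)
      · exact ih2.lx _ _
    · intro v w; cases v <;> cases w <;> simp [toFun, vle]
      · exact (ih1.le _ _).1 (by simp [vle])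
      · exact (ih1.le _ _).1 (by simp [vle])
      · exact fun h => by simpa [vle] using (ih1.le _ _).2 h
      · rw [← ih1.le]; simp [vle]
      · exact ih2.le _ _
    · intro x v w h h'
      cases x with
      | here => exact ⟨V.here, by cases v <;> simp [toFun, vle] at h ⊢,
          by cases w <;> simp [toFun, vle] at h' ⊢, by simp [toFun, vle]⟩
      | up x =>
        have key : ∀ v w : V (F.node _ F.nil), vle x (toFun f1 v) → vle x (toFun f1 w) →
            ∃ m, vle m (lift v) ∧ vle m (lift w) ∧ vle (V.up x) (toFun (deep f1 f2) m) := by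
          intro v w h h'
          obtain ⟨m, h1, h2, h3⟩ := ih1.meet x _ _ h h'
          refine ⟨lift m, ?_, ?_, ?_⟩
          · cases m with
            | right m => cases m
            | here => cases v with
              | right m => cases m
              | here => simp [lift, vle]
              | up v => simp [lift, vle]
            | up m => cases v with
              | right m => cases m
              | here => simp [vle] at h1
              | up v => simpa [lift, vle] using h1
          · cases m with
            | right m => cases m
            | here => cases w with
              | right m => cases m
              | here => simp [lift, vle]
              | up v => simp [lift, vle]
            | up m => cases w with
              | right m => cases m
              | here => simp [vle] at h2
              | up v => simpa [lift, vle] using h2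
          · cases m with
            | right m => cases m
            | here => simpa [lift, toFun, vle] using h3
            | up m => simpa [lift, toFun, vle] using h3
        cases v <;> cases w <;> simp [toFun, vle] at h h' <;> exact key _ _ h h'
      | right x =>
        cases v <;> cases w <;> simp [toFun, vle] at h h'
        obtain ⟨m, h1, h2, h3⟩ := ih2.meet x _ _ h h'
        exact ⟨V.right m, h1, h2, by simpa [toFun, vle] using h3⟩

theorem exists_emb {A B : F} (e : V A → V B) (he : SEmb vle vlx vle vlx e) :
    ∃ f : Emb A B, toFun f = e := by
  induction B generalizing A with
  | nil =>
    cases A with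
    | nil => exact ⟨nil, by funext v; cases v⟩
    | node a b => have := e V.here; cases this
  | node a' b' iha ihb =>
    cases A with
    | nil => exact ⟨nil, by funext v; cases v⟩
    | node a b =>
      -- the part to the right, in the two non-skip cases
      have rightpart : (∀ v, ∃ w, e (V.right v) = V.right w) →
          ∃ f : Emb b b', ∀ v, e (V.right v) = V.right (toFun f v) := by
        intro h
        choose g hg using h
        obtain ⟨f, rfl⟩ := ihb g (by
          constructor
          · intro v w h
            have := he.inj (a₁ := V.right v) (a₂ := V.right w) (by rw [hg, hg, h])
            simpa using this
          · intro v w h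
            have := he.lx (V.right v) (V.right w) (by simpa [vlx] using h)
            simpa [hg, vlx] using this
          · intro v w
            have := he.le (V.right v) (V.right w)
            simpa [hg, vle] using this
          · intro x v w h h'
            obtain ⟨m, h1, h2, h3⟩ := he.meet (V.right x) (V.right v) (V.right w)
              (by simpa [hg, vle] using h) (by simpa [hg, vle] using h')
            cases m with
            | here => simp [vle] at h1
            | up m => simp [vle] at h1
            | right m => exact ⟨m, by simpa [vle] using h1, by simpa [vle] using h2,
                by simpa [hg, vle] using h3⟩)
        exact ⟨f, hg⟩
      rcases h0 : e V.here with _ | x | x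
      · -- here ↦ here
        have hu : ∀ v, ∃ w, e (V.up v) = V.up w := by
          intro v
          have h1 := (he.le V.here (V.up v)).1 (by simp [vle])
          rcases h2 : e (V.up v) with _ | w | w
          · exact absurd (he.inj (h2.trans h0.symm)) (by simp)
          · exact ⟨w, rfl⟩
          · simp [h0, h2, vle] at h1
        have hr : ∀ v, ∃ w, e (V.right v) = V.right w := by
          intro v
          have h1 := (he.le V.here (V.right v)).2
          rcases h2 : e (V.right v) with _ | w | w
          · simp [h0, h2, vle] at h1
          · simp [h0, h2, vle] at h1
          · exact ⟨w, rfl⟩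
        obtain ⟨f2, hf2⟩ := rightpart hr
        choose g hg using hu
        obtain ⟨f1, rfl⟩ := iha g (by
          constructor
          · intro v w h
            have := he.inj (a₁ := V.up v) (a₂ := V.up w) (by rw [hg, hg, h])
            simpa using this
          · intro v w h
            have := he.lx (V.up v) (V.up w) (by simpa [vlx] using h)
            simpa [hg, vlx] using this
          · intro v w
            have := he.le (V.up v) (V.up w)
            simpa [hg, vle] using this
          · intro x v w h h'
            obtain ⟨m, h1, h2, h3⟩ := he.meet (V.up x) (V.up v) (V.up w)
              (by simpa [hg, vle] using h) (by simpa [hg, vle] using h')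
            cases m with
            | here => simp [h0, vle] at h3
            | right m => simp [vle] at h1
            | up m => exact ⟨m, by simpa [vle] using h1, by simpa [vle] using h2,
                by simpa [hg, vle] using h3⟩)
        refine ⟨root f1 f2, ?_⟩
        funext v
        cases v <;> simp [toFun, h0, hg, hf2]
      · -- here ↦ up x
        have hr : ∀ v, ∃ w, e (V.right v) = V.right w := by
          intro v
          have h1 := he.lx V.here (V.right v) (by simp [vlx])
          rcases h2 : e (V.right v) with _ | w | w
          · simp [h0, h2, vlx] at h1
          · obtain ⟨m, h3, h4, h5⟩ := he.meet V.here V.here (V.right v) (by simp [h0, vle])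
              (by simp [h2, vle])
            cases m <;> simp [vle] at h3 h4
          · exact ⟨w, rfl⟩
        obtain ⟨f2, hf2⟩ := rightpart hr
        have hu : ∀ v : V (F.node a F.nil), ∃ w, e (lift v) = V.up w := by
          intro v
          cases v with
          | right v => cases v
          | here => exact ⟨x, h0⟩
          | up v =>
            have h1 := (he.le V.here (V.up v)).1 (by simp [vle])
            simp only [lift]
            rcases h2 : e (V.up v) with _ | w | w
            · simp [h0, h2, vle] at h1
            · exact ⟨w, rfl⟩
            · simp [h0, h2, vle] at h1
        have l1 : Function.Injective (lift (a := a) (b := b)) := by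
          intro v w h
          cases v with
          | right v => cases v
          | here => cases w with
            | right w => cases w
            | here => rfl
            | up w => simp [lift] at h
          | up v => cases w with
            | right w => cases w
            | here => simp [lift] at h
            | up w => simpa [lift] using h
        have l2 : ∀ v w, vle (lift (a := a) (b := b) v) (lift w) ↔ vle v w := by
          intro v w
          cases v with
          | right v => cases v
          | here => cases w with
            | right w => cases w
            | here => simp [lift, vle]
            | up w => simp [lift, vle]
          | up v => cases w with
            | right w => cases w
            | here => simp [lift, vle]
            | up w => simp [lift, vle]
        have l3 : ∀ v w, vlx (lift (a := a) (b := b) v) (lift w) ↔ vlx v w := by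
          intro v w
          cases v with
          | right v => cases v
          | here => cases w with
            | right w => cases w
            | here => simp [lift, vlx]
            | up w => simp [lift, vlx]
          | up v => cases w with
            | right w => cases w
            | here => simp [lift, vlx]
            | up w => simp [lift, vlx]
        choose g hg using hu
        obtain ⟨f1, rfl⟩ := iha g (by
          constructor
          · intro v w h
            exact l1 (he.inj (by rw [hg, hg, h]))
          · intro v w h
            have := he.lx (lift v) (lift w) ((l3 _ _).2 h)
            simpa [hg, vlx] using this
          · intro v w
            have := he.le (lift v) (lift w)
            simpa [hg, vle, l2] using this
          · intro x v w h h'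
            obtain ⟨m, h1, h2, h3⟩ := he.meet (V.up x) (lift v) (lift w)
              (by simpa [hg, vle] using h) (by simpa [hg, vle] using h')
            have : ∃ m', m = lift m' := by
              cases m with
              | here => exact ⟨V.here, rfl⟩
              | up m => exact ⟨V.up m, rfl⟩
              | right m => 
                cases v with
                | here => simp [lift, vle] at h1
                | up => simp [lift, vle] at h1
                | right v => cases v
            obtain ⟨m, rfl⟩ := this
            exact ⟨m, (l2 _ _).1 h1, (l2 _ _).1 h2, by simpa [hg, vle] using h3⟩)
        refine ⟨deep f1 f2, ?_⟩
        funext v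
        cases v with
        | here => exact (hg V.here).symm
        | up v => exact (hg (V.up v)).symm
        | right v => exact (hf2 v).symm
      · -- here ↦ right x
        have hr : ∀ v, ∃ w, e v = V.right w := by
          intro v
          have h1 := he.lx V.here v (by cases v <;> simp [vlx])
          rcases h2 : e v with _ | w | w
          · simp [h0, h2, vlx] at h1
          · simp [h0, h2, vlx] at h1
          · exact ⟨w, rfl⟩
        choose g hg using hr
        obtain ⟨f, rfl⟩ := ihb g (by
          constructor
          · intro v w h
            exact he.inj (by rw [hg, hg, h])
          · intro v w h
            have := he.lx v w h
            simpa [hg, vlx] using this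
          · intro v w
            have := he.le v w
            simpa [hg, vle] using this
          · intro x v w h h'
            obtain ⟨m, h1, h2, h3⟩ := he.meet (V.right x) v w
              (by simpa [hg, vle] using h) (by simpa [hg, vle] using h')
            exact ⟨m, h1, h2, by simpa [hg, vle] using h3⟩)
        exact ⟨skip f, by funext v; simp [toFun, hg]⟩

theorem exists_forest (n : ℕ) (α : Type) [Finite α] (hn : Nat.card α = n) (le lx : α → α → Prop)
    (h : OF le lx) : ∃ (A : F) (φ : V A ≃ α), (∀ v w, vle v w ↔ le (φ v) (φ w)) ∧
      (∀ v w, vlx v w ↔ lx (φ v) (φ w)) := by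
  classical
  induction n using Nat.strong_induction_on generalizing α with
  | _ n ih =>
  rcases isEmpty_or_nonempty α with hα | hα
  · have : IsEmpty (V F.nil) := ⟨fun v => by cases v⟩
    exact ⟨F.nil, Equiv.equivOfIsEmpty _ _, fun v => isEmptyElim v, fun v => isEmptyElim v⟩
  · obtain ⟨r, hr⟩ : ∃ r, ∀ x, lx r x := by
      let inst : PartialOrder α :=
        { le := lx
          le_refl := fun v => h.le_lx _ _ (h.le_refl v)
          le_trans := h.lx_trans
          le_antisymm := h.lx_antisymm }
      obtain ⟨r, hr⟩ := (Set.finite_univ (α := α)).exists_minimal Set.univ_nonempty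
      refine ⟨r, fun x => ?_⟩
      rcases h.lx_total r x with h1 | h1
      · exact h1
      · exact hr.2 trivial h1
    have sub : ∀ p : α → Prop, OF (fun v w : Subtype p => le v w) (fun v w => lx v w) := by
      intro p
      constructor
      · intro v; exact h.le_refl _
      · intro v w h1 h2; exact Subtype.ext (h.le_antisymm _ _ h1 h2)
      · intro u v w; exact h.le_trans _ _ _
      · intro v w h1 h2; exact Subtype.ext (h.lx_antisymm _ _ h1 h2)
      · intro u v w; exact h.lx_trans _ _ _
      · intro u v; exact h.lx_total _ _
      · intro u v; exact h.le_lx _ _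
      · intro u v w; exact h.conv _ _ _
    have card : ∀ p : α → Prop, ¬ p r → Nat.card (Subtype p) < n := by
      intro p hp
      rw [← hn]
      exact Finite.card_subtype_lt hp
    obtain ⟨A, φ, hA1, hA2⟩ := ih _ (card (fun x => x ≠ r ∧ le r x) (by simp)) _ rfl _ _ (sub _)
    obtain ⟨B, ψ, hB1, hB2⟩ := ih _ (card (fun x => ¬ le r x) (by simp [h.le_refl])) _ rfl _ _ (sub _)
    let g : V (F.node A B) → α := fun v => match v with
      | V.here => r
      | V.up v => (φ v : α)
      | V.right v => (ψ v : α)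
    have AB : ∀ v w, lx (φ v : α) (ψ w : α) := by
      intro v w
      rcases h.lx_total (φ v : α) (ψ w : α) with h1 | h1
      · exact h1
      · exact absurd (h.conv _ _ _ (φ v).2.2 (hr _) h1) (ψ w).2
    have hAB : ∀ v w, (φ v : α) ≠ (ψ w : α) := fun v w hh => (ψ w).2 (hh ▸ (φ v).2.2)
    have hBr : ∀ w, (ψ w : α) ≠ r := fun w hh => (ψ w).2 (hh.symm ▸ h.le_refl r)
    have ginj : Function.Injective g := by
      intro v w hh
      cases v with
      | here => cases w with
        | here => rfl
        | up w => exact absurd hh.symm (φ w).2.1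
        | right w => exact absurd hh.symm (hBr w)
      | up v => cases w with
        | here => exact absurd hh (φ v).2.1
        | up w => rw [φ.injective (Subtype.ext hh)]
        | right w => exact absurd hh (hAB v w)
      | right v => cases w with
        | here => exact absurd hh (hBr v)
        | up w => exact absurd hh.symm (hAB w v)
        | right w => rw [ψ.injective (Subtype.ext hh)]
    have gsurj : Function.Surjective g := by
      intro x
      by_cases h1 : le r x
      · by_cases h2 : x = r
        · exact ⟨V.here, h2.symm⟩
        · exact ⟨V.up (φ.symm ⟨x, h2, h1⟩), by simp [g]⟩
      · exact ⟨V.right (ψ.symm ⟨x, h1⟩), by simp [g]⟩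
    refine ⟨F.node A B, Equiv.ofBijective g ⟨ginj, gsurj⟩, ?_, ?_⟩
    · intro v w
      change vle v w ↔ le (g v) (g w)
      cases v with
      | here => cases w with
        | here => simp [vle, g, h.le_refl]
        | up w => simpa [vle, g] using (φ w).2.2
        | right w => simpa [vle, g] using (ψ w).2
      | up v => cases w with
        | here =>
          simp only [vle, g, false_iff]
          exact fun hh => (φ v).2.1 (h.lx_antisymm _ _ (h.le_lx _ _ hh) (hr _))
        | up w => simpa [vle, g] using hA1 v w
        | right w =>
          simp only [vle, g, false_iff]
          exact fun hh => (ψ w).2 (h.le_trans _ _ _ (φ v).2.2 hh)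
      | right v => cases w with
        | here =>
          simp only [vle, g, false_iff]
          exact fun hh => hBr v (h.lx_antisymm _ _ (h.le_lx _ _ hh) (hr _))
        | up w =>
          simp only [vle, g, false_iff]
          exact fun hh => hAB w v (h.lx_antisymm _ _ (AB _ _) (h.le_lx _ _ hh))
        | right w => simpa [vle, g] using hB1 v w
    · intro v w
      change vlx v w ↔ lx (g v) (g w)
      cases v with
      | here => cases w <;> simp [vlx, g, hr]
      | up v => cases w with
        | here =>
          simp only [vlx, g, false_iff]
          exact fun hh => (φ v).2.1 (h.lx_antisymm _ _ hh (hr _))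
        | up w => simpa [vlx, g] using hA2 v w
        | right w => simpa [vlx, g] using AB v w
      | right v => cases w with
        | here =>
          simp only [vlx, g, false_iff]
          exact fun hh => hBr v (h.lx_antisymm _ _ hh (hr _))
        | up w =>
          simp only [vlx, g, false_iff]
          exact fun hh => hAB w v (h.lx_antisymm _ _ (AB _ _) hh)
        | right w => simpa [vlx, g] using hB2 v w

theorem SEmb.comp {α β γ : Type} {le lx : α → α → Prop} {le' lx' : β → β → Prop}
    {le'' lx'' : γ → γ → Prop} {g : β → γ} {f : α → β} (hg : SEmb le' lx' le'' lx'' g)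
    (hf : SEmb le lx le' lx' f) (ht : ∀ a b c, le'' a b → le'' b c → le'' a c) :
    SEmb le lx le'' lx'' (g ∘ f) := by
  constructor
  · exact hg.inj.comp hf.inj
  · exact fun v w h => hg.lx _ _ (hf.lx _ _ h)
  · exact fun v w => (hf.le _ _).trans (hg.le _ _)
  · intro x v w h h'
    obtain ⟨y, h1, h2, h3⟩ := hg.meet x _ _ h h'
    obtain ⟨m, h4, h5, h6⟩ := hf.meet y _ _ h1 h2
    exact ⟨m, h4, h5, ht _ _ _ h3 ((hg.le _ _).1 h6)⟩

/-! ### Ordered trees -/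

theorem exists_meet (X : OTree) (v w : X.α) : ∃ m, X.IsMeet v w m := by
  have := X.fin
  let inst : PartialOrder X.α :=
    { le := X.le, le_refl := X.le_refl, le_trans := X.le_trans, le_antisymm := X.le_antisymm }
  obtain ⟨m, hm⟩ := (Set.toFinite {u : X.α | X.le u v ∧ X.le u w}).exists_maximal
    ⟨X.root, X.root_le _, X.root_le _⟩
  refine ⟨m, hm.1.1, hm.1.2, fun u h1 h2 => ?_⟩
  rcases X.pred_linear v u m h1 hm.1.1 with h | h
  · exact h
  · exact hm.2 ⟨h1, h2⟩ h

theorem exists_succ (X : OTree) (v w : X.α) (h : X.le v w) (hne : v ≠ w) :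
    ∃ a, TreeImmSucc X.le v a ∧ X.le a w := by
  have := X.fin
  let inst : PartialOrder X.α :=
    { le := X.le, le_refl := X.le_refl, le_trans := X.le_trans, le_antisymm := X.le_antisymm }
  obtain ⟨a, ha⟩ := (Set.toFinite {u : X.α | X.le v u ∧ v ≠ u ∧ X.le u w}).exists_minimal
    ⟨w, h, hne, X.le_refl _⟩
  refine ⟨a, ⟨ha.1.1, ha.1.2.1, fun u h1 h2 => ?_⟩, ha.1.2.2⟩
  by_cases hu : u = v
  · exact .inl hu
  · exact .inr (X.le_antisymm _ _ h2
      (ha.2 ⟨h1, fun hh => hu hh.symm, X.le_trans _ _ _ h2 ha.1.2.2⟩ h2))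

/-- anything strictly above `m` and below `v` is above the immediate successor of `m` below `v` -/
theorem succ_le (X : OTree) {m a u v : X.α} (ha : TreeImmSucc X.le m a) (hav : X.le a v)
    (hu : X.le u v) (hmu : X.le m u) (hne : m ≠ u) : X.le a u := by
  rcases X.pred_linear v a u hav hu with h | h
  · exact h
  · rcases ha.2.2 u hmu h with h1 | h1
    · exact absurd h1.symm hne
    · rw [h1]; exact X.le_refl _

theorem succ_unique (X : OTree) {m a a' v : X.α} (ha : TreeImmSucc X.le m a) (hav : X.le a v)
    (ha' : TreeImmSucc X.le m a') (hav' : X.le a' v) : a = a' :=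
  X.le_antisymm _ _ (succ_le X ha hav hav' ha'.1 ha'.2.1) (succ_le X ha' hav' hav ha.1 ha.2.1)

/-- two different immediate successors of a vertex have no common upper bound -/
theorem succ_sep (X : OTree) {m a b v : X.α} (ha : TreeImmSucc X.le m a)
    (hb : TreeImmSucc X.le m b) (hne : a ≠ b) (h1 : X.le a v) (h2 : X.le b v) : False :=
  hne (succ_unique X ha h1 hb h2)

theorem sep_meet (X : OTree) {m a b v w : X.α} (ha : TreeImmSucc X.le m a)
    (hb : TreeImmSucc X.le m b) (hne : a ≠ b) (h1 : X.le a v) (h2 : X.le b w) :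
    X.IsMeet v w m := by
  refine ⟨X.le_trans _ _ _ ha.1 h1, X.le_trans _ _ _ hb.1 h2, fun u hu hu' => ?_⟩
  rcases X.pred_linear v u m hu (X.le_trans _ _ _ ha.1 h1) with h | h
  · exact h
  · by_cases hh : m = u
    · rw [hh]; exact X.le_refl _
    · exact (succ_sep X ha hb hne (succ_le X ha h1 hu h hh) (succ_le X hb h2 hu' h hh)).elim

theorem meet_unique (X : OTree) {v w m m' : X.α} (h : X.IsMeet v w m) (h' : X.IsMeet v w m') :
    m = m' :=
  X.le_antisymm _ _ (h'.2.2 _ h.1 h.2.1) (h.2.2 _ h'.1 h'.2.1)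

/-- the strict part of the lexicographic order between incomparable elements -/
def R (X : OTree) (v w : X.α) : Prop :=
  ∃ m a b, TreeImmSucc X.le m a ∧ TreeImmSucc X.le m b ∧ a ≠ b ∧ X.le a v ∧ X.le b w ∧
    X.sOrd m a b

theorem R_not_le (X : OTree) {v w : X.α} (h : R X v w) : ¬ X.le v w ∧ ¬ X.le w v := by
  obtain ⟨m, a, b, ha, hb, hne, hav, hbw, _⟩ := h
  exact ⟨fun h => succ_sep X ha hb hne (X.le_trans _ _ _ hav h) hbw,
    fun h => succ_sep X ha hb hne hav (X.le_trans _ _ _ hbw h)⟩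

theorem lexLE_iff (X : OTree) (v w : X.α) : X.lexLE v w ↔ X.le v w ∨ R X v w := by
  constructor
  · rintro (h | ⟨h1, h2, m, a, b, hm, ha, hav, hb, hbw, hab⟩)
    · exact .inl h
    · refine .inr ⟨m, a, b, ha, hb, ?_, hav, hbw, hab⟩
      rintro rfl
      exact ha.2.1 (X.le_antisymm _ _ ha.1 (hm.2.2 _ hav hbw))
  · rintro (h | h)
    · exact .inl h
    · obtain ⟨h1, h2⟩ := R_not_le X h
      obtain ⟨m, a, b, ha, hb, hne, hav, hbw, hab⟩ := h
      exact .inr ⟨h1, h2, m, a, b, sep_meet X ha hb hne hav hbw, ha, hav, hb, hbw, hab⟩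

theorem exists_split (X : OTree) {v w : X.α} (h1 : ¬ X.le v w) (h2 : ¬ X.le w v) :
    ∃ m a b, TreeImmSucc X.le m a ∧ TreeImmSucc X.le m b ∧ a ≠ b ∧ X.le a v ∧ X.le b w := by
  obtain ⟨m, hm⟩ := exists_meet X v w
  obtain ⟨a, ha, hav⟩ := exists_succ X m v hm.1 (fun h => h1 (h ▸ hm.2.1))
  obtain ⟨b, hb, hbw⟩ := exists_succ X m w hm.2.1 (fun h => h2 (h ▸ hm.1))
  refine ⟨m, a, b, ha, hb, ?_, hav, hbw⟩
  rintro rfl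
  exact ha.2.1 (X.le_antisymm _ _ ha.1 (hm.2.2 _ hav hbw))

theorem R_asymm (X : OTree) {v w : X.α} (h : R X v w) (h' : R X w v) : False := by
  obtain ⟨m, a, b, ha, hb, hne, hav, hbw, hab⟩ := h
  obtain ⟨m', a', b', ha', hb', hne', hav', hbw', hab'⟩ := h'
  have := meet_unique X (sep_meet X ha hb hne hav hbw) (sep_meet X hb' ha' hne'.symm hbw' hav')
  subst this
  have e1 := succ_unique X ha hav hb' hbw'
  have e2 := succ_unique X hb hbw ha' hav'
  subst e1; subst e2
  exact hne (X.sOrd_antisymm _ _ _ hab hab')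

theorem R_trans (X : OTree) {u v w : X.α} (h : R X u v) (h' : R X v w) : R X u w := by
  obtain ⟨m, a, b, ha, hb, hne, hau, hbv, hab⟩ := h
  obtain ⟨n, a', b', ha', hb', hne', hav', hbw', hab'⟩ := h'
  by_cases hmn : m = n
  · subst hmn
    have := succ_unique X hb hbv ha' hav'
    subst this
    refine ⟨m, a, b', ha, hb', ?_, hau, hbw', X.sOrd_trans _ _ _ _ hab hab'⟩
    rintro rfl
    exact hne (X.sOrd_antisymm _ _ _ hab hab')
  · have hmv := X.le_trans _ _ _ hb.1 hbv
    have hnv := X.le_trans _ _ _ ha'.1 hav'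
    rcases X.pred_linear v m n hmv hnv with h | h
    · have h1 := succ_le X hb hbv hnv h hmn
      exact ⟨m, a, b, ha, hb, hne, hau,
        X.le_trans _ _ _ h1 (X.le_trans _ _ _ hb'.1 hbw'), hab⟩
    · have h1 := succ_le X ha' hav' hmv h (Ne.symm hmn)
      exact ⟨n, a', b', ha', hb', hne', X.le_trans _ _ _ h1 (X.le_trans _ _ _ ha.1 hau),
        hbw', hab'⟩

theorem otree_OF (X : OTree) : OF X.le X.lexLE := by
  have anti : ∀ v w, X.lexLE v w → X.lexLE w v → v = w := by
    intro v w h1 h2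
    rw [lexLE_iff] at h1 h2
    rcases h1 with h1 | h1
    · rcases h2 with h2 | h2
      · exact X.le_antisymm _ _ h1 h2
      · exact absurd h1 (R_not_le X h2).2
    · rcases h2 with h2 | h2
      · exact absurd h2 (R_not_le X h1).2
      · exact (R_asymm X h1 h2).elim
  refine ⟨X.le_refl, X.le_antisymm, X.le_trans, anti, ?_, ?_, fun v w h => .inl h, ?_⟩
  · intro u v w h1 h2
    rw [lexLE_iff] at h1 h2 ⊢
    rcases h1 with h1 | h1
    · rcases h2 with h2 | h2
      · exact .inl (X.le_trans _ _ _ h1 h2)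
      · obtain ⟨m, a, b, ha, hb, hne, hav, hbw, hab⟩ := h2
        rcases X.pred_linear v u m h1 (X.le_trans _ _ _ ha.1 hav) with h | h
        · exact .inl (X.le_trans _ _ _ h (X.le_trans _ _ _ hb.1 hbw))
        · by_cases hmu : m = u
          · subst hmu; exact .inl (X.le_trans _ _ _ hb.1 hbw)
          · exact .inr ⟨m, a, b, ha, hb, hne, succ_le X ha hav h1 h hmu, hbw, hab⟩
    · rcases h2 with h2 | h2
      · obtain ⟨m, a, b, ha, hb, hne, hav, hbw, hab⟩ := h1
        exact .inr ⟨m, a, b, ha, hb, hne, hav, X.le_trans _ _ _ hbw h2, hab⟩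
      · exact .inr (R_trans X h1 h2)
  · intro v w
    rw [lexLE_iff, lexLE_iff]
    by_cases h1 : X.le v w
    · exact .inl (.inl h1)
    by_cases h2 : X.le w v
    · exact .inr (.inl h2)
    obtain ⟨m, a, b, ha, hb, hne, hav, hbw⟩ := exists_split X h1 h2
    rcases X.sOrd_total m a b ha hb with h | h
    · exact .inl (.inr ⟨m, a, b, ha, hb, hne, hav, hbw, h⟩)
    · exact .inr (.inr ⟨m, b, a, hb, ha, hne.symm, hbw, hav, h⟩)
  · intro x y z hxz hxy hyz
    rcases (lexLE_iff X x y).1 hxy with h | ⟨m, a, b, ha, hb, hne, hav, hbw, hab⟩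
    · exact h
    · have : X.lexLE z y :=
        (lexLE_iff X z y).2 (.inr ⟨m, a, b, ha, hb, hne, X.le_trans _ _ _ hav hxz, hbw, hab⟩)
      rw [anti _ _ hyz this]; exact hxz

/-- the ordered tree whose root has the given forest of children -/
def toOTree (A : F) : OTree where
  α := V (F.node A F.nil)
  fin := inferInstance
  le := vle
  le_refl := (vOF _).le_refl
  le_antisymm := (vOF _).le_antisymm
  le_trans := (vOF _).le_trans
  root := V.here
  root_le := fun v => by
    cases v with
    | here => simp [vle]
    | up v => simp [vle]
    | right v => cases v
  pred_linear := fun v a b ha hb => by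
    rcases (vOF _).lx_total a b with h | h
    · exact .inl ((vOF _).conv _ _ _ ha h ((vOF _).le_lx _ _ hb))
    · exact .inr ((vOF _).conv _ _ _ hb h ((vOF _).le_lx _ _ ha))
  sOrd := fun v a b => TreeImmSucc vle v a ∧ TreeImmSucc vle v b ∧ vlx a b
  sOrd_dom := fun v a b h => ⟨h.1, h.2.1⟩
  sOrd_refl := fun v a h => ⟨h, h, (vOF _).le_lx _ _ ((vOF _).le_refl _)⟩
  sOrd_antisymm := fun v a b h h' => (vOF _).lx_antisymm _ _ h.2.2 h'.2.2
  sOrd_trans := fun v a b c h h' => ⟨h.1, h'.2.1, (vOF _).lx_trans _ _ _ h.2.2 h'.2.2⟩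
  sOrd_total := fun v a b ha hb => by
    rcases (vOF _).lx_total a b with h | h
    · exact .inl ⟨ha, hb, h⟩
    · exact .inr ⟨hb, ha, h⟩

theorem lexLE_toOTree (A : F) (v w : V (F.node A F.nil)) (h : vlx v w) :
    (toOTree A).lexLE v w := by
  have O := vOF (F.node A F.nil)
  apply (lexLE_iff (toOTree A) v w).2
  by_cases h1 : vle v w
  · exact .inl h1
  by_cases h2 : vle w v
  · exact absurd (O.lx_antisymm _ _ h (O.le_lx _ _ h2) ▸ O.le_refl _) h1
  obtain ⟨m, a, b, ha, hb, hne, hav, hbw⟩ := exists_split (toOTree A) h1 h2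
  refine .inr ⟨m, a, b, ha, hb, hne, hav, hbw, ha, hb, ?_⟩
  rcases O.lx_total a b with h3 | h3
  · exact h3
  · have hba : vle b a := O.conv b a w hbw h3 (O.lx_trans _ _ _ (O.le_lx _ _ hav) h)
    exact (succ_sep (toOTree A) ha hb hne hav (O.le_trans _ _ _ hba hav)).elim

theorem SEmb_of_morphism {S T : OTree} {e : S.α → T.α} (he : IsMorphism S T e)
    (hi : Function.Injective e) : SEmb S.le S.lexLE T.le T.lexLE e := by
  refine ⟨hi, he.2.1, fun v w => ⟨fun h => ?_, fun h => ?_⟩, fun x v w h h' => ?_⟩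
  · exact (he.1 v w v ⟨S.le_refl _, h, fun u hu _ => hu⟩).2.1
  · obtain ⟨m, hm⟩ := exists_meet S v w
    have h1 : T.IsMeet (e v) (e w) (e v) := ⟨T.le_refl _, h, fun u hu _ => hu⟩
    have := hi (meet_unique T (he.1 v w m hm) h1)
    rw [← this]; exact hm.2.1
  · obtain ⟨m, hm⟩ := exists_meet S v w
    exact ⟨m, hm.1, hm.2.1, (he.1 v w m hm).2.2 x h h'⟩

theorem exists_code (X : OTree) : ∃ (A : F) (φ : V (F.node A F.nil) ≃ X.α),
    SEmb vle vlx X.le X.lexLE φ ∧ SEmb X.le X.lexLE vle vlx φ.symm ∧ φ V.here = X.root := by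
  have := X.fin
  obtain ⟨B, φ, h1, h2⟩ := exists_forest _ X.α rfl X.le X.lexLE (otree_OF X)
  have hroot : ∀ v, vle (φ.symm X.root) v := fun v => by
    rw [h1, φ.apply_symm_apply]; exact X.root_le _
  cases B with
  | nil => cases φ.symm X.root
  | node A B =>
    have hh : φ.symm X.root = V.here := by
      have := hroot V.here
      rcases h : φ.symm X.root with _ | x | x
      · rfl
      · simp [h, vle] at this
      · simp [h, vle] at this
    cases B with
    | node c d =>
      have := hroot (V.right V.here)
      simp [hh, vle] at this
    | nil =>
      refine ⟨A, φ, ⟨φ.injective, fun v w h => (h2 v w).1 h, h1, fun x v w h h' => ?_⟩,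
        ⟨φ.symm.injective, fun v w h => ?_, fun v w => ?_, fun x v w h h' => ?_⟩, ?_⟩
      · exact ⟨φ.symm x, by rw [h1]; simpa using h, by rw [h1]; simpa using h', by
          simpa using X.le_refl x⟩
      · rw [h2]; simpa using h
      · rw [h1]; simp
      · exact ⟨φ x, by rw [h1] at h; simpa using h, by rw [h1] at h'; simpa using h', by
          simpa using (vOF _).le_refl x⟩
      · rw [← hh]; simp

theorem exists_root_emb {A B : F} (e : V (F.node A F.nil) → V (F.node B F.nil))
    (he : SEmb vle vlx vle vlx e) (h0 : e V.here = V.here) :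
    ∃ f : Emb A B, toFun (root f nil) = e := by
  obtain ⟨f, rfl⟩ := exists_emb e he
  cases f with
  | skip f => cases f
  | root f f' => cases f'; exact ⟨f, rfl⟩
  | deep f f' => simp [toFun] at h0

end Leeb

/-- **Leeb's Ramsey theorem for trees.** For every number of colors `c ≥ 1` and all ordered
trees `S, T` there is an ordered tree `U` such that for every coloring with `c` colors of the
copies of `S` in `U` there is an embedding `j : T → U` such that all copies of `S` in `U` of
the form `j(C)`, for `C` a copy of `S` in `T`, get the same color. -/
theorem leeb_ramsey_for_trees (c : ℕ) (hc : 0 < c) (S T : OTree) :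
    ∃ U : OTree, ∀ χ : Set U.α → Fin c,
      ∃ j : T.α → U.α, IsMorphism T U j ∧ Function.Injective j ∧
        ∃ color : Fin c, ∀ C : Set T.α, OTree.IsCopy S T C → χ (j '' C) = color := by
  obtain ⟨A, φ, hφ, hφ', hφ0⟩ := Leeb.exists_code S
  obtain ⟨B, ψ, hψ, hψ', hψ0⟩ := Leeb.exists_code T
  have : Nonempty (Fin c) := ⟨⟨0, hc⟩⟩
  obtain ⟨U, hU⟩ := Leeb.ram A (Fin c) B
  refine ⟨Leeb.toOTree U, fun χ => ?_⟩
  obtain ⟨j, k, hj⟩ := hU (fun e => χ (Set.range (Leeb.Emb.toFun (Leeb.Emb.root e Leeb.Emb.nil))))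
  have hJ := (Leeb.toFun_SEmb (Leeb.Emb.root j (Leeb.Emb.nil (G := Leeb.F.nil)))).comp hψ'
    (Leeb.vOF _).le_trans
  refine ⟨Leeb.Emb.toFun (Leeb.Emb.root j Leeb.Emb.nil) ∘ ψ.symm, ⟨?_, ?_, ?_⟩, hJ.inj, k, ?_⟩
  · intro v w m hm
    refine ⟨(hJ.le _ _).1 hm.1, (hJ.le _ _).1 hm.2.1, fun u hu hu' => ?_⟩
    obtain ⟨m', h1, h2, h3⟩ := hJ.meet u v w hu hu'
    exact (Leeb.vOF _).le_trans _ _ _ h3 ((hJ.le _ _).1 (hm.2.2 _ h1 h2))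
  · intro v w h
    exact Leeb.lexLE_toOTree U _ _ (hJ.lx _ _ h)
  · have : ψ.symm T.root = Leeb.V.here := by rw [← hψ0]; simp
    simp only [Function.comp, this]
    rfl
  · rintro C ⟨e, he, hi, rfl⟩
    have hE := hψ'.comp ((Leeb.SEmb_of_morphism he hi).comp hφ T.le_trans) (Leeb.vOF _).le_trans
    obtain ⟨f, hf⟩ := Leeb.exists_root_emb _ hE (by
      simp only [Function.comp, hφ0, he.2.2, ← hψ0, Equiv.symm_apply_apply])
    rw [← hj f]
    congr 1
    ext x
    have key : ∀ v, Leeb.Emb.toFun (Leeb.Emb.root (Leeb.Emb.comp j f)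
        (Leeb.Emb.nil (G := Leeb.F.nil))) v =
        Leeb.Emb.toFun (Leeb.Emb.root j Leeb.Emb.nil) (ψ.symm (e (φ v))) := by
      intro v
      have h1 := Leeb.Emb.toFun_comp (Leeb.Emb.root j (Leeb.Emb.nil (G := Leeb.F.nil)))
        (Leeb.Emb.root f (Leeb.Emb.nil (G := Leeb.F.nil))) v
      rw [hf] at h1
      simpa [Leeb.Emb.comp] using h1
    constructor
    · rintro ⟨_, ⟨s, rfl⟩, rfl⟩
      exact ⟨φ.symm s, by rw [key, Equiv.apply_symm_apply]; rfl⟩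
    · rintro ⟨v, rfl⟩
      exact ⟨e (φ v), ⟨_, rfl⟩, (key v).symm⟩
end

section
/- Let c be a positive integer. For all positive integers k and l there exists a positive integer m such that for every coloring with c colors of the set of all k-partitions of [m] there exists an l-partition 𝒬 of [m] such that all k-subpartitions of 𝒬 get the same color. -/
open Finset

/-- A partition `P` is a *subpartition* of a partition `Q` if each part of `P` is the union
of some parts of `Q`. -/
def Finpartition.IsSubpartitionOf {m : ℕ}
    (P Q : Finpartition (Finset.univ : Finset (Fin m))) : Prop :=
  ∀ p ∈ P.parts, ∃ S : Finset (Finset (Fin m)), S ⊆ Q.parts ∧ p = S.sup id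

/-- Parameter words of length `n` over the alphabet `A` with `k` parameters, where the parameters
occur in the order of their first occurrences. -/
inductive PW : Type → ℕ → ℕ → Type 1
  | nil {A : Type} : PW A 0 0
  | letter {A : Type} {n k : ℕ} (a : A) (w : PW A n k) : PW A (n + 1) k
  | new {A : Type} {n k : ℕ} (w : PW (Option A) n k) : PW A (n + 1) (k + 1)

namespace PW

/-- Extend a map of letters to a new letter. -/
def ext {A : Type} {X : Type} (f : A → X) (b : X) : Option A → X
  | none => b
  | some a => f a

/-- Substitution of parameter words, with a change of alphabet. -/
def subst : {A B : Type} → {n l k : ℕ} → PW A n l → (A → B) → PW B l k → PW B n k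
  | _, _, _, _, _, nil, _, nil => nil
  | _, _, _, _, _, letter a w, f, u => letter (f a) (subst w f u)
  | _, _, _, _, _, new w, f, letter b u => letter b (subst w (ext f b) u)
  | _, _, _, _, _, new w, f, new u => new (subst w (Option.map f) u)

/-- The identity word. -/
def one : (A : Type) → (l : ℕ) → PW A l l
  | _, 0 => nil
  | A, l + 1 => new (one (Option A) l)

/-- The prefix before the first parameter. -/
def pre : {A : Type} → {n k : ℕ} → PW A n k → List A
  | _, _, _, nil => []
  | _, _, _, letter a w => a :: pre w
  | _, _, _, new _ => []

/-- Partial application of a word to a list of letters. -/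
def papp : {A B : Type} → {n l : ℕ} → PW A n l → (A → B) → List B → List B
  | _, _, _, _, nil, _, _ => []
  | _, _, _, _, letter a w, f, t => f a :: papp w f t
  | _, _, _, _, new _, _, [] => []
  | _, _, _, _, new w, f, b :: t => b :: papp w (ext f b) t

/-- Append a new parameter. -/
def snoc : {A : Type} → {n l : ℕ} → PW A n l → PW A (n + 1) (l + 1)
  | _, _, _, nil => new nil
  | _, _, _, letter a w => letter a (snoc w)
  | _, _, _, new w => new (snoc w)

/-- Evaluate a word. -/
def eval {X : Type} : {A : Type} → {n k : ℕ} → PW A n k → (A → X) → (Fin k → X) → (Fin n → X)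
  | _, _, _, nil, _, _ => Fin.elim0
  | _, _, _, letter a w, h, g => Fin.cons (h a) (eval w h g)
  | _, _, _, new w, h, g => Fin.cons (g 0) (eval w (ext h (g 0)) (Fin.tail g))

theorem ext_map {A B X : Type} (f : A → B) (h : B → X) (b : X) :
    ext h b ∘ Option.map f = ext (h ∘ f) b := by
  funext x; cases x <;> rfl

theorem comp_ext {A X Y : Type} (f : A → X) (h : X → Y) (b : X) :
    h ∘ ext f b = ext (h ∘ f) (h b) := by
  funext x; cases x <;> rfl

theorem subst_assoc {A : Type} {n l : ℕ} (w : PW A n l) : ∀ {B C : Type} {m k : ℕ} (f : A → B)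
    (u : PW B l m) (g : B → C) (v : PW C m k),
    subst (subst w f u) g v = subst w (g ∘ f) (subst u g v) := by
  induction w with
  | nil => intro B C m k f u g v; cases u; cases v; rfl
  | letter a w ih => intro B C m k f u g v; simp [subst, ih]
  | new w ih =>
    intro B C m k f u g v
    cases u with
    | letter b u => simp [subst, ih, comp_ext]
    | new u =>
      cases v with
      | letter c v => simp [subst, ih, ext_map]
      | new v => simp [subst, ih]

theorem one_subst {B : Type} {l k : ℕ} (v : PW B l k) : ∀ {A : Type} (f : A → B),
    subst (one A l) f v = v := by
  induction v with
  | nil => intro A f; rfl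
  | letter a w ih => intro A f; simp [one, subst, ih]
  | new w ih => intro A f; simp [one, subst, ih]

theorem pre_subst {A : Type} {n l : ℕ} (w : PW A n l) : ∀ {B : Type} {k : ℕ} (f : A → B)
    (u : PW B l k), pre (subst w f u) = papp w f (pre u) := by
  induction w with
  | nil => intro B k f u; cases u; rfl
  | letter a w ih => intro B k f u; simp [subst, pre, papp, ih]
  | new w ih =>
    intro B k f u
    cases u with
    | letter b u => simp [subst, pre, papp, ih]
    | new u => simp [subst, pre, papp]

theorem papp_subst {A : Type} {n l : ℕ} (w : PW A n l) : ∀ {B C : Type} {k : ℕ} (f : A → B)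
    (u : PW B l k) (g : B → C) (t : List C),
    papp (subst w f u) g t = papp w (g ∘ f) (papp u g t) := by
  induction w with
  | nil => intro B C k f u g t; cases u; rfl
  | letter a w ih => intro B C k f u g t; simp [subst, papp, ih]
  | new w ih =>
    intro B C k f u g t
    cases u with
    | letter b u => simp [subst, papp, ih, comp_ext]
    | new u =>
      cases t with
      | nil => simp [subst, papp]
      | cons c t => simp [subst, papp, ih, ext_map]

theorem papp_snoc {A : Type} {n l : ℕ} (w : PW A n l) : ∀ {B : Type} (f : A → B)
    (t : List B), t.length ≤ l → papp (snoc w) f t = papp w f t := by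
  induction w with
  | nil =>
    intro B f t ht
    cases t with
    | nil => rfl
    | cons b t => simp at ht
  | letter a w ih => intro B f t ht; simp [snoc, papp, ih f t ht]
  | new w ih =>
    intro B f t ht
    cases t with
    | nil => rfl
    | cons b t =>
      simp only [List.length_cons] at ht
      simp [snoc, papp, ih _ t (by omega)]

theorem pre_length_lt {A : Type} {n k : ℕ} (w : PW A n k) : 0 < k → (pre w).length < n := by
  induction w with
  | nil => intro h; omega
  | letter a w ih => intro h; simpa [pre] using ih h
  | new w ih => intro h; simp [pre]

theorem exists_pre {A : Type} (t : List A) : ∃ u : PW A t.length 0, pre u = t := by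
  induction t with
  | nil => exact ⟨nil, rfl⟩
  | cons a t ih =>
    obtain ⟨u, hu⟩ := ih
    exact ⟨letter a u, by simp [pre, hu]⟩

theorem eval_subst {X : Type} {A : Type} {n l : ℕ} (w : PW A n l) : ∀ {B : Type} {k : ℕ}
    (f : A → B) (u : PW B l k) (h : B → X) (g : Fin k → X),
    eval (subst w f u) h g = eval w (h ∘ f) (eval u h g) := by
  induction w with
  | nil => intro B k f u h g; cases u; rfl
  | letter a w ih => intro B k f u h g; simp [subst, eval, ih]
  | new w ih =>
    intro B k f u h g
    cases u with
    | letter b u => simp [subst, eval, ih, comp_ext]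
    | new u => simp [subst, eval, ih, ext_map]

theorem eval_comp {X Y : Type} (p : X → Y) {A : Type} {n k : ℕ} (w : PW A n k) :
    ∀ (h : A → X) (g : Fin k → X), eval w (p ∘ h) (p ∘ g) = p ∘ eval w h g := by
  induction w with
  | nil => intro h g; funext x; exact x.elim0
  | letter a w ih =>
    intro h g; funext x
    refine Fin.cases ?_ (fun x => ?_) x
    · simp [eval]
    · simp [eval, ih]
  | new w ih =>
    intro h g; funext x
    refine Fin.cases ?_ (fun x => ?_) x
    · simp [eval]
    · have : Fin.tail (p ∘ g) = p ∘ Fin.tail g := rfl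
      simp [eval, this, ← comp_ext, ih]

theorem eval_surj {X : Type} {A : Type} {n k : ℕ} (w : PW A n k) :
    ∀ (h : A → X) (g : Fin k → X) (i : Fin k), ∃ x, eval w h g x = g i := by
  induction w with
  | nil => intro h g i; exact i.elim0
  | letter a w ih =>
    intro h g i
    obtain ⟨x, hx⟩ := ih h g i
    exact ⟨x.succ, by simp [eval, hx]⟩
  | new w ih =>
    intro h g i
    refine Fin.cases ?_ (fun i => ?_) i
    · exact ⟨0, by simp [eval]⟩
    · obtain ⟨x, hx⟩ := ih (ext h (g 0)) (Fin.tail g) i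
      exact ⟨x.succ, by simp [eval, hx, Fin.tail]⟩

theorem exists_eval {X : Type} (n : ℕ) : ∀ {A : Type} (h : A → X) (f : Fin n → X),
    ∃ (k : ℕ) (u : PW A n k) (g : Fin k → X), Function.Injective g ∧
      (∀ i a, g i ≠ h a) ∧ eval u h g = f := by
  induction n with
  | zero =>
    intro A h f
    refine ⟨0, nil, Fin.elim0, fun i => i.elim0, fun i => i.elim0, ?_⟩
    funext x; exact x.elim0
  | succ n ih =>
    intro A h f
    by_cases hf : ∃ a, h a = f 0
    · obtain ⟨a, ha⟩ := hf
      obtain ⟨k, u, g, hg, hd, he⟩ := ih h (Fin.tail f)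
      refine ⟨k, letter a u, g, hg, hd, ?_⟩
      simp [eval, he, ha]
    · push Not at hf
      obtain ⟨k, u, g, hg, hd, he⟩ := ih (ext h (f 0)) (Fin.tail f)
      refine ⟨k + 1, new u, Fin.cons (f 0) g, ?_, ?_, ?_⟩
      · rw [Fin.cons_injective_iff]
        refine ⟨?_, hg⟩
        rintro ⟨i, hi⟩
        exact hd i none hi
      · intro i a
        refine Fin.cases ?_ (fun i => ?_) i
        · simpa using (hf a).symm
        · simpa [ext] using hd i (some a)
      · simp [eval, he]

/-- Graham–Rothschild property. -/
def GR (A : Type) (k l : ℕ) : Prop :=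
  ∀ (κ : Type) [Finite κ] [Nonempty κ], ∃ n, ∀ χ : PW A n k → κ, ∃ W : PW A n l, ∃ c, ∀ u : PW A l k,
    χ (subst W id u) = c

theorem eval_zero_inj_aux {A : Type} {n k : ℕ} (w : PW A n k) : k = 0 →
    ∀ (g : Fin k → A) (w' : PW A n k), eval w id g = eval w' id g → w = w' := by
  induction w with
  | nil => intro _ g w' _; cases w'; rfl
  | letter a w ih =>
    intro hk g w' h
    cases w' with
    | letter b w' =>
      simp only [eval, Fin.cons_inj, id] at h
      rw [h.1, ih hk g w' h.2]
    | new w' => omega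
  | new w => intro hk; omega

theorem eval_zero_inj {A : Type} {n : ℕ} (w w' : PW A n 0)
    (h : eval w id Fin.elim0 = eval w' id Fin.elim0) : w = w' :=
  eval_zero_inj_aux w rfl _ w' h

theorem gr_zero (A : Type) [Finite A] (l : ℕ) : GR A 0 l := by
  intro κ _ _
  obtain ⟨n, hn⟩ := Combinatorics.Subspace.exists_mono_in_high_dimension_fin A κ (Fin l)
  refine ⟨n, fun χ => ?_⟩
  have hex : ∀ x : Fin n → A, ∃ w : PW A n 0, eval w id Fin.elim0 = x := by
    intro x
    obtain ⟨k, u, g, hg, hd, he⟩ := exists_eval n id x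
    cases k with
    | zero =>
      refine ⟨u, ?_⟩
      rw [← he]; congr 1; funext i; exact i.elim0
    | succ k => exact absurd rfl (hd 0 (g 0))
  choose F hF using hex
  obtain ⟨S, c, hS⟩ := hn (fun x => χ (F x))
  obtain ⟨k, W, g, hg, hd, he⟩ := exists_eval n (Sum.inl : A → A ⊕ Fin l) S.idxFun
  have hr : ∀ i, ∃ j, g i = Sum.inr j := by
    intro i
    rcases hgi : g i with a | j
    · exact absurd hgi (hd i a)
    · exact ⟨j, rfl⟩
  choose σ hσ using hr
  have hinj : Function.Injective σ := by
    intro i j hij; apply hg; rw [hσ, hσ, hij]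
  have hrange : ∀ (m j : ℕ) (B : Type) (w : PW B m j) (h : B → A ⊕ Fin l) (g : Fin j → A ⊕ Fin l) x,
      (∃ b, eval w h g x = h b) ∨ ∃ i, eval w h g x = g i := by
    intro m j B w
    induction w with
    | nil => intro h g x; exact x.elim0
    | letter a w ih =>
      intro h g x
      refine Fin.cases ?_ (fun x => ?_) x
      · exact Or.inl ⟨a, by simp [eval]⟩
      · simpa [eval] using ih h g x
    | new w ih =>
      intro h g x
      refine Fin.cases ?_ (fun x => ?_) x
      · exact Or.inr ⟨0, by simp [eval]⟩
      · rcases ih (ext h (g 0)) (Fin.tail g) x with ⟨b, hb⟩ | ⟨i, hi⟩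
        · cases b with
          | none => exact Or.inr ⟨0, by simp [eval, hb, ext]⟩
          | some b => exact Or.inl ⟨b, by simp [eval, hb, ext]⟩
        · exact Or.inr ⟨i.succ, by simp [eval, hi, Fin.tail]⟩
  have hsurj : Function.Surjective σ := by
    intro j
    obtain ⟨x, hx⟩ := S.proper j
    rw [← he] at hx
    rcases hrange _ _ _ W Sum.inl g x with ⟨b, hb⟩ | ⟨i, hi⟩
    · rw [hb] at hx; cases hx
    · rw [hi, hσ] at hx; exact ⟨i, Sum.inr.inj hx⟩
  have hk : k = l := by
    simpa using Fintype.card_of_bijective ⟨hinj, hsurj⟩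
  subst hk
  refine ⟨W, c, fun u => ?_⟩
  let e := Equiv.ofBijective σ ⟨hinj, hsurj⟩
  rw [← hS (eval u id Fin.elim0 ∘ e.symm)]
  congr 1
  apply eval_zero_inj
  rw [hF, eval_subst]
  have h1 := eval_comp (Sum.elim id (eval u id Fin.elim0 ∘ e.symm)) W Sum.inl g
  rw [he] at h1
  have h2 : Sum.elim id (eval u id Fin.elim0 ∘ e.symm) ∘ g = eval u id Fin.elim0 := by
    funext i
    have : e.symm (σ i) = i := e.symm_apply_apply i
    simp [hσ, this]
  rw [h2] at h1
  have h3 : Sum.elim id (eval u id Fin.elim0 ∘ e.symm) ∘ (Sum.inl : A → A ⊕ Fin k) = id ∘ id := by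
    funext a; rfl
  rw [h3] at h1
  rw [h1]
  funext i
  rw [Combinatorics.Subspace.apply_def]
  rfl

theorem step_one (A : Type) [Finite A] (k : ℕ) (hGR : ∀ l, GR (Option A) k l) (l : ℕ) :
    ∀ (κ : Type) [Finite κ] [Nonempty κ], ∃ n, ∀ χ : PW A n (k + 1) → κ, ∃ W : PW A n l, ∃ g : List A → κ,
      ∀ u : PW A l (k + 1), χ (subst W id u) = g (pre u) := by
  induction l with
  | zero =>
    intro κ _ _
    exact ⟨0, fun χ => ⟨nil, fun _ => Classical.arbitrary κ, fun u => nomatch u⟩⟩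
  | succ l ih =>
    intro κ _ _
    obtain ⟨n2, h2⟩ := ih (A → κ)
    obtain ⟨n1, h1⟩ := hGR n2 κ
    refine ⟨n1 + 1, fun χ => ?_⟩
    obtain ⟨V1, c1, hV1⟩ := h1 (fun v => χ (new v))
    obtain ⟨V2, g2, hV2⟩ := h2 (fun u b => χ (letter b (subst V1 (ext id b) u)))
    refine ⟨new (subst V1 id (subst V2 some (one _ _))),
      fun t => match t with
        | [] => c1
        | b :: t => g2 t b, fun u => ?_⟩
    cases u with
    | letter b u =>
      have := congrFun (hV2 u) b
      simp only [pre, subst, subst_assoc, one_subst]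
      exact this
    | new v =>
      simp only [pre, subst, subst_assoc, one_subst, Option.map_id]
      exact hV1 _

theorem step_two (A : Type) [Finite A] (κ : Type) [Finite κ] [Nonempty κ] (l : ℕ) :
    ∃ M, ∀ g : List A → κ, ∃ U : PW A M l, ∃ h : ℕ → κ, ∀ t : List A, t.length < l →
      g (papp U id t) = h t.length := by
  induction l with
  | zero => exact ⟨0, fun g => ⟨nil, fun _ => g [], fun t ht => by omega⟩⟩
  | succ l ih =>
    obtain ⟨n1, h1⟩ := ih
    obtain ⟨n2, h2⟩ := gr_zero A n1 κ
    refine ⟨n2 + 1, fun g => ?_⟩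
    obtain ⟨W, c, hW⟩ := h2 (fun w => g (pre w))
    obtain ⟨U, h, hU⟩ := h1 (fun t => g (papp W id t))
    refine ⟨snoc (subst W id U), fun j => if j = l then c else h j, fun t ht => ?_⟩
    rw [papp_snoc _ _ _ (by omega), papp_subst]
    beta_reduce
    split_ifs with hl
    · subst hl
      obtain ⟨u, hu⟩ := exists_pre t
      rw [← hW (subst U id u), pre_subst, pre_subst, hu]
      rfl
    · exact hU t (by omega)

theorem pigeon_aux {κ : Type} [DecidableEq κ] (c : κ) (L : ℕ) : ∀ (l : ℕ) (h : ℕ → κ)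
    (A : Type) (_ : Nonempty A), l ≤ Nat.count (fun j => h j = c) L →
    ∃ S : PW A L l, ∀ (B : Type) (f : A → B) (t : List B), t.length < l →
      h (papp S f t).length = c := by
  induction L with
  | zero =>
    intro l h A _ hl
    have : l = 0 := by simpa using hl
    subst this
    exact ⟨nil, fun B f t ht => by omega⟩
  | succ L ih =>
    intro l h A hA hl
    rw [Nat.count_succ'] at hl
    cases l with
    | zero =>
      obtain ⟨S, -⟩ := ih 0 h A hA (Nat.zero_le _)
      exact ⟨letter hA.some S, fun B f t ht => by omega⟩
    | succ l =>
      by_cases h0 : h 0 = c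
      · rw [if_pos h0] at hl
        obtain ⟨S, hS⟩ := ih l (fun j => h (j + 1)) (Option A) inferInstance (by omega)
        refine ⟨new S, fun B f t ht => ?_⟩
        cases t with
        | nil => simpa [papp] using h0
        | cons b t => simpa [papp] using hS B (ext f b) t (by simpa using ht)
      · rw [if_neg h0] at hl
        obtain ⟨S, hS⟩ := ih (l + 1) (fun j => h (j + 1)) A hA (by omega)
        refine ⟨letter hA.some S, fun B f t ht => ?_⟩
        simpa [papp] using hS B f t ht

theorem pigeon (A : Type) (κ : Type) [Finite κ] [Nonempty κ] (l : ℕ) :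
    ∃ L, ∀ h : ℕ → κ, ∃ S : PW A L l, ∃ c, ∀ t : List A, t.length < l →
      h (papp S id t).length = c := by
  classical
  rcases isEmpty_or_nonempty A with hA | hA
  · refine ⟨l, fun h => ⟨one A l, h (papp (one A l) id []).length, fun t _ => ?_⟩⟩
    cases t with
    | nil => rfl
    | cons a t => exact (hA.false a).elim
  · have := Fintype.ofFinite κ
    refine ⟨Fintype.card κ * l, fun h => ?_⟩
    have : Nonempty κ := ⟨h 0⟩
    obtain ⟨c, -, hc⟩ := Finset.exists_le_card_fiber_of_mul_le_card_of_maps_to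
      (s := Finset.range (Fintype.card κ * l)) (t := Finset.univ) (f := h) (n := l)
      (fun _ _ => Finset.mem_univ _) Finset.univ_nonempty (by simp)
    rw [← Nat.count_eq_card_filter_range] at hc
    obtain ⟨S, hS⟩ := pigeon_aux c _ l h A hA hc
    exact ⟨S, c, fun t ht => hS A id t ht⟩

theorem gr (k : ℕ) : ∀ (A : Type) [Finite A] (l : ℕ), GR A k l := by
  induction k with
  | zero => intro A _ l; exact gr_zero A l
  | succ k ih =>
    intro A _ l κ _ _
    obtain ⟨L, hL⟩ := pigeon A κ l
    obtain ⟨M, hM⟩ := step_two A κ L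
    obtain ⟨n, hn⟩ := step_one A k (fun l => ih (Option A) l) M κ
    refine ⟨n, fun χ => ?_⟩
    obtain ⟨W, g, hW⟩ := hn χ
    obtain ⟨U, h, hU⟩ := hM g
    obtain ⟨S, c, hS⟩ := hL h
    refine ⟨subst W id (subst U id S), c, fun u => ?_⟩
    rw [subst_assoc, subst_assoc]
    simp only [Function.id_comp]
    rw [hW, pre_subst, hU _ (pre_length_lt _ (Nat.succ_pos _)), pre_subst]
    exact hS _ (pre_length_lt _ (Nat.succ_pos _))

end PW

open Classical in
/-- The partition of `Fin m` into the fibers of a function. -/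
noncomputable def fiberPart {m k : ℕ} (f : Fin m → Fin k) :
    Finpartition (Finset.univ : Finset (Fin m)) :=
  Finpartition.ofSetoid (Setoid.ker f)

theorem mem_part_fiberPart {m k : ℕ} (f : Fin m → Fin k) (x y : Fin m) :
    y ∈ (fiberPart f).part x ↔ f x = f y := by
  classical
  have := Finpartition.mem_part_ofSetoid_iff_rel (s := Setoid.ker f) (a := x) (b := y)
  rw [Setoid.ker_def] at this
  rw [← this]
  unfold fiberPart
  convert Iff.rfl

theorem mem_parts_iff_part {m : ℕ} (P : Finpartition (Finset.univ : Finset (Fin m)))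
    (s : Finset (Fin m)) : s ∈ P.parts ↔ ∃ x, P.part x = s := by
  constructor
  · intro hs
    obtain ⟨x, hx⟩ := P.nonempty_of_mem_parts hs
    exact ⟨x, P.part_eq_of_mem hs hx⟩
  · rintro ⟨x, rfl⟩
    exact P.part_mem.2 (Finset.mem_univ x)

theorem eq_fiberPart {m k : ℕ} (P : Finpartition (Finset.univ : Finset (Fin m)))
    (f : Fin m → Fin k) (h : ∀ x y, y ∈ P.part x ↔ f x = f y) : P = fiberPart f := by
  have h' : ∀ x, P.part x = (fiberPart f).part x := by
    intro x; ext y; rw [h, mem_part_fiberPart]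
  apply Finpartition.ext
  ext s
  simp only [mem_parts_iff_part, h']

theorem card_fiberPart {m k : ℕ} (f : Fin m → Fin k) (hf : Function.Surjective f) :
    (fiberPart f).parts.card = k := by
  choose g hg using hf
  have : (fiberPart f).parts = Finset.univ.image (fun i => (fiberPart f).part (g i)) := by
    ext s
    simp only [mem_parts_iff_part, Finset.mem_image, Finset.mem_univ, true_and]
    constructor
    · rintro ⟨x, rfl⟩
      refine ⟨f x, ?_⟩
      ext y
      rw [mem_part_fiberPart, mem_part_fiberPart, hg]
    · rintro ⟨i, hi⟩; exact ⟨g i, hi⟩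
  rw [this, Finset.card_image_of_injective, Finset.card_univ, Fintype.card_fin]
  intro i j hij
  have h1 : g j ∈ (fiberPart f).part (g j) := by rw [mem_part_fiberPart]
  beta_reduce at hij
  rw [← hij, mem_part_fiberPart, hg, hg] at h1
  exact h1

/-- **The Graham–Rothschild dual Ramsey theorem.** For every number of colors `c ≥ 1` and all
positive integers `k, l` there is a positive integer `m` such that for every coloring with `c`
colors of the `k`-partitions of `[m]` there is an `l`-partition `Q` of `[m]` all of whose
`k`-subpartitions get the same color. -/
theorem graham_rothschild_dual_ramsey (c k l : ℕ) (hc : 0 < c) (hk : 0 < k) (hl : 0 < l) :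
    ∃ m : ℕ, 0 < m ∧
      ∀ χ : Finpartition (Finset.univ : Finset (Fin m)) → Fin c,
        ∃ Q : Finpartition (Finset.univ : Finset (Fin m)), Q.parts.card = l ∧
          ∃ color : Fin c,
            ∀ P : Finpartition (Finset.univ : Finset (Fin m)),
              P.parts.card = k → P.IsSubpartitionOf Q → χ P = color := by
  have : Nonempty (Fin c) := ⟨⟨0, hc⟩⟩
  obtain ⟨m, hm⟩ := PW.gr k Empty l (Fin c)
  refine ⟨m, ?_, fun χ => ?_⟩
  · obtain ⟨W, -⟩ := hm (fun _ => Classical.arbitrary _)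
    have := PW.pre_length_lt W hl
    omega
  obtain ⟨W, col, hW⟩ := hm (fun w => χ (fiberPart (w.eval Empty.elim id)))
  have hqs : Function.Surjective (W.eval Empty.elim (id : Fin l → Fin l)) :=
    fun i => PW.eval_surj W Empty.elim id i
  set q := W.eval Empty.elim (id : Fin l → Fin l) with hq
  refine ⟨fiberPart q, card_fiberPart q hqs, col, fun P hP hsub => ?_⟩
  let e : {x // x ∈ P.parts} ≃ Fin k := Fintype.equivFinOfCardEq (by simpa using hP)
  let f : Fin m → Fin k := fun x => e ⟨P.part x, P.part_mem.2 (Finset.mem_univ x)⟩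
  have hfe : ∀ x y, f x = f y ↔ P.part x = P.part y := by
    intro x y
    simp [f]
  have hfs : Function.Surjective f := by
    intro i
    obtain ⟨x, hx⟩ := (mem_parts_iff_part P _).1 (e.symm i).2
    refine ⟨x, ?_⟩
    simp [f, hx]
  have hPf : ∀ x y, y ∈ P.part x ↔ f x = f y := by
    intro x y
    rw [hfe]
    constructor
    · intro h
      exact (P.part_eq_of_mem (P.part_mem.2 (Finset.mem_univ x)) h).symm
    · intro h
      rw [h]
      exact P.mem_part (Finset.mem_univ y)
  have hfac : ∀ x y, q x = q y → f x = f y := by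
    intro x y hxy
    rw [← hPf]
    obtain ⟨S, hS, hpS⟩ := hsub (P.part x) (P.part_mem.2 (Finset.mem_univ x))
    have hx : x ∈ P.part x := P.mem_part (Finset.mem_univ x)
    rw [hpS, Finset.mem_sup] at hx ⊢
    obtain ⟨s, hs, hxs⟩ := hx
    refine ⟨s, hs, ?_⟩
    have := (fiberPart q).part_eq_of_mem (hS hs) hxs
    simp only [id]
    rw [← this, mem_part_fiberPart]
    exact hxy
  choose r hr using hqs
  let g : Fin l → Fin k := fun i => f (r i)
  have hgq : ∀ x, f x = g (q x) := fun x => hfac _ _ (hr (q x)).symm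
  obtain ⟨k', u, g', hg', -, hu⟩ := PW.exists_eval l (Empty.elim : Empty → Fin k) g
  have hfu : f = g' ∘ (W.subst id u).eval Empty.elim id := by
    rw [← PW.eval_comp, PW.eval_subst]
    have h1 : g' ∘ (Empty.elim : Empty → Fin k') = Empty.elim := funext fun x => x.elim
    have h2 : (Empty.elim : Empty → Fin k) ∘ id = g ∘ Empty.elim := funext fun x => x.elim
    rw [h1, Function.comp_id g', Function.comp_id Empty.elim, hu, ← Function.comp_id (Empty.elim : Empty → Fin k), h2]
    have h3 := PW.eval_comp g W Empty.elim id
    rw [Function.comp_id] at h3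
    rw [h3]
    funext x
    exact hgq x
  have hg's : Function.Surjective g' := by
    intro i
    obtain ⟨x, hx⟩ := hfs i
    rw [hfu] at hx
    exact ⟨_, hx⟩
  have hkk : k' = k := by
    simpa using Fintype.card_of_bijective ⟨hg', hg's⟩
  subst hkk
  rw [← hW u]
  congr 1
  apply eq_fiberPart
  intro x y
  rw [hPf, hfu]
  exact hg'.eq_iff
end
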